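/- There exists ε₀ > 0 such that for every ε ∈ (0,ε₀) and every global C^∞ solution u of the Cauchy problem, the following holds: for each (σ,ω) ∈ ℝ×S¹ the integral ∫_{t_{0,σ}}^∞ ρ(τ;σ,ω) dτ converges, the limits V_j⁺(σ,ω) = lim_{t→+∞} V_j(t;σ,ω) exist (j = 1,2), and, with m(σ,ω) defined as stated: if m(σ,ω) > 0 then V₁⁺(σ,ω) ≠ 0 and V₂⁺(σ,ω) = 0; if m(σ,ω) < 0 then V₁⁺(σ,ω) = 0 and V₂⁺(σ,ω) ≠ 0; and if m(σ,ω) = 0 then V₁⁺(σ,ω) = V₂⁺(σ,ω) = 0. -/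

import Mathlib

/-!
The proof combines small-data global decay for the dissipative cubic system with an asymptotic analysis of
the profiles `V_j` along outgoing rays.

*Set-up.* Time is shifted so that the data sit at `t = B`, supported in `r ≤ B - 1`. The nonlinearity
`-(∂ₜu_b)² ∂ₜu_a` is dissipative, so the energy weighted by a smooth weight supported in a mollified backward
light cone is nonincreasing, and the solution vanishes for `r > t - 1` (`Sol.finite_speed`). On a graph
`t = Φ(τ, x)` lying below the hyperboloids all slice integrals are then over bounded sets, and one energy
identity (`hasDerivAt_energy`) serves for every foliation.

*From the plane to a hyperboloid.* All derivatives at `t = B` are `O(ε)` uniformly over solutions (`jets_unif`).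
The graphs of `Φ = B + sin² τ (√(B² + r²) - B)` deform the plane `t = B` into the hyperboloid
`t² - r² = B²`. A Sobolev inequality and a superlinear Gronwall argument (`small_gronwall`) keep the energies
of size `O(ε²)` along this bounded deformation (`phase1`, `phase1L`), for `ε` below a threshold that does not depend on
the solution.

*Hyperboloids.* On the hyperboloids `t² - r² = B² + τ²` the energies of words of length at most three in the
boosts are used. Under the bootstrap assumption `t |∂ₜu|² ≤ A²`, the trilinear Gagliardo–Nirenberg
estimate `GN.tri` bounds the commuted nonlinearity and yields `E' ≤ τ / (B² + τ²) · (C A² + 1/4) E`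
(`hyp_ineq`). Hence `E` grows at most like the square root of hyperbolic time (`hyp_growth`), and
Klainerman–Sobolev inequalities (`Hyp.psi_sup`, `Hyp.word_sup`) give pointwise bounds.

*Improved decay.* Along a ray `r = t - q` the profile satisfies `V_a' = -½ (∂ₜu_b)² V_a + O(ε t^{-5/4})`
(`rV_deriv`, `ray_small`). The damping has the good sign, so `V_a = O(ε)` with a constant independent of `A`
(`damped_bound`, `decay_improve`). This improves the bootstrap assumption, and continuous induction makes it
global (`global_decay`).

*Asymptotics.* On each ray `V_a' = -(1/2t) V_b² V_a + K_a` with `K_a = O(t^{-5/4})` (`ray_final`). Then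
`(V₁² - V₂²)' = 2ρ` is integrable, so `V₁² - V₂² → m`. The product `P = V₁V₂` satisfies
`(P²)' ≤ -(2/t)|P|³ + O(t^{-5/4})`, because `V₁² + V₂² ≥ 2|P|`, and the divergence of `∫ dt/t` forces `P → 0`
(`prod_tendsto`). Since `(V₁² + V₂²)² = (V₁² - V₂²)² + 4P²`, both `V_j²`, and by continuity both `V_j`, converge
(`ode_trichotomy`). The limits satisfy `v₁² - v₂² = m` and `v₁v₂ = 0`, which is the trichotomy. On rays outside
the light cone everything vanishes (`rV_zero`).
-/


open Real MeasureTheory Filter Topology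

noncomputable section

/-- Partial derivative in `t`. -/
def pt (u : ℝ → ℝ → ℝ → ℝ) : ℝ → ℝ → ℝ → ℝ :=
  fun t x1 x2 => deriv (fun s => u s x1 x2) t

/-- Partial derivative in `x₁`. -/
def p1 (u : ℝ → ℝ → ℝ → ℝ) : ℝ → ℝ → ℝ → ℝ :=
  fun t x1 x2 => deriv (fun y => u t y x2) x1

/-- Partial derivative in `x₂`. -/
def p2 (u : ℝ → ℝ → ℝ → ℝ) : ℝ → ℝ → ℝ → ℝ :=
  fun t x1 x2 => deriv (fun y => u t x1 y) x2

/-- The d'Alembertian `□ = ∂ₜ² − ∂₁² − ∂₂²`. -/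
def dAlembert (u : ℝ → ℝ → ℝ → ℝ) : ℝ → ℝ → ℝ → ℝ :=
  fun t x1 x2 => pt (pt u) t x1 x2 - p1 (p1 u) t x1 x2 - p2 (p2 u) t x1 x2

/-- `u : ℝ×ℝ² → ℝ` (curried) is C^∞. -/
def Smooth3 (u : ℝ → ℝ → ℝ → ℝ) : Prop :=
  ContDiff ℝ (⊤ : ℕ∞) (fun p : ℝ × ℝ × ℝ => u p.1 p.2.1 p.2.2)

/-- Compactly supported C^∞ function on ℝ². -/
def SmoothCompact2 (f : ℝ → ℝ → ℝ) : Prop :=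
  ContDiff ℝ (⊤ : ℕ∞) (fun p : ℝ × ℝ => f p.1 p.2) ∧
    HasCompactSupport (fun p : ℝ × ℝ => f p.1 p.2)

/-- Global C^∞ solution of the Cauchy problem
`□u₁ = −(∂ₜu₂)²∂ₜu₁`, `□u₂ = −(∂ₜu₁)²∂ₜu₂` with data `(εf_j, εg_j)`. -/
structure IsSolution (ε : ℝ) (f1 f2 g1 g2 : ℝ → ℝ → ℝ)
    (u1 u2 : ℝ → ℝ → ℝ → ℝ) : Prop where
  smooth1 : Smooth3 u1
  smooth2 : Smooth3 u2
  pde1 : ∀ t x1 x2 : ℝ, 0 < t →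
    dAlembert u1 t x1 x2 = -(pt u2 t x1 x2) ^ 2 * pt u1 t x1 x2
  pde2 : ∀ t x1 x2 : ℝ, 0 < t →
    dAlembert u2 t x1 x2 = -(pt u1 t x1 x2) ^ 2 * pt u2 t x1 x2
  init1 : ∀ x1 x2 : ℝ, u1 0 x1 x2 = ε * f1 x1 x2
  init2 : ∀ x1 x2 : ℝ, u2 0 x1 x2 = ε * f2 x1 x2
  initd1 : ∀ x1 x2 : ℝ, pt u1 0 x1 x2 = ε * g1 x1 x2
  initd2 : ∀ x1 x2 : ℝ, pt u2 0 x1 x2 = ε * g2 x1 x2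

/-- `‖u(t)‖_E²  = ½∫ ((∂ₜu)² + (∂₁u)² + (∂₂u)²) dx`. -/
def energySq (u : ℝ → ℝ → ℝ → ℝ) (t : ℝ) : ℝ :=
  (1 / 2) * ∫ x : ℝ × ℝ,
    ((pt u t x.1 x.2) ^ 2 + (p1 u t x.1 x.2) ^ 2 + (p2 u t x.1 x.2) ^ 2)

/-- The energy norm `‖u(t)‖_E`. -/
def energyNorm (u : ℝ → ℝ → ℝ → ℝ) (t : ℝ) : ℝ :=
  Real.sqrt (energySq u t)

/-- `|x|` in coordinates. -/
def radius (x1 x2 : ℝ) : ℝ := Real.sqrt (x1 ^ 2 + x2 ^ 2)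

/-- The Japanese bracket `⟨z⟩ = (1+z²)^{1/2}`. -/
def jb (z : ℝ) : ℝ := Real.sqrt (1 + z ^ 2)

/-- `U(t,x) = D(|x|^{1/2}u(t,x))` where `D = ½(∂_r − ∂ₜ)`. -/
def Uop (u : ℝ → ℝ → ℝ → ℝ) : ℝ → ℝ → ℝ → ℝ :=
  fun t x1 x2 =>
    (1 / 2) * ((x1 / radius x1 x2) *
        p1 (fun s y1 y2 => radius y1 y2 ^ ((1 : ℝ) / 2) * u s y1 y2) t x1 x2
      + (x2 / radius x1 x2) *
        p2 (fun s y1 y2 => radius y1 y2 ^ ((1 : ℝ) / 2) * u s y1 y2) t x1 x2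
      - pt (fun s y1 y2 => radius y1 y2 ^ ((1 : ℝ) / 2) * u s y1 y2) t x1 x2)

/-- `V(t;σ,ω) = U(t,(t+σ)ω)`. -/
def Vop (u : ℝ → ℝ → ℝ → ℝ) (t σ ω1 ω2 : ℝ) : ℝ :=
  Uop u t ((t + σ) * ω1) ((t + σ) * ω2)

/-- The rotation vector field `Ω = x₁∂₂ − x₂∂₁`. -/
def rot (u : ℝ → ℝ → ℝ → ℝ) : ℝ → ℝ → ℝ → ℝ :=
  fun t x1 x2 => x1 * p2 u t x1 x2 - x2 * p1 u t x1 x2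

/-- `H` for component `a` (the other component being `b`):
`H_a = ½(|x|^{1/2}(∂ₜu_b)²(∂ₜu_a) + t⁻¹U_b²U_a) − (8|x|^{3/2})⁻¹(4Ω²+1)u_a`. -/
def Hfun (ua ub : ℝ → ℝ → ℝ → ℝ) (t x1 x2 : ℝ) : ℝ :=
  (1 / 2) * (radius x1 x2 ^ ((1 : ℝ) / 2) * (pt ub t x1 x2) ^ 2 * pt ua t x1 x2
      + (1 / t) * (Uop ub t x1 x2) ^ 2 * Uop ua t x1 x2)
    - (1 / (8 * radius x1 x2 ^ ((3 : ℝ) / 2))) *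
        (4 * rot (rot ua) t x1 x2 + ua t x1 x2)

/-- `K_a(t;σ,ω) = H_a(t,(t+σ)ω)`. -/
def Kfun (ua ub : ℝ → ℝ → ℝ → ℝ) (t σ ω1 ω2 : ℝ) : ℝ :=
  Hfun ua ub t ((t + σ) * ω1) ((t + σ) * ω2)

/-- `ρ = V₁K₁ − V₂K₂`. -/
def rhoFun (u1 u2 : ℝ → ℝ → ℝ → ℝ) (t σ ω1 ω2 : ℝ) : ℝ :=
  Vop u1 t σ ω1 ω2 * Kfun u1 u2 t σ ω1 ω2 -
    Vop u2 t σ ω1 ω2 * Kfun u2 u1 t σ ω1 ω2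

/-- The Radon transform: line integral of `φ` over `{y : y·ω = s}`. -/
def Rline (φ : ℝ → ℝ → ℝ) (s ω1 ω2 : ℝ) : ℝ :=
  ∫ τ : ℝ, φ (s * ω1 - τ * ω2) (s * ω2 + τ * ω1)

/-- `R₂[φ](σ,ω) = (2√2π)⁻¹ ∫_σ^∞ R[φ](s,ω)(s−σ)^{−1/2} ds`. -/
def R2 (φ : ℝ → ℝ → ℝ) (σ ω1 ω2 : ℝ) : ℝ :=
  (1 / (2 * Real.sqrt 2 * Real.pi)) *
    ∫ s in Set.Ioi σ, Rline φ s ω1 ω2 / Real.sqrt (s - σ)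

/-- The Friedlander radiation field `F₀[φ,ψ] = −∂_σR₂[φ] + R₂[ψ]`. -/
def F0 (φ ψ : ℝ → ℝ → ℝ) (σ ω1 ω2 : ℝ) : ℝ :=
  -deriv (fun σ' => R2 φ σ' ω1 ω2) σ + R2 ψ σ ω1 ω2

/-- `∂_σF₀[φ,ψ]`. -/
def dF0 (φ ψ : ℝ → ℝ → ℝ) (σ ω1 ω2 : ℝ) : ℝ :=
  deriv (fun σ' => F0 φ ψ σ' ω1 ω2) σ

/-- The vector fields `Γ = (S, L₁, L₂, Ω, ∂ₜ, ∂₁, ∂₂)`. -/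
def Gam (i : Fin 7) (u : ℝ → ℝ → ℝ → ℝ) : ℝ → ℝ → ℝ → ℝ :=
  match i with
  | 0 => fun t x1 x2 => t * pt u t x1 x2 + x1 * p1 u t x1 x2 + x2 * p2 u t x1 x2
  | 1 => fun t x1 x2 => t * p1 u t x1 x2 + x1 * pt u t x1 x2
  | 2 => fun t x1 x2 => t * p2 u t x1 x2 + x2 * pt u t x1 x2
  | 3 => rot u
  | 4 => pt u
  | 5 => p1 u
  | 6 => p2 u

/-- `Γ^α = Γ₀^{α₀}⋯Γ₆^{α₆}`. -/
def GamMulti (α : Fin 7 → ℕ) (u : ℝ → ℝ → ℝ → ℝ) : ℝ → ℝ → ℝ → ℝ :=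
  (Gam 0)^[α 0] ((Gam 1)^[α 1] ((Gam 2)^[α 2] ((Gam 3)^[α 3]
    ((Gam 4)^[α 4] ((Gam 5)^[α 5] ((Gam 6)^[α 6] u))))))

/-- Pointwise norm `|φ(t,x)|_s = Σ_{|α|≤s}|Γ^αφ(t,x)|`, for a (finite) family of
components, `|Γ^αφ|` being the Euclidean norm of the vector of components. -/
def ptwiseNorm (s : ℕ) (us : List (ℝ → ℝ → ℝ → ℝ)) (t x1 x2 : ℝ) : ℝ :=
  ∑ α : Fin 7 → Fin (s + 1),
    if (∑ i, (α i : ℕ)) ≤ s then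
      Real.sqrt ((us.map fun u => (GamMulti (fun i => (α i : ℕ)) u t x1 x2) ^ 2).sum)
    else 0

/-- `‖φ(t)‖_s = Σ_{|α|≤s}‖Γ^αφ(t,·)‖_{L²(ℝ²)}`. -/
def sobNorm (s : ℕ) (us : List (ℝ → ℝ → ℝ → ℝ)) (t : ℝ) : ℝ :=
  ∑ α : Fin 7 → Fin (s + 1),
    if (∑ i, (α i : ℕ)) ≤ s then
      Real.sqrt (∫ x : ℝ × ℝ,
        (us.map fun u => (GamMulti (fun i => (α i : ℕ)) u t x.1 x.2) ^ 2).sum)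
    else 0

/-- The components of `∂u = (∂ₜu₁,∂₁u₁,∂₂u₁,∂ₜu₂,∂₁u₂,∂₂u₂)`. -/
def dList (u1 u2 : ℝ → ℝ → ℝ → ℝ) : List (ℝ → ℝ → ℝ → ℝ) :=
  [pt u1, p1 u1, p2 u1, pt u2, p1 u2, p2 u2]

/-- Smooth solution of the free wave equation with data `(φ0,φ1)`. -/
def IsFreeSolution (φ0 φ1 : ℝ → ℝ → ℝ) (φ : ℝ → ℝ → ℝ → ℝ) : Prop :=
  Smooth3 φ ∧ (∀ t x1 x2 : ℝ, 0 < t → dAlembert φ t x1 x2 = 0) ∧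
    (∀ x1 x2 : ℝ, φ 0 x1 x2 = φ0 x1 x2) ∧
    (∀ x1 x2 : ℝ, pt φ 0 x1 x2 = φ1 x1 x2)

/-- Mixed space-time partial `∂^α = ∂ₜ^{α₀}∂₁^{α₁}∂₂^{α₂}`. -/
def dmix (α : Fin 3 → ℕ) (u : ℝ → ℝ → ℝ → ℝ) : ℝ → ℝ → ℝ → ℝ :=
  pt^[α 0] (p1^[α 1] (p2^[α 2] u))

open scoped ContDiff
set_option linter.unusedSimpArgs false
set_option maxSynthPendingDepth 3

/-! ### The differential algebra of smooth functions -/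

/-- The algebra of smooth real functions on `ℝ × ℝ × ℝ`. -/
def smoothAlg : Subalgebra ℝ (ℝ × ℝ × ℝ → ℝ) where
  carrier := {f | ContDiff ℝ ∞ f}
  mul_mem' := by
    intro a b ha hb
    exact ContDiff.mul (show ContDiff ℝ ∞ a from ha) (show ContDiff ℝ ∞ b from hb)
  add_mem' := by
    intro a b ha hb
    exact ContDiff.add (show ContDiff ℝ ∞ a from ha) (show ContDiff ℝ ∞ b from hb)
  algebraMap_mem' := by
    intro c
    show ContDiff ℝ ∞ (fun _ => c)
    exact contDiff_const

/-- Smooth functions of `(t, x₁, x₂)` on all of space-time. Being total, they form an algebra on which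
derivations act without side conditions. -/
abbrev SF := ↥smoothAlg

/-- The coordinate directions of `ℝ × ℝ × ℝ`. -/
def bvec : Fin 3 → ℝ × ℝ × ℝ := ![(1, 0, 0), (0, 1, 0), (0, 0, 1)]

namespace SF

lemma smooth (f : SF) : ContDiff ℝ ∞ f.1 := f.2
lemma cont (f : SF) : Continuous f.1 := f.smooth.continuous
lemma diff (f : SF) : Differentiable ℝ f.1 := f.smooth.differentiable (by simp)

@[simp] lemma mul_ev (f g : SF) (p) : (f * g).1 p = f.1 p * g.1 p := rfl
@[simp] lemma add_ev (f g : SF) (p) : (f + g).1 p = f.1 p + g.1 p := rfl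
@[simp] lemma sub_ev (f g : SF) (p) : (f - g).1 p = f.1 p - g.1 p := rfl
@[simp] lemma neg_ev (f : SF) (p) : (-f).1 p = -f.1 p := rfl
@[simp] lemma smul_ev (c : ℝ) (f : SF) (p) : (c • f).1 p = c * f.1 p := rfl
@[simp] lemma pow_ev (f : SF) (n : ℕ) (p) : (f ^ n).1 p = f.1 p ^ n := rfl
@[simp] lemma zero_ev (p) : (0 : SF).1 p = 0 := rfl
@[simp] lemma one_ev (p) : (1 : SF).1 p = 1 := rfl

@[ext] lemma ext' {f g : SF} (h : ∀ p, f.1 p = g.1 p) : f = g := Subtype.ext (funext h)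

end SF

/-- The coordinate derivations `∂₀, ∂₁, ∂₂`. -/
def pd (i : Fin 3) : Derivation ℝ SF SF where
  toFun f := ⟨fun p => fderiv ℝ f.1 p (bvec i),
    (f.smooth.fderiv_right (m := ∞) (by simp)).clm_apply contDiff_const⟩
  map_add' f g := by
    ext p
    simp only [SF.add_ev]
    have : (f + g).1 = fun p => f.1 p + g.1 p := rfl
    rw [this, fderiv_fun_add (f.diff p) (g.diff p)]; rfl
  map_smul' c f := by
    ext p
    simp only [SF.smul_ev, RingHom.id_apply]
    have : (c • f).1 = fun p => c * f.1 p := rfl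
    rw [this, fderiv_const_mul (f.diff p)]; rfl
  map_one_eq_zero' := by
    ext p
    have : (1 : SF).1 = fun p => (1:ℝ) := rfl
    simp [this]
  leibniz' f g := by
    ext p
    have : (f * g).1 = fun p => f.1 p * g.1 p := rfl
    simp only [smul_eq_mul, SF.add_ev, SF.mul_ev]
    show fderiv ℝ (f*g).1 p _ = _
    rw [this, fderiv_fun_mul (f.diff p) (g.diff p)]; simp

lemma pd_ev (i : Fin 3) (f : SF) (p) : (pd i f).1 p = fderiv ℝ f.1 p (bvec i) := rfl

lemma pd_comm (i j : Fin 3) (f : SF) : pd i (pd j f) = pd j (pd i f) := by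
  ext p
  have h2 : ContDiffAt ℝ 2 f.1 p := (contDiff_infty.1 f.smooth 2).contDiffAt
  have hs := h2.isSymmSndFDerivAt (by simp)
  have key : ∀ a b : Fin 3, (pd a (pd b f)).1 p = fderiv ℝ (fderiv ℝ f.1) p (bvec a) (bvec b) := by
    intro a b
    rw [pd_ev]
    have : (pd b f).1 = fun q => fderiv ℝ f.1 q (bvec b) := rfl
    rw [this]
    have hd : DifferentiableAt ℝ (fderiv ℝ f.1) p :=
      ((f.smooth.fderiv_right (m := ∞) (by simp)).differentiable (by simp)) p
    rw [fderiv_clm_apply hd (differentiableAt_const _)]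
    simp
  rw [key, key]
  exact hs _ _

/-- The time coordinate. -/
def cT : SF := ⟨fun p => p.1, by
  show ContDiff ℝ ∞ _
  exact contDiff_fst⟩
/-- The two spatial coordinates. -/
def cX (i : Fin 2) : SF := ⟨fun p => if i = 0 then p.2.1 else p.2.2, by
  show ContDiff ℝ ∞ _
  split_ifs
  · exact contDiff_fst.comp contDiff_snd
  · exact contDiff_snd.comp contDiff_snd⟩

@[simp] lemma cT_ev (p) : cT.1 p = p.1 := rfl
@[simp] lemma cX0_ev (p) : (cX 0).1 p = p.2.1 := rfl
@[simp] lemma cX1_ev (p) : (cX 1).1 p = p.2.2 := rfl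

lemma pd_of_hasDeriv {f : SF} {i p} {d : ℝ} (h : HasDerivAt (fun h : ℝ => f.1 (p + h • bvec i)) d 0) :
    (pd i f).1 p = d := by
  have h1 : HasFDerivAt f.1 (fderiv ℝ f.1 p) (p + (0:ℝ) • bvec i) := by
    simpa using (f.diff p).hasFDerivAt
  have h2 : HasDerivAt (fun h : ℝ => p + h • bvec i) (bvec i) 0 := by
    simpa using ((hasDerivAt_id (0:ℝ)).smul_const (bvec i)).const_add p
  have := h1.comp_hasDerivAt (0:ℝ) h2
  exact this.unique h

@[simp] lemma pd0_T : pd 0 cT = 1 := by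
  ext p; apply pd_of_hasDeriv; simpa [bvec] using (hasDerivAt_id (0:ℝ)).const_add p.1
@[simp] lemma pd1_T : pd 1 cT = 0 := by
  ext p; apply pd_of_hasDeriv; simpa [bvec] using (hasDerivAt_const (0:ℝ) p.1)
@[simp] lemma pd2_T : pd 2 cT = 0 := by
  ext p; apply pd_of_hasDeriv; simpa [bvec] using (hasDerivAt_const (0:ℝ) p.1)
@[simp] lemma pd0_X0 : pd 0 (cX 0) = 0 := by
  ext p; apply pd_of_hasDeriv; simpa [bvec] using (hasDerivAt_const (0:ℝ) p.2.1)
@[simp] lemma pd1_X0 : pd 1 (cX 0) = 1 := by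
  ext p; apply pd_of_hasDeriv; simpa [bvec] using (hasDerivAt_id (0:ℝ)).const_add p.2.1
@[simp] lemma pd2_X0 : pd 2 (cX 0) = 0 := by
  ext p; apply pd_of_hasDeriv; simpa [bvec] using (hasDerivAt_const (0:ℝ) p.2.1)
@[simp] lemma pd0_X1 : pd 0 (cX 1) = 0 := by
  ext p; apply pd_of_hasDeriv; simpa [bvec] using (hasDerivAt_const (0:ℝ) p.2.2)
@[simp] lemma pd1_X1 : pd 1 (cX 1) = 0 := by
  ext p; apply pd_of_hasDeriv; simpa [bvec] using (hasDerivAt_const (0:ℝ) p.2.2)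
@[simp] lemma pd2_X1 : pd 2 (cX 1) = 1 := by
  ext p; apply pd_of_hasDeriv; simpa [bvec] using (hasDerivAt_id (0:ℝ)).const_add p.2.2

/-- Restriction to the graph of `Φ`: `f ↦ ((τ, x) ↦ f (Φ (τ, x), x))`. -/
def pull (Φ : SF) : SF →ₐ[ℝ] SF where
  toFun f := ⟨fun p => f.1 (Φ.1 p, p.2), f.smooth.comp (Φ.smooth.prodMk contDiff_snd)⟩
  map_one' := rfl
  map_mul' _ _ := rfl
  map_zero' := rfl
  map_add' _ _ := rfl
  commutes' _ := rfl

@[simp] lemma pull_ev (Φ f : SF) (p) : (pull Φ f).1 p = f.1 (Φ.1 p, p.2) := rfl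

lemma fderiv_split (f : SF) (p v : ℝ × ℝ × ℝ) : fderiv ℝ f.1 p v
    = v.1 * (pd 0 f).1 p + v.2.1 * (pd 1 f).1 p + v.2.2 * (pd 2 f).1 p := by
  have : v = v.1 • bvec 0 + v.2.1 • bvec 1 + v.2.2 • bvec 2 := by
    ext <;> simp [bvec]
  conv_lhs => rw [this]
  simp [pd_ev]

/-- Chain rule along a curve. -/
lemma hasDerivAt_curve (f : SF) {a b c : ℝ → ℝ} {a' b' c' t : ℝ} (ha : HasDerivAt a a' t)
    (hb : HasDerivAt b b' t) (hc : HasDerivAt c c' t) :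
    HasDerivAt (fun s => f.1 (a s, b s, c s)) (a' * (pd 0 f).1 (a t, b t, c t)
      + b' * (pd 1 f).1 (a t, b t, c t) + c' * (pd 2 f).1 (a t, b t, c t)) t := by
  have h1 : HasFDerivAt f.1 (fderiv ℝ f.1 (a t, b t, c t)) (a t, b t, c t) :=
    (f.diff _).hasFDerivAt
  have := h1.comp_hasDerivAt t (ha.prodMk (hb.prodMk hc))
  rw [fderiv_split] at this
  exact this

lemma hasDerivAt_coord (f : SF) (i : Fin 3) (p) (h : ℝ) :
    HasDerivAt (fun h : ℝ => f.1 (p + h • bvec i)) ((pd i f).1 (p + h • bvec i)) h := by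
  have h1 : HasFDerivAt f.1 (fderiv ℝ f.1 (p + h • bvec i)) (p + h • bvec i) :=
    (f.diff _).hasFDerivAt
  have h2 : HasDerivAt (fun h : ℝ => p + h • bvec i) (bvec i) h := by
    simpa using ((hasDerivAt_id h).smul_const (bvec i)).const_add p
  exact h1.comp_hasDerivAt h h2

/-- Chain rule for the restriction to the graphs `t = Φ(τ, x)`. -/
lemma pull_pd (Φ f : SF) (i : Fin 3) (p) : (pd i (pull Φ f)).1 p =
    (pd i Φ).1 p * (pd 0 f).1 (Φ.1 p, p.2) + (bvec i).2.1 * (pd 1 f).1 (Φ.1 p, p.2)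
     + (bvec i).2.2 * (pd 2 f).1 (Φ.1 p, p.2) := by
  apply pd_of_hasDeriv
  have h0 := hasDerivAt_coord Φ i p 0
  have h1 : HasDerivAt (fun h : ℝ => p.2.1 + h * (bvec i).2.1) ((bvec i).2.1) 0 := by
    simpa using ((hasDerivAt_id (0:ℝ)).mul_const ((bvec i).2.1)).const_add p.2.1
  have h2 : HasDerivAt (fun h : ℝ => p.2.2 + h * (bvec i).2.2) ((bvec i).2.2) 0 := by
    simpa using ((hasDerivAt_id (0:ℝ)).mul_const ((bvec i).2.2)).const_add p.2.2
  have := hasDerivAt_curve f h0 h1 h2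
  simp only [zero_smul, add_zero, zero_mul] at this
  exact this

lemma pd0_pull (Φ f : SF) : pd 0 (pull Φ f) = pd 0 Φ * pull Φ (pd 0 f) := by
  ext p; rw [pull_pd]; simp [bvec]
lemma pd1_pull (Φ f : SF) : pd 1 (pull Φ f) = pull Φ (pd 1 f) + pd 1 Φ * pull Φ (pd 0 f) := by
  ext p; rw [pull_pd]; simp [bvec]; ring
lemma pd2_pull (Φ f : SF) : pd 2 (pull Φ f) = pull Φ (pd 2 f) + pd 2 Φ * pull Φ (pd 0 f) := by
  ext p; rw [pull_pd]; simp [bvec]; ring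

/-- The wave operator. -/
def box (w : SF) : SF := pd 0 (pd 0 w) - pd 1 (pd 1 w) - pd 2 (pd 2 w)

@[simp] lemma pull_T (Φ : SF) : pull Φ cT = Φ := by ext p; simp
@[simp] lemma pull_X (Φ : SF) (i) : pull Φ (cX i) = cX i := by ext p; rfl

/-- A smooth function vanishing on an open set has vanishing derivatives there. -/
lemma pd_zero_on {Ω : Set (ℝ × ℝ × ℝ)} (hΩ : IsOpen Ω) {f : SF} (h : ∀ p ∈ Ω, f.1 p = 0) (i : Fin 3) :
    ∀ p ∈ Ω, (pd i f).1 p = 0 := by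
  intro p hp
  rw [pd_ev]
  have : f.1 =ᶠ[𝓝 p] fun _ => 0 := by
    filter_upwards [hΩ.mem_nhds hp] with q hq using h q hq
  rw [this.fderiv_eq]; simp

lemma zero_on_closure {Ω : Set (ℝ × ℝ × ℝ)} {f : SF} (h : ∀ p ∈ Ω, f.1 p = 0) :
    ∀ p ∈ closure Ω, f.1 p = 0 := by
  intro p hp
  have : closure Ω ⊆ {p | f.1 p = 0} :=
    closure_minimal h (isClosed_eq f.cont continuous_const)
  exact this hp

/-! ### Integrals over slices -/

/-- Integral over the slice of parameter `τ`. -/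
def sI (τ : ℝ) (f : SF) : ℝ := ∫ x : ℝ × ℝ, f.1 (τ, x)

/-- Support in `x` bounded locally uniformly in `τ`. -/
def XS (f : SF) : Prop := ∀ M : ℝ, ∃ R : ℝ, ∀ τ x, |τ| ≤ M → R < ‖x‖ → f.1 (τ, x) = 0

namespace XS
lemma mul_left {f : SF} (hf : XS f) (g : SF) : XS (g * f) := fun M => by
  obtain ⟨R, hR⟩ := hf M
  exact ⟨R, fun τ x h1 h2 => by simp [hR τ x h1 h2]⟩
lemma mul_right {f : SF} (hf : XS f) (g : SF) : XS (f * g) := mul_comm g f ▸ hf.mul_left g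
lemma add {f g : SF} (hf : XS f) (hg : XS g) : XS (f + g) := fun M => by
  obtain ⟨R, hR⟩ := hf M
  obtain ⟨R', hR'⟩ := hg M
  exact ⟨max R R', fun τ x h1 h2 => by
    simp [hR τ x h1 (lt_of_le_of_lt (le_max_left _ _) h2),
      hR' τ x h1 (lt_of_le_of_lt (le_max_right _ _) h2)]⟩
lemma neg {f : SF} (hf : XS f) : XS (-f) := fun M => by
  obtain ⟨R, hR⟩ := hf M
  exact ⟨R, fun τ x h1 h2 => by simp [hR τ x h1 h2]⟩
lemma sub {f g : SF} (hf : XS f) (hg : XS g) : XS (f - g) := sub_eq_add_neg f g ▸ hf.add hg.neg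
lemma smul {f : SF} (hf : XS f) (c : ℝ) : XS (c • f) := fun M => by
  obtain ⟨R, hR⟩ := hf M
  exact ⟨R, fun τ x h1 h2 => by simp [hR τ x h1 h2]⟩
lemma zero : XS 0 := fun _ => ⟨0, fun _ _ _ _ => rfl⟩
lemma pow {f : SF} (hf : XS f) {n : ℕ} (hn : n ≠ 0) : XS (f ^ n) := by
  obtain ⟨m, rfl⟩ := Nat.exists_eq_succ_of_ne_zero hn
  rw [pow_succ]; exact hf.mul_left _
lemma sum {ι} {s : Finset ι} {f : ι → SF} (h : ∀ i ∈ s, XS (f i)) : XS (∑ i ∈ s, f i) := by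
  classical
  induction s using Finset.induction_on with
  | empty => simpa using zero
  | insert a s ha ih =>
    rw [Finset.sum_insert ha]
    exact (h a (by simp)).add (ih fun i hi => h i (by simp [hi]))
lemma pd {f : SF} (hf : XS f) (i) : XS (pd i f) := fun M => by
  obtain ⟨R, hR⟩ := hf (M + 1)
  refine ⟨R, fun τ x h1 h2 => ?_⟩
  refine pd_zero_on (Ω := {p : ℝ × ℝ × ℝ | |p.1| < M + 1 ∧ R < ‖p.2‖}) ?_ ?_ i (τ, x) ⟨by linarith, h2⟩
  · have c1 : Continuous fun p : ℝ × ℝ × ℝ => |p.1| := by fun_prop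
    have c2 : Continuous fun p : ℝ × ℝ × ℝ => ‖p.2‖ := by fun_prop
    exact (isOpen_lt c1 continuous_const).inter (isOpen_lt continuous_const c2)
  · rintro ⟨s, y⟩ ⟨h3, h4⟩
    exact hR s y h3.le h4
lemma cs {f : SF} (hf : XS f) (τ : ℝ) : HasCompactSupport (fun x : ℝ × ℝ => f.1 (τ, x)) := by
  obtain ⟨R, hR⟩ := hf |τ|
  refine HasCompactSupport.intro (isCompact_closedBall (0 : ℝ × ℝ) R) fun x hx => hR τ x le_rfl ?_
  simpa using hx
end XS

namespace SF
lemma slice_smooth (f : SF) (τ : ℝ) : ContDiff ℝ ∞ (fun x : ℝ × ℝ => f.1 (τ, x)) :=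
  f.smooth.comp (contDiff_const.prodMk contDiff_id)
lemma slice_cont (f : SF) (τ : ℝ) : Continuous (fun x : ℝ × ℝ => f.1 (τ, x)) :=
  (f.slice_smooth τ).continuous
end SF

lemma XS.int {f : SF} (hf : XS f) (τ : ℝ) : Integrable (fun x : ℝ × ℝ => f.1 (τ, x)) :=
  (f.slice_cont τ).integrable_of_hasCompactSupport (hf.cs τ)

lemma sI_add {f g : SF} (hf : XS f) (hg : XS g) (τ) : sI τ (f + g) = sI τ f + sI τ g :=
  integral_add (hf.int τ) (hg.int τ)
lemma sI_sub {f g : SF} (hf : XS f) (hg : XS g) (τ) : sI τ (f - g) = sI τ f - sI τ g :=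
  integral_sub (hf.int τ) (hg.int τ)
lemma sI_neg (f : SF) (τ) : sI τ (-f) = - sI τ f := integral_neg _
lemma sI_smul (c : ℝ) (f : SF) (τ) : sI τ (c • f) = c * sI τ f := integral_const_mul _ _
lemma sI_zero (τ) : sI τ 0 = 0 := by simp [sI]
lemma sI_sum {ι} {s : Finset ι} {f : ι → SF} (h : ∀ i ∈ s, XS (f i)) (τ) :
    sI τ (∑ i ∈ s, f i) = ∑ i ∈ s, sI τ (f i) := by
  classical
  induction s using Finset.induction_on with
  | empty => simp [sI_zero]
  | insert a s ha ih =>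
    rw [Finset.sum_insert ha, Finset.sum_insert ha, sI_add (h a (by simp))
      (XS.sum fun i hi => h i (by simp [hi])), ih fun i hi => h i (by simp [hi])]
lemma sI_mono {f g : SF} (hf : XS f) (hg : XS g) {τ} (h : ∀ x, f.1 (τ, x) ≤ g.1 (τ, x)) :
    sI τ f ≤ sI τ g := integral_mono (hf.int τ) (hg.int τ) h
lemma sI_nonneg {f : SF} {τ} (h : ∀ x, 0 ≤ f.1 (τ, x)) : 0 ≤ sI τ f := integral_nonneg h

/-- If a nonnegative slice has zero integral, it vanishes. -/
lemma sI_eq_zero {f : SF} (hf : XS f) {τ} (h : ∀ x, 0 ≤ f.1 (τ, x)) (h0 : sI τ f = 0) (x) :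
    f.1 (τ, x) = 0 := by
  have := (integral_eq_zero_iff_of_nonneg h (hf.int τ)).1 h0
  exact congrFun ((f.slice_cont τ).ae_eq_iff_eq volume continuous_const |>.1 this) x

lemma slice_hasDerivAt1 (f : SF) (τ a b : ℝ) :
    HasDerivAt (fun s => f.1 (τ, s, b)) ((pd 1 f).1 (τ, a, b)) a := by
  have := hasDerivAt_curve f (hasDerivAt_const a τ) (hasDerivAt_id a) (hasDerivAt_const a b)
  simpa using this
lemma slice_hasDerivAt2 (f : SF) (τ a b : ℝ) :
    HasDerivAt (fun s => f.1 (τ, a, s)) ((pd 2 f).1 (τ, a, b)) b := by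
  have := hasDerivAt_curve f (hasDerivAt_const b τ) (hasDerivAt_const b a) (hasDerivAt_id b)
  simpa using this
lemma slice_hasDerivAt0 (f : SF) (τ : ℝ) (x : ℝ × ℝ) :
    HasDerivAt (fun s => f.1 (s, x)) ((pd 0 f).1 (τ, x)) τ := by
  have := hasDerivAt_curve f (hasDerivAt_id τ) (hasDerivAt_const τ x.1) (hasDerivAt_const τ x.2)
  simpa using this

lemma XS.cs1 {f : SF} (hf : XS f) (τ b : ℝ) : HasCompactSupport (fun a : ℝ => f.1 (τ, a, b)) := by
  obtain ⟨R, hR⟩ := hf |τ|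
  refine HasCompactSupport.intro (isCompact_closedBall (0 : ℝ) R) fun x hx => hR τ _ le_rfl ?_
  have : R < ‖x‖ := by simpa using hx
  exact lt_of_lt_of_le this (norm_fst_le (x, b))
lemma XS.cs2 {f : SF} (hf : XS f) (τ a : ℝ) : HasCompactSupport (fun b : ℝ => f.1 (τ, a, b)) := by
  obtain ⟨R, hR⟩ := hf |τ|
  refine HasCompactSupport.intro (isCompact_closedBall (0 : ℝ) R) fun x hx => hR τ _ le_rfl ?_
  have : R < ‖x‖ := by simpa using hx
  exact lt_of_lt_of_le this (norm_snd_le (a, x))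
lemma SF.cont1 (f : SF) (τ b : ℝ) : Continuous (fun a : ℝ => f.1 (τ, a, b)) :=
  f.cont.comp (by fun_prop)
lemma SF.cont2 (f : SF) (τ a : ℝ) : Continuous (fun b : ℝ => f.1 (τ, a, b)) :=
  f.cont.comp (by fun_prop)
lemma SF.smooth1 (f : SF) (τ b : ℝ) : ContDiff ℝ ∞ (fun a : ℝ => f.1 (τ, a, b)) :=
  f.smooth.comp (by fun_prop)
lemma SF.smooth2 (f : SF) (τ a : ℝ) : ContDiff ℝ ∞ (fun b : ℝ => f.1 (τ, a, b)) :=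
  f.smooth.comp (by fun_prop)

lemma ftc1 {f : SF} (hf : XS f) (τ a b : ℝ) :
    f.1 (τ, a, b) = ∫ s in Set.Iic a, (pd 1 f).1 (τ, s, b) := by
  have := (hf.cs1 τ b).integral_Iic_deriv_eq ((f.smooth1 τ b).of_le (by simp)) a
  rw [← this]
  congr 1; ext s
  exact (slice_hasDerivAt1 f τ s b).deriv
lemma ftc2 {f : SF} (hf : XS f) (τ a b : ℝ) :
    f.1 (τ, a, b) = ∫ s in Set.Iic b, (pd 2 f).1 (τ, a, s) := by
  have := (hf.cs2 τ a).integral_Iic_deriv_eq ((f.smooth2 τ a).of_le (by simp)) b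
  rw [← this]
  congr 1; ext s
  exact (slice_hasDerivAt2 f τ a s).deriv

/-- The elementary Sobolev embedding `|F| ≤ ∫ |∂₁∂₂F|` on a slice. -/
lemma sobolev_base {F G : SF} (hF : XS F) (hG : XS G) {τ : ℝ}
    (h : ∀ x, |(pd 2 (pd 1 F)).1 (τ, x)| ≤ G.1 (τ, x)) (x) : |F.1 (τ, x)| ≤ sI τ G := by
  have hG0 : ∀ x, 0 ≤ G.1 (τ, x) := fun x => (abs_nonneg _).trans (h x)
  have i2 : ∀ a, Integrable (fun b => G.1 (τ, a, b)) := fun a =>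
    (G.cont2 τ a).integrable_of_hasCompactSupport (hG.cs2 τ a)
  have e1 : ∀ a b, |(pd 1 F).1 (τ, a, b)| ≤ ∫ s, G.1 (τ, a, s) := by
    intro a b
    rw [ftc2 (hF.pd 1)]
    calc _ ≤ ∫ s in Set.Iic b, |(pd 2 (pd 1 F)).1 (τ, a, s)| := abs_integral_le_integral_abs
      _ ≤ ∫ s in Set.Iic b, G.1 (τ, a, s) := by
        refine integral_mono_of_nonneg (Eventually.of_forall fun _ => abs_nonneg _)
          (i2 a).integrableOn (Eventually.of_forall fun s => h _)
      _ ≤ _ := setIntegral_le_integral (i2 a) (Eventually.of_forall fun s => hG0 _)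
  have hint := hG.int τ
  have i1 : Integrable (fun a => ∫ s, G.1 (τ, a, s)) :=
    Integrable.integral_prod_left (μ := volume) (ν := volume) (f := fun x : ℝ × ℝ => G.1 (τ, x)) hint
  obtain ⟨a, b⟩ := x
  rw [ftc1 hF]
  calc _ ≤ ∫ s in Set.Iic a, |(pd 1 F).1 (τ, s, b)| := abs_integral_le_integral_abs
    _ ≤ ∫ s in Set.Iic a, ∫ r, G.1 (τ, s, r) := by
      refine integral_mono_of_nonneg (Eventually.of_forall fun _ => abs_nonneg _)
        i1.integrableOn (Eventually.of_forall fun s => e1 _ _)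
    _ ≤ ∫ s, ∫ r, G.1 (τ, s, r) := setIntegral_le_integral i1 (Eventually.of_forall fun s =>
        integral_nonneg fun _ => hG0 _)
    _ = sI τ G := (integral_prod (μ := volume) (ν := volume) (fun x : ℝ × ℝ => G.1 (τ, x)) hint).symm

lemma sI_pd1 {f : SF} (hf : XS f) (τ) : sI τ (pd 1 f) = 0 := by
  rw [sI]
  have e : ∀ b, ∫ a, (pd 1 f).1 (τ, a, b) = 0 := fun b => by
    refine integral_eq_zero_of_hasDerivAt_of_integrable (f := fun a => f.1 (τ, a, b))
      (fun a => slice_hasDerivAt1 f τ a b) ?_ ?_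
    · exact ((pd 1 f).cont1 τ b).integrable_of_hasCompactSupport ((hf.pd 1).cs1 τ b)
    · exact (f.cont1 τ b).integrable_of_hasCompactSupport (hf.cs1 τ b)
  have := integral_prod_symm (μ := volume) (ν := volume) (fun x : ℝ × ℝ => (pd 1 f).1 (τ, x)) ((hf.pd 1).int τ)
  refine this.trans ?_
  simp [e]
lemma sI_pd2 {f : SF} (hf : XS f) (τ) : sI τ (pd 2 f) = 0 := by
  rw [sI]
  have e : ∀ a, ∫ b, (pd 2 f).1 (τ, a, b) = 0 := fun a => by
    refine integral_eq_zero_of_hasDerivAt_of_integrable (f := fun b => f.1 (τ, a, b))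
      (fun b => slice_hasDerivAt2 f τ a b) ?_ ?_
    · exact ((pd 2 f).cont2 τ a).integrable_of_hasCompactSupport ((hf.pd 2).cs2 τ a)
    · exact (f.cont2 τ a).integrable_of_hasCompactSupport (hf.cs2 τ a)
  have := integral_prod (μ := volume) (ν := volume) (fun x : ℝ × ℝ => (pd 2 f).1 (τ, x)) ((hf.pd 2).int τ)
  refine this.trans ?_
  simp [e]

/-- Differentiation under the slice integral. -/
lemma hasDerivAt_sI {f : SF} (hf : XS f) (τ : ℝ) :
    HasDerivAt (fun s => sI s f) (sI τ (pd 0 f)) τ := by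
  obtain ⟨R, hR⟩ := (hf.pd 0) (|τ| + 1)
  obtain ⟨C, hC⟩ := ((isCompact_closedBall τ 1).prod
    (isCompact_closedBall (0 : ℝ × ℝ) R)).exists_bound_of_continuousOn (pd 0 f).cont.continuousOn
  have := hasDerivAt_integral_of_dominated_loc_of_deriv_le (μ := (volume : Measure (ℝ × ℝ)))
    (F := fun s x => f.1 (s, x)) (F' := fun s x => (pd 0 f).1 (s, x)) (x₀ := τ)
    (s := Metric.closedBall τ 1)
    (bound := (Metric.closedBall (0 : ℝ × ℝ) R).indicator fun _ => C)
    (Metric.closedBall_mem_nhds _ one_pos)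
    (Eventually.of_forall fun s => (f.slice_cont s).aestronglyMeasurable) (hf.int τ)
    ((pd 0 f).slice_cont τ).aestronglyMeasurable ?_ ?_ ?_
  · exact this.2
  · refine Eventually.of_forall fun x s hs => ?_
    by_cases hx : x ∈ Metric.closedBall (0 : ℝ × ℝ) R
    · rw [Set.indicator_of_mem hx]; exact hC (s, x) ⟨hs, hx⟩
    · rw [Set.indicator_of_notMem hx]
      have h1 : |s| ≤ |τ| + 1 := by
        have := abs_add_le (s - τ) τ
        have h2 : |s - τ| ≤ 1 := by simpa [Real.dist_eq] using hs
        simp at this; linarith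
      rw [hR s x h1 (by simpa using hx)]; simp
  · rw [integrable_indicator_iff Metric.isClosed_closedBall.measurableSet]
    exact integrableOn_const (by exact (isCompact_closedBall _ _).measure_lt_top.ne)
  · exact Eventually.of_forall fun x s _ => slice_hasDerivAt0 f s x

/-! ### The system and finite speed of propagation -/

lemma pd_mul (i) (f g : SF) : pd i (f * g) = f * pd i g + g * pd i f := by
  rw [Derivation.leibniz]; rfl
lemma pd_sq (i) (f : SF) : pd i (f ^ 2) = 2 * f * pd i f := by
  rw [pow_two, pd_mul]; ring
lemma pd_smul (i) (c : ℝ) (f : SF) : pd i (c • f) = c • pd i f := Derivation.map_smul _ _ _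
lemma pd_add (i) (f g : SF) : pd i (f + g) = pd i f + pd i g := map_add _ _ _
lemma pd_sub (i) (f g : SF) : pd i (f - g) = pd i f - pd i g := map_sub _ _ _
lemma pd_neg (i) (f : SF) : pd i (-f) = -pd i f := map_neg _ _
lemma pd_one (i) : pd i (1 : SF) = 0 := Derivation.map_one_eq_zero _
lemma pd_zero (i) : pd i (0 : SF) = 0 := map_zero _
lemma pd_sum {ι} (s : Finset ι) (f : ι → SF) (i) : pd i (∑ a ∈ s, f a) = ∑ a ∈ s, pd i (f a) :=
  map_sum _ _ _

namespace SF
@[simp] lemma two_ev (p) : (2 : SF).1 p = 2 := by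
  rw [← one_add_one_eq_two, add_ev, one_ev]; norm_num
@[simp] lemma three_ev (p) : (3 : SF).1 p = 3 := by
  rw [← two_add_one_eq_three, add_ev, one_ev, two_ev]; norm_num
@[simp] lemma sum_ev {ι} (s : Finset ι) (f : ι → SF) (p) : (∑ a ∈ s, f a).1 p = ∑ a ∈ s, (f a).1 p := by
  classical
  induction s using Finset.induction_on with
  | empty => simp
  | insert a s ha ih => rw [Finset.sum_insert ha, Finset.sum_insert ha, add_ev, ih]

/-- Post-composition with a smooth function of one variable. -/
def comp (χ : ℝ → ℝ) (hχ : ContDiff ℝ ∞ χ) (f : SF) : SF := ⟨fun p => χ (f.1 p), hχ.comp f.smooth⟩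
lemma deriv_smooth {χ : ℝ → ℝ} (hχ : ContDiff ℝ ∞ χ) : ContDiff ℝ ∞ (deriv χ) :=
  (contDiff_infty_iff_deriv.1 hχ).2
lemma comp_ev {χ : ℝ → ℝ} (hχ : ContDiff ℝ ∞ χ) (f : SF) (p) : (comp χ hχ f).1 p = χ (f.1 p) := rfl
lemma pd_comp {χ : ℝ → ℝ} (hχ : ContDiff ℝ ∞ χ) (f : SF) (i) :
    pd i (comp χ hχ f) = comp (deriv χ) (deriv_smooth hχ) f * pd i f := by
  ext p
  apply pd_of_hasDeriv
  have h1 := hasDerivAt_coord f i p 0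
  have h2 : HasDerivAt χ (deriv χ (f.1 (p + (0:ℝ) • bvec i))) (f.1 (p + (0:ℝ) • bvec i)) :=
    ((hχ.differentiable (by simp)) _).hasDerivAt
  have := h2.comp (0:ℝ) h1
  simp only [zero_smul, add_zero] at this
  exact this

/-- Square root of a positive function. -/
def sqrt (f : SF) (h : ∀ p, 0 < f.1 p) : SF :=
  ⟨fun p => √(f.1 p), by
    show ContDiff ℝ ∞ _
    exact f.smooth.sqrt fun p => (h p).ne'⟩
/-- Inverse of a positive function. -/
def inv (f : SF) (h : ∀ p, 0 < f.1 p) : SF :=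
  ⟨fun p => (f.1 p)⁻¹, by
    show ContDiff ℝ ∞ _
    exact f.smooth.inv fun p => (h p).ne'⟩
lemma sqrt_ev (f : SF) (h) (p) : (sqrt f h).1 p = √(f.1 p) := rfl
lemma inv_ev (f : SF) (h) (p) : (inv f h).1 p = (f.1 p)⁻¹ := rfl
lemma sqrt_pos (f : SF) (h) (p) : 0 < (sqrt f h).1 p := Real.sqrt_pos.2 (h p)
lemma sqrt_sq (f : SF) (h) : (sqrt f h) ^ 2 = f := by
  ext p; rw [pow_ev, sqrt_ev, Real.sq_sqrt (h p).le]
lemma inv_mul (f : SF) (h) : inv f h * f = 1 := by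
  ext p; rw [mul_ev, inv_ev, inv_mul_cancel₀ (h p).ne']; rfl
lemma pd_inv (f : SF) (h) (i) : pd i (inv f h) = - inv f h ^ 2 * pd i f := by
  have h1 : pd i (inv f h * f) = 0 := by rw [inv_mul, pd_one]
  rw [pd_mul] at h1
  have h2 := inv_mul f h
  linear_combination (inv f h) * h1 - (pd i (inv f h)) * h2
lemma pd_root {N P Q : SF} (hN : N ^ 2 = Q) (hP : P * N = 1) (i) :
    pd i N = (1/2 : ℝ) • (P * pd i Q) := by
  have h1 : pd i (N ^ 2) = pd i Q := by rw [hN]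
  rw [pd_sq] at h1
  rw [← h1]
  ext p
  have h3 := congrArg (fun g : SF => g.1 p) hP
  simp only [mul_ev, one_ev, smul_ev, two_ev] at h3 ⊢
  linear_combination (-(pd i N).1 p) * h3
end SF

/-- A pair of smooth functions on `ℝ × ℝ²` solving the system from time `B` on, with data at
time `B` supported in the ball of radius `B - 1`. -/
structure Sol (B : ℝ) (W : Fin 2 → SF) : Prop where
  hB : 2 ≤ B
  pde : ∀ j p, B ≤ p.1 → (box (W j)).1 p =
    -((pd 0 (W (j + 1))).1 p) ^ 2 * (pd 0 (W j)).1 p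
  d0 : ∀ j x1 x2, (B - 1) ^ 2 < x1 ^ 2 + x2 ^ 2 → (W j).1 (B, x1, x2) = 0
  d1 : ∀ j x1 x2, (B - 1) ^ 2 < x1 ^ 2 + x2 ^ 2 → (pd 0 (W j)).1 (B, x1, x2) = 0

/-- The energy density `½ |∂w|²`. -/
def eden (w : SF) : SF := (1/2 : ℝ) • ((pd 0 w) ^ 2 + (pd 1 w) ^ 2 + (pd 2 w) ^ 2)

/-- Local energy identity. -/
lemma pd0_eden (w : SF) : pd 0 (eden w) =
    pd 1 (pd 0 w * pd 1 w) + pd 2 (pd 0 w * pd 2 w) + pd 0 w * box w := by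
  ext p
  simp only [eden, box, pd_smul, pd_add, pd_sq, pd_mul, SF.smul_ev, SF.add_ev, SF.mul_ev,
    SF.sub_ev, SF.two_ev, pd_comm 1 0, pd_comm 2 0]
  ring

lemma Fin2_succ (j : Fin 2) : j + 1 + 1 = j := by fin_cases j <;> rfl

/-- A smooth weight supported in a mollified backward light cone: `X = χ(c - t - N)` with
`N = √(η² + |x - y|²)`. Here `X' = χ'(c - t - N) ≥ 0`, and `(n1, n2) = ∇N` has length at most one. -/
lemma cone_weight (c : ℝ) {η : ℝ} (hη : 0 < η) (y1 y2 : ℝ) : ∃ X X' n1 n2 : SF,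
    pd 0 X = -X' ∧ pd 1 X = -X' * n1 ∧ pd 2 X = -X' * n2 ∧ (∀ p, 0 ≤ X'.1 p) ∧ (∀ p, 0 ≤ X.1 p) ∧
    (∀ p, n1.1 p ^ 2 + n2.1 p ^ 2 ≤ 1) ∧
    (∀ p, c - p.1 ≤ √(η ^ 2 + (p.2.1 - y1) ^ 2 + (p.2.2 - y2) ^ 2) → X.1 p = 0) ∧
    (∀ p, √(η ^ 2 + (p.2.1 - y1) ^ 2 + (p.2.2 - y2) ^ 2) < c - p.1 → 0 < X.1 p) := by
  obtain ⟨Q, hQ⟩ : ∃ Q : SF, Q = (η ^ 2) • 1 + (cX 0 - y1 • 1) ^ 2 + (cX 1 - y2 • 1) ^ 2 := ⟨_, rfl⟩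
  have hQe : ∀ p, Q.1 p = η ^ 2 + (p.2.1 - y1) ^ 2 + (p.2.2 - y2) ^ 2 := fun p => by
    simp [hQ]
  have hQp : ∀ p, 0 < Q.1 p := fun p => by rw [hQe]; positivity
  obtain ⟨N, hN2, hN0, hNe⟩ : ∃ N : SF, N ^ 2 = Q ∧ (∀ p, 0 < N.1 p) ∧ ∀ p, N.1 p = √(Q.1 p) :=
    ⟨SF.sqrt Q hQp, SF.sqrt_sq _ _, SF.sqrt_pos _ _, fun p => rfl⟩
  obtain ⟨P, hPN⟩ : ∃ P : SF, P * N = 1 := ⟨SF.inv N hN0, SF.inv_mul _ _⟩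
  obtain ⟨Z, hZ⟩ : ∃ Z : SF, Z = c • 1 - cT - N := ⟨_, rfl⟩
  have hZe : ∀ p, Z.1 p = c - p.1 - √(η ^ 2 + (p.2.1 - y1) ^ 2 + (p.2.2 - y2) ^ 2) := fun p => by
    simp [hZ, hNe, hQe]
  have p0N : pd 0 N = 0 := by
    rw [SF.pd_root hN2 hPN]
    ext p
    simp [hQ, pd_add, pd_smul, pd_sq, pd_sub, pd_one]
  have p1N : pd 1 N = P * (cX 0 - y1 • 1) := by
    rw [SF.pd_root hN2 hPN]
    ext p
    simp [hQ, pd_add, pd_smul, pd_sq, pd_sub, pd_one]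
    ring
  have p2N : pd 2 N = P * (cX 1 - y2 • 1) := by
    rw [SF.pd_root hN2 hPN]
    ext p
    simp [hQ, pd_add, pd_smul, pd_sq, pd_sub, pd_one]
    ring
  refine ⟨SF.comp expNegInvGlue expNegInvGlue.contDiff Z,
    SF.comp (deriv expNegInvGlue) (SF.deriv_smooth expNegInvGlue.contDiff) Z,
    P * (cX 0 - y1 • 1), P * (cX 1 - y2 • 1), ?_, ?_, ?_,
    fun p => expNegInvGlue.monotone.deriv_nonneg, fun p => expNegInvGlue.nonneg _, fun p => ?_, ?_, ?_⟩
  · rw [SF.pd_comp, hZ, pd_sub, pd_sub, p0N, pd_smul, pd_one, pd0_T]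
    ext p; simp
  · rw [SF.pd_comp, hZ, pd_sub, pd_sub, p1N, pd_smul, pd_one, pd1_T]
    ext p; simp
  · rw [SF.pd_comp, hZ, pd_sub, pd_sub, p2N, pd_smul, pd_one, pd2_T]
    ext p; simp
  · have e1 := congrArg (fun g : SF => g.1 p) hPN
    have e2 := congrArg (fun g : SF => g.1 p) hN2
    simp only [hQe, SF.mul_ev, SF.pow_ev, SF.one_ev] at e1 e2
    simp only [SF.mul_ev, SF.sub_ev, SF.smul_ev, SF.one_ev, cX0_ev, cX1_ev]
    have : (P.1 p) ^ 2 * (η ^ 2 + (p.2.1 - y1) ^ 2 + (p.2.2 - y2) ^ 2) = 1 := by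
      rw [← e2, ← mul_pow, e1]; norm_num
    nlinarith [mul_nonneg (sq_nonneg (P.1 p)) (sq_nonneg η)]
  · intro p hp
    rw [SF.comp_ev]
    apply expNegInvGlue.zero_of_nonpos
    rw [hZe]; linarith
  · intro p hp
    rw [SF.comp_ev]
    apply expNegInvGlue.pos_of_pos
    rw [hZe]; linarith

/-- Finite speed of propagation: solutions vanish for `r > t - 1`. The energy weighted by `cone_weight` is
nonincreasing, because the nonlinearity dissipates energy. -/
theorem Sol.finite_speed {B : ℝ} {W : Fin 2 → SF} (h : Sol B W) (j : Fin 2) {t₀ y1 y2 : ℝ}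
    (ht : B ≤ t₀) (hy : t₀ - 1 < √(y1 ^ 2 + y2 ^ 2)) : (W j).1 (t₀, y1, y2) = 0 := by
  obtain ⟨ry, hry⟩ : ∃ ry, ry = √(y1 ^ 2 + y2 ^ 2) := ⟨_, rfl⟩
  rw [← hry] at hy
  obtain ⟨η, hη⟩ : ∃ η, η = (ry + 1 - t₀) / 2 := ⟨_, rfl⟩
  have hη0 : 0 < η := by rw [hη]; linarith
  obtain ⟨X, X', n1, n2, p0X, p1X, p2X, hX'0, hX0, hn, hXz, hXp⟩ := cone_weight (ry + 1) hη0 y1 y2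
  have hNx : ∀ a b : ℝ, √(a ^ 2 + b ^ 2) ≤ √(η ^ 2 + a ^ 2 + b ^ 2) := by
    intro a b
    apply Real.sqrt_le_sqrt
    nlinarith [sq_nonneg η]
  have hXS : XS X := by
    intro M
    refine ⟨ry + 1 + M + |y1| + |y2|, fun τ x h1 h2 => ?_⟩
    apply hXz
    have h3 := hNx (x.1 - y1) (x.2 - y2)
    have h4 : |x.1 - y1| ≤ √((x.1 - y1) ^ 2 + (x.2 - y2) ^ 2) := Real.abs_le_sqrt (by nlinarith [sq_nonneg (x.2 - y2)])
    have h5 : |x.2 - y2| ≤ √((x.1 - y1) ^ 2 + (x.2 - y2) ^ 2) := Real.abs_le_sqrt (by nlinarith [sq_nonneg (x.1 - y1)])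
    have h6 : |x.1| ≤ |x.1 - y1| + |y1| := by simpa using abs_add_le (x.1 - y1) y1
    have h7 : |x.2| ≤ |x.2 - y2| + |y2| := by simpa using abs_add_le (x.2 - y2) y2
    have h8 := (abs_le.1 h1).1
    have h9 := abs_nonneg y1
    have h10 := abs_nonneg y2
    have : ‖x‖ = max |x.1| |x.2| := by simp [Prod.norm_def]
    rcases max_cases |x.1| |x.2| with ⟨hm, _⟩ | ⟨hm, _⟩ <;> simp only <;> linarith
  obtain ⟨E, hE⟩ : ∃ E : SF, E = ∑ k : Fin 2, eden (W k) := ⟨_, rfl⟩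
  have hXE : ∀ τ x, 0 ≤ (X * E).1 (τ, x) := fun τ x => by
    rw [SF.mul_ev]
    refine mul_nonneg (hX0 _) ?_
    simp only [hE, SF.sum_ev, eden, SF.smul_ev, SF.add_ev, SF.pow_ev]
    positivity
  -- divergence form up to a remainder of nonpositive sign
  obtain ⟨rem, hrem⟩ : ∃ rem : SF, rem = -X' * (E - ∑ k, (n1 * (pd 0 (W k) * pd 1 (W k)) + n2 * (pd 0 (W k) * pd 2 (W k))))
    + X * ∑ k, pd 0 (W k) * box (W k) := ⟨_, rfl⟩
  have key : pd 0 (X * E) = pd 1 (X * ∑ k, pd 0 (W k) * pd 1 (W k))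
      + pd 2 (X * ∑ k, pd 0 (W k) * pd 2 (W k)) + rem := by
    rw [pd_mul, pd_mul 1, pd_mul 2, p0X, p1X, p2X, hrem, hE, pd_sum, pd_sum, pd_sum]
    simp only [Fin.sum_univ_two, pd0_eden]
    ring
  have hX'S : XS X' := by
    have := (hXS.pd 0).neg
    rwa [p0X, neg_neg] at this
  have anti : AntitoneOn (fun t => sI t (X * E)) (Set.Ici B) := by
    refine antitoneOn_of_deriv_nonpos (convex_Ici B) ?_ ?_ ?_
    · exact fun t _ => (hasDerivAt_sI (hXS.mul_right E) t).continuousAt.continuousWithinAt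
    · exact fun t _ => (hasDerivAt_sI (hXS.mul_right E) t).differentiableAt.differentiableWithinAt
    · intro t htB
      rw [interior_Ici] at htB
      have hremS : XS rem := by
        rw [hrem]; exact ((hX'S.neg).mul_right _).add (hXS.mul_right _)
      rw [(hasDerivAt_sI (hXS.mul_right E) t).deriv, key, sI_add (((hXS.mul_right _).pd 1).add ((hXS.mul_right _).pd 2)) hremS,
        sI_add ((hXS.mul_right _).pd 1) ((hXS.mul_right _).pd 2), sI_pd1 (hXS.mul_right _), sI_pd2 (hXS.mul_right _), zero_add, zero_add,
        ← sI_zero t]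
      refine sI_mono hremS XS.zero fun x => ?_
      have hp : ∀ k, _ := fun k => h.pde k (t, x) (le_of_lt htB)
      have hn' := hn (t, x)
      simp only [hrem, SF.add_ev, SF.mul_ev, SF.neg_ev, SF.sub_ev, SF.sum_ev, hp, hE, SF.zero_ev, eden,
        SF.smul_ev, SF.pow_ev]
      have aux : ∀ a b c n m : ℝ, n ^ 2 + m ^ 2 ≤ 1 → n * (a * b) + m * (a * c) ≤ 1/2 * (a^2+b^2+c^2) := by
        intro a b c n m hnm
        nlinarith [sq_nonneg (b - n * a), sq_nonneg (c - m * a), mul_nonneg (sq_nonneg a) (sub_nonneg.2 hnm)]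
      have a1 := hX0 (t, x)
      have a2 := hX'0 (t, x)
      have c3 := mul_nonneg a1 (sq_nonneg ((pd 0 (W 0)).1 (t, x) * (pd 0 (W 1)).1 (t, x)))
      have b1 : (0 : Fin 2) + 1 = 1 := rfl
      have b2 : (1 : Fin 2) + 1 = 0 := rfl
      simp only [Fin.sum_univ_two, b1, b2]
      generalize (pd 0 (W 0)).1 (t, x) = a0 at *
      generalize (pd 1 (W 0)).1 (t, x) = a1' at *
      generalize (pd 2 (W 0)).1 (t, x) = a2' at *
      generalize (pd 0 (W 1)).1 (t, x) = b0 at *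
      generalize (pd 1 (W 1)).1 (t, x) = b1' at *
      generalize (pd 2 (W 1)).1 (t, x) = b2' at *
      have c1 := mul_nonneg a2 (sub_nonneg.2 (aux a0 a1' a2' _ _ hn'))
      have c2 := mul_nonneg a2 (sub_nonneg.2 (aux b0 b1' b2' _ _ hn'))
      linarith only [c1, c2, c3]
  have zeroB : sI B (X * E) = 0 := by
    -- the cone meets `t = B` outside of the support of the data
    rw [← sI_zero B]
    unfold sI
    congr 1; ext x
    by_cases hx : (B - 1) ^ 2 < x.1 ^ 2 + x.2 ^ 2
    · have hop : IsOpen {p : ℝ × ℝ × ℝ | (B - 1) ^ 2 < p.2.1 ^ 2 + p.2.2 ^ 2} :=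
        isOpen_lt continuous_const (by fun_prop)
      have g1 : ∀ k, (pd 1 (W k)).1 (B, x) = 0 := by
        intro k
        have := slice_hasDerivAt1 (W k) B x.1 x.2
        refine this.unique ?_
        have hev : (fun s => (W k).1 (B, s, x.2)) =ᶠ[𝓝 x.1] fun _ => 0 := by
          have : IsOpen {s : ℝ | (B - 1) ^ 2 < s ^ 2 + x.2 ^ 2} := isOpen_lt continuous_const (by fun_prop)
          filter_upwards [this.mem_nhds hx] with s hs using h.d0 k s x.2 hs
        exact (hasDerivAt_const x.1 (0:ℝ)).congr_of_eventuallyEq hev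
      have g2 : ∀ k, (pd 2 (W k)).1 (B, x) = 0 := by
        intro k
        have := slice_hasDerivAt2 (W k) B x.1 x.2
        refine this.unique ?_
        have hev : (fun s => (W k).1 (B, x.1, s)) =ᶠ[𝓝 x.2] fun _ => 0 := by
          have : IsOpen {s : ℝ | (B - 1) ^ 2 < x.1 ^ 2 + s ^ 2} := isOpen_lt continuous_const (by fun_prop)
          filter_upwards [this.mem_nhds hx] with s hs using h.d0 k x.1 s hs
        exact (hasDerivAt_const x.2 (0:ℝ)).congr_of_eventuallyEq hev
      simp [hE, eden, g1, g2, h.d1 _ x.1 x.2 hx]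
    · have : X.1 (B, x) = 0 := by
        apply hXz
        have h3 := hNx (x.1 - y1) (x.2 - y2)
        have h4 : √(x.1 ^ 2 + x.2 ^ 2) ≤ B - 1 := by
          rw [Real.sqrt_le_left (by linarith [h.hB])]; exact not_lt.1 hx
        have h5 : ry ≤ √((x.1 - y1) ^ 2 + (x.2 - y2) ^ 2) + √(x.1 ^ 2 + x.2 ^ 2) := by
          have := norm_sub_le (⟨x.1, x.2⟩ : ℂ) (⟨x.1 - y1, x.2 - y2⟩ : ℂ)
          have e : (⟨x.1, x.2⟩ : ℂ) - ⟨x.1 - y1, x.2 - y2⟩ = ⟨y1, y2⟩ := by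
            apply Complex.ext <;> simp
          rw [e] at this
          simp only [Complex.norm_def, Complex.normSq_mk, ← pow_two] at this
          linarith
        simp only
        linarith
      simp [this]
  have psi0 : ∀ t ∈ Set.Icc B t₀, (pd 0 (W j)).1 (t, y1, y2) = 0 := by
    intro t ht'
    have h1 : sI t (X * E) = 0 := le_antisymm (zeroB ▸ anti Set.self_mem_Ici ht'.1 ht'.1) (sI_nonneg (hXE t))
    have h2 := sI_eq_zero (hXS.mul_right E) (hXE t) h1 (y1, y2)
    rw [SF.mul_ev] at h2
    have h3 : 0 < X.1 (t, y1, y2) := by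
      apply hXp
      have := ht'.2
      simp only [sub_self]
      norm_num
      rw [Real.sqrt_sq hη0.le]
      linarith
    have h4 := (mul_eq_zero.1 h2).resolve_left h3.ne'
    simp only [hE, SF.sum_ev, eden, SF.smul_ev, SF.add_ev, SF.pow_ev, Fin.sum_univ_two] at h4
    have : ∀ k, (pd 0 (W k)).1 (t, y1, y2) ^ 2 = 0 := by
      intro k
      fin_cases k <;> simp only [Fin.zero_eta, Fin.mk_one] <;> nlinarith [sq_nonneg ((pd 0 (W 0)).1 (t, y1, y2)), sq_nonneg ((pd 0 (W 1)).1 (t, y1, y2)), sq_nonneg ((pd 1 (W 0)).1 (t, y1, y2)), sq_nonneg ((pd 1 (W 1)).1 (t, y1, y2)), sq_nonneg ((pd 2 (W 0)).1 (t, y1, y2)), sq_nonneg ((pd 2 (W 1)).1 (t, y1, y2))]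
    exact pow_eq_zero_iff (two_ne_zero) |>.1 (this j)
  have hc := constant_of_has_deriv_right_zero (f := fun t => (W j).1 (t, y1, y2)) (a := B) (b := t₀)
    (fun t _ => (slice_hasDerivAt0 (W j) t (y1, y2)).continuousAt.continuousWithinAt)
    (fun t ht' => by
      have := (slice_hasDerivAt0 (W j) t (y1, y2))
      rw [psi0 t ⟨ht'.1, ht'.2.le⟩] at this
      exact this.hasDerivWithinAt)
  have := hc t₀ ⟨ht, le_rfl⟩
  rw [this]
  refine h.d0 j y1 y2 ?_
  have h1 : B - 1 < ry := by linarith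
  have h2 : ry ^ 2 = y1 ^ 2 + y2 ^ 2 := by rw [hry]; exact Real.sq_sqrt (by positivity)
  nlinarith [h.hB]

/-- Vanishing outside of the light cone `r ≤ t - 1`, for times after `B`. -/
def OV (B : ℝ) (f : SF) : Prop :=
  ∀ t y1 y2, B < t → t - 1 < √(y1 ^ 2 + y2 ^ 2) → f.1 (t, y1, y2) = 0

namespace OV
variable {B : ℝ} {f g : SF}
lemma mul_left (hf : OV B f) (g : SF) : OV B (g * f) := fun t y1 y2 h1 h2 => by
  simp [hf t y1 y2 h1 h2]
lemma mul_right (hf : OV B f) (g : SF) : OV B (f * g) := fun t y1 y2 h1 h2 => by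
  simp [hf t y1 y2 h1 h2]
lemma add (hf : OV B f) (hg : OV B g) : OV B (f + g) := fun t y1 y2 h1 h2 => by
  simp [hf t y1 y2 h1 h2, hg t y1 y2 h1 h2]
lemma sub (hf : OV B f) (hg : OV B g) : OV B (f - g) := fun t y1 y2 h1 h2 => by
  simp [hf t y1 y2 h1 h2, hg t y1 y2 h1 h2]
lemma neg (hf : OV B f) : OV B (-f) := fun t y1 y2 h1 h2 => by
  simp [hf t y1 y2 h1 h2]
lemma pd (hf : OV B f) (i) : OV B (pd i f) := fun t y1 y2 h1 h2 => by
  refine pd_zero_on (Ω := {p : ℝ × ℝ × ℝ | B < p.1 ∧ p.1 - 1 < √(p.2.1 ^ 2 + p.2.2 ^ 2)}) ?_ ?_ i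
    (t, y1, y2) ⟨h1, h2⟩
  · have c1 : Continuous fun p : ℝ × ℝ × ℝ => p.1 := by fun_prop
    have c2 : Continuous fun p : ℝ × ℝ × ℝ => p.1 - 1 := by fun_prop
    have c3 : Continuous fun p : ℝ × ℝ × ℝ => √(p.2.1 ^ 2 + p.2.2 ^ 2) := by fun_prop
    exact (isOpen_lt continuous_const c1).inter (isOpen_lt c2 c3)
  · rintro ⟨s, z1, z2⟩ ⟨h3, h4⟩
    exact hf s z1 z2 h3 h4
lemma at_B (hf : OV B f) {t y1 y2 : ℝ} (h1 : B ≤ t) (h2 : t - 1 < √(y1 ^ 2 + y2 ^ 2)) :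
    f.1 (t, y1, y2) = 0 := by
  have hc : Continuous fun s : ℝ => f.1 (s, y1, y2) := f.cont.comp (by fun_prop)
  have h3 : Tendsto (fun s : ℝ => f.1 (s, y1, y2)) (𝓝[>] t) (𝓝 (f.1 (t, y1, y2))) :=
    hc.continuousAt.tendsto.mono_left nhdsWithin_le_nhds
  have h4 : Tendsto (fun s : ℝ => f.1 (s, y1, y2)) (𝓝[>] t) (𝓝 0) := by
    refine tendsto_const_nhds.congr' ?_
    have : ∀ᶠ s in 𝓝[>] t, s < √(y1 ^ 2 + y2 ^ 2) + 1 :=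
      nhdsWithin_le_nhds (Iio_mem_nhds (by linarith))
    filter_upwards [this, self_mem_nhdsWithin] with s hs hs'
    exact (hf s y1 y2 (lt_of_le_of_lt h1 hs') (by linarith)).symm
  exact tendsto_nhds_unique h3 h4
end OV

lemma Sol.ov {B : ℝ} {W : Fin 2 → SF} (h : Sol B W) (j) : OV B (W j) :=
  fun _ _ _ h1 h2 => h.finite_speed j h1.le h2

/-! ### Energy on graphs, words of derivations, boosts and hyperboloids -/

/-- A graph lying between the plane `t = B` and the hyperboloid `t² - r² = B² + τ²` meets the cone `r ≤ t -
1` in a bounded set. -/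
lemma XS_pull {B : ℝ} {Φ f : SF} (h1 : ∀ p, B ≤ Φ.1 p)
    (h2 : ∀ p, Φ.1 p ^ 2 ≤ B ^ 2 + p.1 ^ 2 + (p.2.1 ^ 2 + p.2.2 ^ 2)) (hf : OV B f) :
    XS (pull Φ f) := by
  intro M
  refine ⟨B ^ 2 + M ^ 2 , fun τ x hτ hx => ?_⟩
  rw [pull_ev]
  refine hf.at_B (h1 _) ?_
  have h3 := h2 (τ, x)
  simp only at h3 ⊢
  have hr : ‖x‖ ≤ √(x.1 ^ 2 + x.2 ^ 2) := by
    have e1 : |x.1| ≤ √(x.1 ^ 2 + x.2 ^ 2) := Real.abs_le_sqrt (by nlinarith [sq_nonneg x.2])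
    have e2 : |x.2| ≤ √(x.1 ^ 2 + x.2 ^ 2) := Real.abs_le_sqrt (by nlinarith [sq_nonneg x.1])
    simpa [Prod.norm_def] using ⟨e1, e2⟩
  have h4 : √(x.1 ^ 2 + x.2 ^ 2) ^ 2 = x.1 ^ 2 + x.2 ^ 2 := Real.sq_sqrt (by positivity)
  have h5 : τ ^ 2 ≤ M ^ 2 := sq_le_sq.2 (hτ.trans (le_abs_self M))
  have h6 : 0 ≤ √(x.1 ^ 2 + x.2 ^ 2) := Real.sqrt_nonneg _
  generalize √(x.1 ^ 2 + x.2 ^ 2) = r at *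
  have : Φ.1 (τ, x) < r + 1 := by
    refine lt_of_pow_lt_pow_left₀ 2 (by linarith) ?_
    nlinarith
  linarith

/-- Energy flux density through the graph of `Φ`; the slope terms come from the conormal `(1, -∇Φ)`. -/
def ed (Φ w : SF) : SF :=
  (1/2 : ℝ) • (pull Φ (pd 0 w) ^ 2 + pull Φ (pd 1 w) ^ 2 + pull Φ (pd 2 w) ^ 2)
    + pull Φ (pd 0 w) * (pull Φ (pd 1 w) * pd 1 Φ + pull Φ (pd 2 w) * pd 2 Φ)

/-- Change of the energy density along a family of graphs: a spatial divergence plus the contribution of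
`box w`, with speed `∂_τ Φ`. -/
lemma pd0_ed (Φ w : SF) : pd 0 (ed Φ w) =
    pd 1 (pd 0 Φ * (pull Φ (pd 0 w) * pull Φ (pd 1 w)))
    + pd 2 (pd 0 Φ * (pull Φ (pd 0 w) * pull Φ (pd 2 w)))
    + pd 0 Φ * (pull Φ (pd 0 w) * pull Φ (box w)) := by
  ext p
  simp only [ed, box, map_sub, pd_smul, pd_add, pd_sq, pd_mul, pd0_pull, pd1_pull, pd2_pull,
    SF.smul_ev, SF.add_ev, SF.mul_ev,
    SF.sub_ev, SF.two_ev, pd_comm 1 0, pd_comm 2 0]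
  ring

lemma XS_ed {Φ w : SF} (h : ∀ i, XS (pull Φ (pd i w))) : XS (ed Φ w) :=
  (((((h 0).pow two_ne_zero).add ((h 1).pow two_ne_zero)).add ((h 2).pow two_ne_zero)).smul _).add
    ((h 0).mul_right _)

/-- The energy identity for graphs. -/
lemma hasDerivAt_energy {Φ w : SF} (h : ∀ i, XS (pull Φ (pd i w))) (τ : ℝ) :
    HasDerivAt (fun s => sI s (ed Φ w))
      (sI τ (pd 0 Φ * (pull Φ (pd 0 w) * pull Φ (box w)))) τ := by
  have := hasDerivAt_sI (XS_ed h) τ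
  have x1 := (((h 0).mul_right (pull Φ (pd 1 w))).mul_left (pd 0 Φ))
  have x2 := (((h 0).mul_right (pull Φ (pd 2 w))).mul_left (pd 0 Φ))
  rw [pd0_ed, sI_add ((x1.pd 1).add (x2.pd 2)) (((h 0).mul_right _).mul_left _),
    sI_add (x1.pd 1) (x2.pd 2), sI_pd1 x1, sI_pd2 x2, zero_add, zero_add] at this
  exact this


/-- Words of length at most `k`. -/
def wd (ι : Type) [Finite ι] (k : ℕ) : Finset (List ι) := (List.finite_length_le ι k).toFinset
lemma mem_wd {ι : Type} [Finite ι] {k : ℕ} {l : List ι} : l ∈ wd ι k ↔ l.length ≤ k := by simp [wd]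

/-- Application of a word of derivations; the first letter acts first. -/
def app {ι : Type} (Z : ι → Derivation ℝ SF SF) : List ι → SF → SF
  | [], w => w
  | i :: l, w => app Z l (Z i w)

section words
variable {ι : Type} (Z : ι → Derivation ℝ SF SF)

@[simp] lemma app_nil (w) : app Z [] w = w := rfl
@[simp] lemma app_cons (i l w) : app Z (i :: l) w = app Z l (Z i w) := rfl
lemma app_append (l l' w) : app Z (l ++ l') w = app Z l' (app Z l w) := by
  induction l generalizing w with
  | nil => rfl
  | cons i l ih => simp [ih]
lemma app_add (l v w) : app Z l (v + w) = app Z l v + app Z l w := by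
  induction l generalizing v w with
  | nil => rfl
  | cons i l ih => simp [ih]
lemma app_neg (l w) : app Z l (-w) = - app Z l w := by
  induction l generalizing w with
  | nil => rfl
  | cons i l ih => simp [ih]
lemma app_zero (l) : app Z l 0 = 0 := by
  induction l with
  | nil => rfl
  | cons i l ih => simp [ih]
lemma app_sub (l v w) : app Z l (v - w) = app Z l v - app Z l w := by
  rw [sub_eq_add_neg, app_add, app_neg, sub_eq_add_neg]
lemma app_smul (l) (c : ℝ) (w) : app Z l (c • w) = c • app Z l w := by
  induction l generalizing w with
  | nil => rfl
  | cons i l ih => simp [ih]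
lemma app_mem {P : SF → Prop} (h : ∀ i w, P w → P (Z i w)) (l w) (hw : P w) : P (app Z l w) := by
  induction l generalizing w with
  | nil => exact hw
  | cons i l ih => exact ih _ (h i w hw)
lemma app_comm {T : SF → SF} (h : ∀ i w, T (Z i w) = Z i (T w)) (l w) : T (app Z l w) = app Z l (T w) := by
  induction l generalizing w with
  | nil => rfl
  | cons i l ih => rw [app_cons, ih, h]; rfl
lemma app_intertwine {Z' : ι → Derivation ℝ SF SF} {T : SF → SF} (h : ∀ i w, T (Z i w) = Z' i (T w)) (l w) :
    T (app Z l w) = app Z' l (T w) := by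
  induction l generalizing w with
  | nil => rfl
  | cons i l ih => rw [app_cons, ih, h]; rfl

/-- Leibniz rule for a word applied to a triple product, in the form of a bound for a
quasi-additive functional. -/
lemma app_triple {J : SF → ℝ} (hJ : ∀ v w, J (v + w) ≤ 2 * J v + 2 * J w) (l : List ι) :
    ∀ (f g h : SF) (K : ℝ), (∀ l1 l2 l3 : List ι, l1.length + l2.length + l3.length ≤ l.length →
      J (app Z l1 f * app Z l2 g * app Z l3 h) ≤ K) →
      J (app Z l (f * g * h)) ≤ 10 ^ l.length * K := by
  induction l with
  | nil =>
    intro f g h K hK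
    simpa using hK [] [] [] (by simp)
  | cons i l ih =>
    intro f g h K hK
    have e : Z i (f * g * h) = Z i f * g * h + f * Z i g * h + f * g * Z i h := by
      simp only [Derivation.leibniz, smul_eq_mul]; ring
    rw [app_cons, e, app_add, app_add]
    have a1 := ih (Z i f) g h K fun l1 l2 l3 hl => hK (i :: l1) l2 l3 (by simp; omega)
    have a2 := ih f (Z i g) h K fun l1 l2 l3 hl => hK l1 (i :: l2) l3 (by simp; omega)
    have a3 := ih f g (Z i h) K fun l1 l2 l3 hl => hK l1 l2 (i :: l3) (by simp; omega)
    have b1 := hJ (app Z l (Z i f * g * h) + app Z l (f * Z i g * h)) (app Z l (f * g * Z i h))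
    have b2 := hJ (app Z l (Z i f * g * h)) (app Z l (f * Z i g * h))
    rw [List.length_cons, pow_succ]
    linarith
end words

/-- The Lorentz boosts `t∂ᵢ + xᵢ∂ₜ`. -/
def Lf : Fin 2 → Derivation ℝ SF SF := ![cT • pd 1 + cX 0 • pd 0, cT • pd 2 + cX 1 • pd 0]
lemma Lf0 (w) : Lf 0 w = cT * pd 1 w + cX 0 * pd 0 w := rfl
lemma Lf1 (w) : Lf 1 w = cT * pd 2 w + cX 1 * pd 0 w := rfl

lemma box_pd (i w) : box (pd i w) = pd i (box w) := by
  fin_cases i <;>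
  simp only [box, pd_sub, pd_comm 1 0, pd_comm 2 0, pd_comm 2 1, Fin.zero_eta, Fin.mk_one, Fin.reduceFinMk]

lemma box_Lf (i w) : box (Lf i w) = Lf i (box w) := by
  fin_cases i
  · simp only [box, Fin.zero_eta, Fin.mk_one, Lf0, pd_sub, pd_add, pd_mul, pd0_T, pd1_T, pd2_T, pd0_X0, pd1_X0, pd2_X0,
      pd_comm 1 0, pd_comm 2 0, pd_comm 2 1, pd_one, pd_zero, map_zero]
    ring
  · simp only [box, Fin.zero_eta, Fin.mk_one, Lf1, pd_sub, pd_add, pd_mul, pd0_T, pd1_T, pd2_T, pd0_X1, pd1_X1, pd2_X1,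
      pd_comm 1 0, pd_comm 2 0, pd_comm 2 1, pd_one, pd_zero, map_zero]
    ring

/-- The tangential fields `Φ∂ᵢ` on the parameter space. -/
def Xf (Φ : SF) : Fin 2 → Derivation ℝ SF SF := ![Φ • pd 1, Φ • pd 2]
lemma Xf0 (Φ w) : Xf Φ 0 w = Φ * pd 1 w := rfl
lemma Xf1 (Φ w) : Xf Φ 1 w = Φ * pd 2 w := rfl

/-- `Φ` parametrizes hyperboloids by `λ`: `Φ = √(B² + λ² + r²)`, and `P = 1/Φ`. -/
structure Hyp (B : ℝ) (Φ P : SF) : Prop where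
  hB : 2 ≤ B
  sq : Φ ^ 2 = (B ^ 2) • 1 + cT ^ 2 + cX 0 ^ 2 + cX 1 ^ 2
  pos : ∀ p, 0 < Φ.1 p
  inv : P * Φ = 1

lemma exists_hyp {B : ℝ} (hB : 2 ≤ B) : ∃ Φ P, Hyp B Φ P := by
  obtain ⟨Q, hQ⟩ : ∃ Q : SF, Q = (B ^ 2) • 1 + cT ^ 2 + cX 0 ^ 2 + cX 1 ^ 2 := ⟨_, rfl⟩
  have hQp : ∀ p, 0 < Q.1 p := fun p => by simp [hQ]; positivity
  exact ⟨SF.sqrt Q hQp, SF.inv _ (SF.sqrt_pos Q hQp), hB, hQ ▸ SF.sqrt_sq Q hQp, SF.sqrt_pos Q hQp, SF.inv_mul _ _⟩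

namespace Hyp
variable {B : ℝ} {Φ P : SF} (H : Hyp B Φ P)
include H
lemma sq_ev (p) : Φ.1 p ^ 2 = B ^ 2 + p.1 ^ 2 + p.2.1 ^ 2 + p.2.2 ^ 2 := by
  have := congrArg (fun g : SF => g.1 p) H.sq
  simpa using this
lemma inv_ev (p) : P.1 p * Φ.1 p = 1 := by
  have := congrArg (fun g : SF => g.1 p) H.inv
  simpa using this
lemma Ppos (p) : 0 < P.1 p := by
  have h1 := H.inv_ev p
  have h2 := H.pos p
  by_contra h; nlinarith
lemma geB (p) : B ≤ Φ.1 p := by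
  have h1 := H.sq_ev p
  have h2 := H.pos p
  have h3 := H.hB
  nlinarith [sq_nonneg p.1, sq_nonneg p.2.1, sq_nonneg p.2.2]
lemma d0 : pd 0 Φ = P * cT := by
  rw [SF.pd_root H.sq H.inv]; ext p
  simp [pd_add, pd_sq, pd_smul, pd_one]; ring
lemma d1 : pd 1 Φ = P * cX 0 := by
  rw [SF.pd_root H.sq H.inv]; ext p
  simp [pd_add, pd_sq, pd_smul, pd_one]; ring
lemma d2 : pd 2 Φ = P * cX 1 := by
  rw [SF.pd_root H.sq H.inv]; ext p
  simp [pd_add, pd_sq, pd_smul, pd_one]; ring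
lemma dP (i) : pd i P = - P ^ 2 * pd i Φ := by
  have h1 : pd i (P * Φ) = 0 := by rw [H.inv, pd_one]
  rw [pd_mul] at h1
  linear_combination P * h1 - (pd i P) * H.inv
/-- The boosts are tangent to the hyperboloids and restrict to `Φ ∂ᵢ`. -/
lemma pull_Lf (i w) : pull Φ (Lf i w) = Xf Φ i (pull Φ w) := by
  fin_cases i
  · simp only [Fin.zero_eta, Lf0, Xf0, map_add, map_mul, pull_T, pull_X, pd1_pull, H.d1]
    linear_combination (-cX 0 * pull Φ (pd 0 w)) * H.inv
  · simp only [Fin.mk_one, Lf1, Xf1, map_add, map_mul, pull_T, pull_X, pd2_pull, H.d2]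
    linear_combination (-cX 1 * pull Φ (pd 0 w)) * H.inv
lemma pull_app (l w) : pull Φ (app Lf l w) = app (Xf Φ) l (pull Φ w) :=
  app_intertwine Lf (T := fun w => pull Φ w) H.pull_Lf l w
lemma XSp {f : SF} (hf : OV B f) : XS (pull Φ f) :=
  XS_pull H.geB (fun p => by rw [H.sq_ev]; ring_nf; rfl) hf
end Hyp

lemma OV.Lf {B : ℝ} {f : SF} (hf : OV B f) (i) : OV B (Lf i f) := by
  fin_cases i
  · exact ((hf.pd 1).mul_left _).add ((hf.pd 0).mul_left _)
  · exact ((hf.pd 2).mul_left _).add ((hf.pd 0).mul_left _)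
lemma OV.app_Lf {B : ℝ} {f : SF} (hf : OV B f) (l) : OV B (app _root_.Lf l f) :=
  app_mem _ (P := OV B) (fun i _ h => h.Lf i) l f hf
lemma OV.app_pd {B : ℝ} {f : SF} (hf : OV B f) (l) : OV B (app _root_.pd l f) :=
  app_mem _ (P := OV B) (fun i _ h => h.pd i) l f hf

/-- Squared length of the full gradient. -/
def gradSq (w : SF) : SF := pd 0 w ^ 2 + pd 1 w ^ 2 + pd 2 w ^ 2

lemma gradSq_ge (w : SF) (i p) : ((pd i w).1 p) ^ 2 ≤ (gradSq w).1 p := by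
  simp only [gradSq, SF.add_ev, SF.pow_ev]
  fin_cases i <;> simp only [Fin.zero_eta, Fin.mk_one, Fin.reduceFinMk] <;>
  nlinarith [sq_nonneg ((pd 0 w).1 p), sq_nonneg ((pd 1 w).1 p), sq_nonneg ((pd 2 w).1 p)]

lemma Lf_pd_comm (k : Fin 2) (i : Fin 3) : (∀ w, Lf k (pd i w) = pd i (Lf k w)) ∨
    ∃ j, ∀ w, Lf k (pd i w) = pd i (Lf k w) - pd j w := by
  fin_cases k <;> fin_cases i
  · right; refine ⟨1, fun w => ?_⟩
    simp [Lf0, pd_add, pd_mul, pd_comm 1 0, pd_comm 2 0, pd_comm 2 1]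
    ring
  · right; refine ⟨0, fun w => ?_⟩
    simp [Lf0, pd_add, pd_mul, pd_comm 1 0, pd_comm 2 0, pd_comm 2 1]
    ring
  · left; intro w
    simp [Lf0, pd_add, pd_mul, pd_comm 1 0, pd_comm 2 0, pd_comm 2 1]
  · right; refine ⟨2, fun w => ?_⟩
    simp [Lf1, pd_add, pd_mul, pd_comm 1 0, pd_comm 2 0, pd_comm 2 1]
    ring
  · left; intro w
    simp [Lf1, pd_add, pd_mul, pd_comm 1 0, pd_comm 2 0, pd_comm 2 1]
  · right; refine ⟨0, fun w => ?_⟩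
    simp [Lf1, pd_add, pd_mul, pd_comm 1 0, pd_comm 2 0, pd_comm 2 1]
    ring

/-- Commuting a coordinate derivative out of a word of boosts only produces gradients of shorter words. -/
lemma app_Lf_pd (l : List (Fin 2)) : ∀ (i : Fin 3) (w : SF) (p : ℝ × ℝ × ℝ) (K : ℝ),
    (∀ l' : List (Fin 2), l'.length ≤ l.length → (gradSq (app Lf l' w)).1 p ≤ K) →
    ((app Lf l (pd i w)).1 p) ^ 2 ≤ 4 ^ l.length * K := by
  induction l with
  | nil =>
    intro i w p K hK
    simpa using (gradSq_ge w i p).trans (hK [] le_rfl)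
  | cons k l ih =>
    intro i w p K hK
    have a1 := ih i (Lf k w) p K fun l' hl' => hK (k :: l') (by simpa using hl')
    have hK0 : 0 ≤ 4 ^ l.length * K := (sq_nonneg _).trans a1
    rw [app_cons, List.length_cons, pow_succ 4]
    rcases Lf_pd_comm k i with h | ⟨j, h⟩
    · rw [h]; linarith
    · rw [h, app_sub, SF.sub_ev]
      have a2 := ih j w p K fun l' hl' => hK l' (by simp; omega)
      nlinarith [sq_nonneg ((app Lf l (pd i (Lf k w))).1 p + (app Lf l (pd j w)).1 p)]

/-! ### Smallness of all derivatives at the initial time -/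

/-- Solutions with data `ε (f, g)` at time `B`. -/
structure Dat (B : ℝ) (f g : Fin 2 → SF) (ε : ℝ) (W : Fin 2 → SF) : Prop where
  sol : Sol B W
  e0 : 0 < ε
  e1 : ε ≤ 1
  i0 : ∀ j x, (W j).1 (B, x) = ε * (f j).1 (B, x)
  i1 : ∀ j x, (pd 0 (W j)).1 (B, x) = ε * (g j).1 (B, x)

/-- The spatial derivatives. -/
def pdx : Fin 2 → Derivation ℝ SF SF := ![pd 1, pd 2]
lemma pdx_comm (i w) : pd 0 (pdx i w) = pdx i (pd 0 w) := by
  fin_cases i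
  · exact pd_comm 0 1 w
  · exact pd_comm 0 2 w

lemma pdx_plane {B : ℝ} {f : SF} (h : ∀ x, f.1 (B, x) = 0) (i x) : (pdx i f).1 (B, x) = 0 := by
  fin_cases i
  · refine (slice_hasDerivAt1 f B x.1 x.2).unique ?_
    simp only [h]; exact hasDerivAt_const _ _
  · refine (slice_hasDerivAt2 f B x.1 x.2).unique ?_
    simp only [h]; exact hasDerivAt_const _ _

section
variable (B : ℝ) (f g : Fin 2 → SF)

/-- Index type of all solutions with data `ε (f, g)`. -/
abbrev Idx := {a : ℝ × (Fin 2 → SF) // Dat B f g a.1 a.2}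

/-- A family of functions which is `O(ε)` on `t = B` with all spatial derivatives. -/
def Sm0 (F : Idx B f g → SF) : Prop :=
  ∀ l, ∃ C, ∀ a x, |(app pdx l (F a)).1 (B, x)| ≤ C * a.1.1

/-- The same with `m` time derivatives. -/
def Sm : ℕ → (Idx B f g → SF) → Prop
  | 0, F => Sm0 B f g F
  | m + 1, F => Sm0 B f g F ∧ Sm m (fun a => pd 0 (F a))

variable {B f g} {F G : Idx B f g → SF}

lemma Sm0.add (hF : Sm0 B f g F) (hG : Sm0 B f g G) : Sm0 B f g (fun a => F a + G a) := fun l => by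
  obtain ⟨C, hC⟩ := hF l
  obtain ⟨D, hD⟩ := hG l
  refine ⟨C + D, fun a x => ?_⟩
  rw [app_add, SF.add_ev]
  have := abs_add_le ((app pdx l (F a)).1 (B, x)) ((app pdx l (G a)).1 (B, x))
  linarith [hC a x, hD a x]
lemma Sm0.neg (hF : Sm0 B f g F) : Sm0 B f g (fun a => - F a) := fun l => by
  obtain ⟨C, hC⟩ := hF l
  refine ⟨C, fun a x => ?_⟩
  rw [app_neg, SF.neg_ev, abs_neg]; exact hC a x
lemma Sm0.pdx (hF : Sm0 B f g F) (i) : Sm0 B f g (fun a => pdx i (F a)) := fun l => hF (i :: l)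
lemma Sm0.mul (hF : Sm0 B f g F) (hG : Sm0 B f g G) : Sm0 B f g (fun a => F a * G a) := by
  intro l
  induction l generalizing F G with
  | nil =>
    obtain ⟨C, hC⟩ := hF []
    obtain ⟨D, hD⟩ := hG []
    refine ⟨|C| * |D|, fun a x => ?_⟩
    simp only [app_nil, SF.mul_ev, abs_mul] at *
    have h0 := a.2.e0
    have h1 := a.2.e1
    have h2 := (hC a x).trans (mul_le_mul_of_nonneg_right (le_abs_self C) h0.le)
    have h3 := (hD a x).trans (mul_le_mul_of_nonneg_right (le_abs_self D) h0.le)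
    calc _ ≤ (|C| * a.1.1) * (|D| * a.1.1) := mul_le_mul h2 h3 (abs_nonneg _) (by positivity)
      _ = (|C| * |D|) * (a.1.1 * a.1.1) := by ring
      _ ≤ _ := mul_le_mul_of_nonneg_left (by nlinarith) (by positivity)
  | cons i l ih =>
    obtain ⟨C, hC⟩ := ih (hF.pdx i) hG
    obtain ⟨D, hD⟩ := ih hF (hG.pdx i)
    refine ⟨C + D, fun a x => ?_⟩
    have e : _root_.pdx i (F a * G a) = F a * _root_.pdx i (G a) + _root_.pdx i (F a) * G a := by
      rw [Derivation.leibniz, smul_eq_mul, smul_eq_mul]; ring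
    rw [app_cons, e, app_add, SF.add_ev]
    have := abs_add_le ((app _root_.pdx l (F a * _root_.pdx i (G a))).1 (B, x)) ((app _root_.pdx l (_root_.pdx i (F a) * G a)).1 (B, x))
    linarith [hC a x, hD a x]
lemma Sm0.congr (hF : Sm0 B f g F) (h : ∀ a x, (F a).1 (B, x) = (G a).1 (B, x)) : Sm0 B f g G := by
  intro l
  obtain ⟨C, hC⟩ := hF l
  refine ⟨C, fun a x => ?_⟩
  have : ∀ y, (app _root_.pdx l (F a - G a)).1 (B, y) = 0 :=
    app_mem _root_.pdx (P := fun f => ∀ y, f.1 (B, y) = 0) (fun i w hw y => pdx_plane hw i y) l (F a - G a)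
      (fun y => by rw [SF.sub_ev, h, sub_self])
  have h2 := this x
  rw [app_sub, SF.sub_ev, sub_eq_zero] at h2
  rw [← h2]; exact hC a x

lemma Sm.zero {m} (hF : Sm B f g m F) : Sm0 B f g F := by
  cases m with
  | zero => exact hF
  | succ m => exact hF.1
lemma Sm.mono {m} (hF : Sm B f g (m + 1) F) : Sm B f g m F := by
  induction m generalizing F with
  | zero => exact hF.1
  | succ m ih => exact ⟨hF.1, ih hF.2⟩
lemma Sm.add {m} (hF : Sm B f g m F) (hG : Sm B f g m G) : Sm B f g m (fun a => F a + G a) := by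
  induction m generalizing F G with
  | zero => exact Sm0.add hF hG
  | succ m ih =>
    refine ⟨Sm0.add hF.1 hG.1, ?_⟩
    simp only [pd_add]; exact ih hF.2 hG.2
lemma Sm.neg {m} (hF : Sm B f g m F) : Sm B f g m (fun a => - F a) := by
  induction m generalizing F with
  | zero => exact Sm0.neg hF
  | succ m ih =>
    refine ⟨Sm0.neg hF.1, ?_⟩
    simp only [pd_neg]; exact ih hF.2
lemma Sm.mul {m} (hF : Sm B f g m F) (hG : Sm B f g m G) : Sm B f g m (fun a => F a * G a) := by
  induction m generalizing F G with
  | zero => exact Sm0.mul hF hG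
  | succ m ih =>
    refine ⟨Sm0.mul hF.1 hG.1, ?_⟩
    simp only [pd_mul]; exact (ih hF.mono hG.2).add (ih hG.mono hF.2)
lemma Sm.pdx {m} (hF : Sm B f g m F) (i) : Sm B f g m (fun a => pdx i (F a)) := by
  induction m generalizing F with
  | zero => exact Sm0.pdx hF i
  | succ m ih =>
    refine ⟨Sm0.pdx hF.1 i, ?_⟩
    simp only [pdx_comm]; exact ih hF.2
lemma Sm.pd {m} (hF : Sm B f g (m + 1) F) (i) : Sm B f g m (fun a => pd i (F a)) := by
  fin_cases i
  · exact hF.2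
  · exact hF.mono.pdx 0
  · exact hF.mono.pdx 1
lemma pd_zero_half {f : SF} (h : ∀ p : ℝ × ℝ × ℝ, B ≤ p.1 → f.1 p = 0) (i) (p : ℝ × ℝ × ℝ) (hp : B ≤ p.1) :
    (_root_.pd i f).1 p = 0 := by
  have c1 : Continuous fun p : ℝ × ℝ × ℝ => p.1 := by fun_prop
  refine zero_on_closure (Ω := {p : ℝ × ℝ × ℝ | B < p.1}) (pd_zero_on (isOpen_lt continuous_const c1)
    (fun q hq => h q (le_of_lt hq)) i) p ?_
  have hc : Continuous fun s : ℝ => (p.1 + s, p.2) := by fun_prop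
  have h3 : Tendsto (fun s : ℝ => (p.1 + s, p.2)) (𝓝[>] 0) (𝓝 (p.1 + 0, p.2)) :=
    hc.continuousAt.tendsto.mono_left nhdsWithin_le_nhds
  rw [add_zero] at h3
  refine mem_closure_of_tendsto h3 ?_
  filter_upwards [self_mem_nhdsWithin] with s hs
  show B < p.1 + s
  have : 0 < s := hs
  linarith
lemma Sm.congr {m} (hF : Sm B f g m F) (h : ∀ a p, B ≤ p.1 → (F a).1 p = (G a).1 p) : Sm B f g m G := by
  induction m generalizing F G with
  | zero => exact Sm0.congr hF fun a x => h a _ le_rfl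
  | succ m ih =>
    refine ⟨Sm0.congr hF.1 fun a x => h a _ le_rfl, ih hF.2 fun a p hp => ?_⟩
    have := pd_zero_half (B := B) (f := F a - G a) (fun p hp => by rw [SF.sub_ev, h a p hp, sub_self]) 0 p hp
    rw [pd_sub, SF.sub_ev] at this
    linarith

lemma Sm0_data {f' : SF} (hf' : XS f') (h : ∀ a x, (F a).1 (B, x) = a.1.1 * f'.1 (B, x)) : Sm0 B f g F := by
  have : Sm0 B f g (fun a => a.1.1 • f') := by
    intro l
    have hx : XS (app pdx l f') := app_mem pdx (P := XS) (fun i w hw => by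
      fin_cases i
      · exact hw.pd 1
      · exact hw.pd 2) l _ hf'
    obtain ⟨C, hC⟩ := (hx.cs B).exists_bound_of_continuous ((app pdx l f').slice_cont B)
    refine ⟨C, fun a x => ?_⟩
    have e : ∀ c : ℝ, app pdx l (c • f') = c • app pdx l f' := fun c => app_smul pdx l c f'
    rw [e, SF.smul_ev, abs_mul, abs_of_pos a.2.e0, mul_comm]
    exact mul_le_mul_of_nonneg_right (hC x) a.2.e0.le
  exact this.congr fun a x => by rw [SF.smul_ev, h]

/-- All derivatives of the solutions are `O(ε)` on `t = B`. -/
lemma Sm_W (hf : ∀ j, XS (f j)) (hg : ∀ j, XS (g j)) (m : ℕ) (j) : Sm B f g (m + 1) (fun a => a.1.2 j) := by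
  induction m generalizing j with
  | zero => exact ⟨Sm0_data (hf j) fun a x => a.2.i0 j x, Sm0_data (hg j) fun a x => a.2.i1 j x⟩
  | succ m ih =>
    refine ⟨(ih j).1, (ih j).2.zero, ?_⟩
    have hp : ∀ k, Sm B f g m (fun a => pd 0 (a.1.2 k)) := fun k => (ih k).2
    refine ((((((ih j).mono).pdx 0).pdx 0).add ((((ih j).mono).pdx 1).pdx 1)).add
      ((((hp (j + 1)).mul (hp (j + 1))).mul (hp j)).neg)).congr fun a p hp => ?_
    have := a.2.sol.pde j p hp
    simp only [box, SF.sub_ev] at this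
    simp only [SF.add_ev, SF.neg_ev, SF.mul_ev]
    show (pd 1 (pd 1 _)).1 p + (pd 2 (pd 2 _)).1 p + _ = _
    linarith

/-- Each fixed derivative is `O(ε)` at the initial time, uniformly over all solutions. -/
lemma jets (hf : ∀ j, XS (f j)) (hg : ∀ j, XS (g j)) (j) (l : List (Fin 3)) :
    ∃ C, ∀ ε W, Dat B f g ε W → ∀ x, |(app pd l (W j)).1 (B, x)| ≤ C * ε := by
  have key : ∀ (l : List (Fin 3)) (F : Idx B f g → SF), Sm B f g l.length F →
      ∃ C, ∀ a x, |(app pd l (F a)).1 (B, x)| ≤ C * a.1.1 := by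
    intro l
    induction l with
    | nil => intro F hF; exact hF []
    | cons i l ih => intro F hF; exact ih _ (hF.pd i)
  obtain ⟨C, hC⟩ := key l _ (Sm_W hf hg l.length j).mono
  exact ⟨C, fun ε W h x => hC ⟨(ε, W), h⟩ x⟩

/-- All derivatives of order at most `m` are `O(ε)` at the initial time, with one constant. -/
lemma jets_unif (hf : ∀ j, XS (f j)) (hg : ∀ j, XS (g j)) (m : ℕ) :
    ∃ C, 0 ≤ C ∧ ∀ ε W, Dat B f g ε W → ∀ j (l : List (Fin 3)), l.length ≤ m → ∀ x,
      |(app pd l (W j)).1 (B, x)| ≤ C * ε := by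
  choose C hC using fun (j : Fin 2) (l : List (Fin 3)) => jets (B := B) hf hg j l
  refine ⟨∑ j, ∑ l ∈ wd (Fin 3) m, |C j l|, by positivity, fun ε W h j l hl x => ?_⟩
  refine (hC j l ε W h x).trans (mul_le_mul_of_nonneg_right ?_ h.e0.le)
  refine (le_abs_self _).trans ?_
  refine (Finset.single_le_sum (f := fun l => |C j l|) (fun l _ => abs_nonneg _) (mem_wd.2 hl)).trans ?_
  exact Finset.single_le_sum (f := fun j => ∑ l ∈ wd (Fin 3) m, |C j l|)
    (fun j _ => Finset.sum_nonneg fun l _ => abs_nonneg _) (Finset.mem_univ j)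
end

/-! ### Deforming the initial plane into a hyperboloid -/

/-- A family of graphs deforming the plane `t = B` (parameter `0`) into the hyperboloid
`t = √(B² + r²)` (parameter `π / 2`). -/
structure Bend (B : ℝ) (Φ : SF) : Prop where
  hB : 2 ≤ B
  ge : ∀ p, B ≤ Φ.1 p
  le : ∀ p, Φ.1 p ≤ √(B ^ 2 + p.2.1 ^ 2 + p.2.2 ^ 2)
  slope : ∀ p, ((pd 1 Φ).1 p ^ 2 + (pd 2 Φ).1 p ^ 2) * (B ^ 2 + p.2.1 ^ 2 + p.2.2 ^ 2)
    ≤ p.2.1 ^ 2 + p.2.2 ^ 2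
  mixed : ∀ p, |(pd 2 (pd 1 Φ)).1 p| ≤ 1
  speed : ∀ p, |(pd 0 Φ).1 p| ≤ √(B ^ 2 + p.2.1 ^ 2 + p.2.2 ^ 2)
  start : ∀ x, Φ.1 (0, x) = B
  last : ∀ x, Φ.1 (π / 2, x) = √(B ^ 2 + x.1 ^ 2 + x.2 ^ 2)

/-- The family is `Φ = B + sin² τ (√(B² + r²) - B)`. -/
lemma exists_bend {B : ℝ} (hB : 2 ≤ B) : ∃ Φ, Bend B Φ := by
  obtain ⟨Q, hQ⟩ : ∃ Q : SF, Q = (B ^ 2) • 1 + cX 0 ^ 2 + cX 1 ^ 2 := ⟨_, rfl⟩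
  have hQe : ∀ p, Q.1 p = B ^ 2 + p.2.1 ^ 2 + p.2.2 ^ 2 := fun p => by simp [hQ]
  have hQp : ∀ p, 0 < Q.1 p := fun p => by rw [hQe]; positivity
  obtain ⟨N, hN⟩ : ∃ N, N = SF.sqrt Q hQp := ⟨_, rfl⟩
  have hN2 : N ^ 2 = Q := hN ▸ SF.sqrt_sq Q hQp
  have hNp : ∀ p, 0 < N.1 p := hN ▸ SF.sqrt_pos Q hQp
  have hNe : ∀ p, N.1 p = √(B ^ 2 + p.2.1 ^ 2 + p.2.2 ^ 2) := fun p => by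
    rw [hN, SF.sqrt_ev, hQe]
  obtain ⟨P, hP⟩ : ∃ P, P * N = 1 := ⟨_, SF.inv_mul N hNp⟩
  have hs : ContDiff ℝ ∞ (fun s : ℝ => sin s ^ 2) := Real.contDiff_sin.pow 2
  obtain ⟨S, hS⟩ : ∃ S, S = SF.comp _ hs cT := ⟨_, rfl⟩
  have hSe : ∀ p, S.1 p = sin p.1 ^ 2 := fun p => by rw [hS, SF.comp_ev]; rfl
  have S0 : ∀ p, (pd 0 S).1 p = 2 * sin p.1 * cos p.1 := fun p => by
    rw [hS, SF.pd_comp, pd0_T, mul_one, SF.comp_ev]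
    have : deriv (fun s : ℝ => sin s ^ 2) p.1 = 2 * sin p.1 * cos p.1 := by
      have := (Real.hasDerivAt_sin p.1).pow 2
      exact this.deriv.trans (by norm_num)
    exact this
  have S1 : pd 1 S = 0 := by rw [hS, SF.pd_comp, pd1_T, mul_zero]
  have S2 : pd 2 S = 0 := by rw [hS, SF.pd_comp, pd2_T, mul_zero]
  have N0 : pd 0 N = 0 := by
    rw [SF.pd_root hN2 hP, hQ]; simp [pd_add, pd_sq, pd_smul, pd_one]
  have N1 : pd 1 N = P * cX 0 := by
    rw [SF.pd_root hN2 hP, hQ]; ext p; simp [pd_add, pd_sq, pd_smul, pd_one]; ring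
  have N2 : pd 2 N = P * cX 1 := by
    rw [SF.pd_root hN2 hP, hQ]; ext p; simp [pd_add, pd_sq, pd_smul, pd_one]; ring
  have P2 : pd 2 P = - P ^ 2 * pd 2 N := by
    have h1 : pd 2 (P * N) = 0 := by rw [hP, pd_one]
    rw [pd_mul] at h1
    linear_combination P * h1 - (pd 2 P) * hP
  have hPe : ∀ p, P.1 p * N.1 p = 1 := fun p => by
    have := congrArg (fun g : SF => g.1 p) hP
    simpa using this
  have hN2e : ∀ p, N.1 p ^ 2 = B ^ 2 + p.2.1 ^ 2 + p.2.2 ^ 2 := fun p => by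
    rw [← hQe, ← hN2]; rfl
  have s0 : ∀ p : ℝ × ℝ × ℝ, 0 ≤ sin p.1 ^ 2 := fun p => sq_nonneg _
  have s1 : ∀ p : ℝ × ℝ × ℝ, sin p.1 ^ 2 ≤ 1 := fun p => Real.sin_sq_le_one _
  have hNB : ∀ p, B ≤ N.1 p := fun p => by
    have := hN2e p; have := hNp p
    nlinarith [sq_nonneg p.2.1, sq_nonneg p.2.2]
  obtain ⟨Φ, hΦ⟩ : ∃ Φ : SF, Φ = B • 1 + S * (N - B • 1) := ⟨_, rfl⟩
  have Φe : ∀ p, Φ.1 p = B + sin p.1 ^ 2 * (N.1 p - B) := fun p => by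
    rw [hΦ]; simp [hSe]
  have Φ0 : ∀ p, (pd 0 Φ).1 p = (2 * sin p.1 * cos p.1) * (N.1 p - B) := fun p => by
    rw [hΦ, ← S0]; simp [pd_add, pd_mul, pd_sub, pd_smul, pd_one, N0]; ring
  have Φ1 : pd 1 Φ = S * (P * cX 0) := by
    rw [hΦ, ← N1]; simp [pd_add, pd_mul, pd_sub, pd_smul, pd_one, S1]
  have Φ2 : pd 2 Φ = S * (P * cX 1) := by
    rw [hΦ, ← N2]; simp [pd_add, pd_mul, pd_sub, pd_smul, pd_one, S2]
  have Φ12 : pd 2 (pd 1 Φ) = - (S * (P ^ 3 * (cX 0 * cX 1))) := by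
    rw [Φ1]; simp only [pd_mul, S2, P2, N2, pd2_X0]; ring
  refine ⟨Φ, hB, fun p => ?_, fun p => ?_, fun p => ?_, fun p => ?_, fun p => ?_, fun x => ?_, fun x => ?_⟩
  · rw [Φe]; nlinarith [s0 p, hNB p]
  · rw [Φe, ← hNe]; nlinarith [s1 p, hNB p]
  · rw [Φ1, Φ2, ← hN2e]
    simp only [SF.mul_ev, hSe]
    have e := hPe p
    have a := s0 p
    have b := s1 p
    have e1 : (cX 0).1 p = p.2.1 := rfl
    have e2 : (cX 1).1 p = p.2.2 := rfl
    rw [e1, e2]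
    generalize sin p.1 ^ 2 = s at *
    have : ((s * (P.1 p * p.2.1)) ^ 2 + (s * (P.1 p * p.2.2)) ^ 2) * N.1 p ^ 2
      = s ^ 2 * (p.2.1 ^ 2 + p.2.2 ^ 2) := by
      linear_combination s ^ 2 * (p.2.1 ^ 2 + p.2.2 ^ 2) * (P.1 p * N.1 p + 1) * e
    rw [this]
    have : s ^ 2 ≤ 1 := by nlinarith
    nlinarith [sq_nonneg p.2.1, sq_nonneg p.2.2]
  · rw [Φ12]
    simp only [SF.neg_ev, SF.mul_ev, SF.pow_ev, hSe, abs_neg]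
    have e := hPe p
    have e1 : (cX 0).1 p = p.2.1 := rfl
    have e2 : (cX 1).1 p = p.2.2 := rfl
    rw [e1, e2, abs_mul, abs_of_nonneg (s0 p)]
    have hpp : 0 < P.1 p := by
      have := hNp p
      by_contra h; nlinarith
    have h3 : |p.2.1 * p.2.2| ≤ N.1 p ^ 2 := by
      rw [hN2e, abs_le]
      constructor <;> nlinarith [sq_nonneg (p.2.1 + p.2.2), sq_nonneg (p.2.1 - p.2.2), sq_nonneg p.2.1, sq_nonneg p.2.2]
    have hP1 : P.1 p ≤ 1 := by
      have := hNB p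
      nlinarith
    have h4 : |P.1 p ^ 3 * (p.2.1 * p.2.2)| ≤ 1 := by
      rw [abs_mul, abs_of_pos (by positivity)]
      calc _ ≤ P.1 p ^ 3 * N.1 p ^ 2 := mul_le_mul_of_nonneg_left h3 (by positivity)
        _ = P.1 p := by linear_combination P.1 p * (P.1 p * N.1 p + 1) * e
        _ ≤ 1 := hP1
    exact mul_le_one₀ (s1 p) (abs_nonneg _) h4
  · rw [Φ0, ← hNe, abs_mul, abs_of_nonneg (sub_nonneg.2 (hNB p)), ← Real.sin_two_mul]
    have := Real.abs_sin_le_one (2 * p.1)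
    have := hNB p
    nlinarith [abs_nonneg (sin (2 * p.1))]
  · rw [Φe]; simp
  · rw [Φe, hNe]; simp

lemma sI_le_of_bound {R : ℝ} {f : SF} {τ K : ℝ} (hf : XS f) (hK : ∀ x, f.1 (τ, x) ≤ K)
    (h0 : ∀ x, R < ‖x‖ → f.1 (τ, x) = 0) :
    sI τ f ≤ K * (volume.real (Metric.closedBall (0 : ℝ × ℝ) R)) := by
  have hi : Integrable ((Metric.closedBall (0 : ℝ × ℝ) R).indicator fun _ => K) :=
    (integrable_indicator_iff Metric.isClosed_closedBall.measurableSet).2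
      (integrableOn_const (isCompact_closedBall _ _).measure_lt_top.ne)
  have h := integral_mono (hf.int τ) hi (fun x => by
    by_cases hx : x ∈ Metric.closedBall (0 : ℝ × ℝ) R
    · rw [Set.indicator_of_mem hx]; exact hK x
    · rw [Set.indicator_of_notMem hx, h0 x (by simpa using hx)])
  refine h.trans_eq ?_
  rw [integral_indicator Metric.isClosed_closedBall.measurableSet, setIntegral_const, smul_eq_mul, mul_comm]

lemma app_pd_eq_half {B : ℝ} {f g : SF} (h : ∀ p, B ≤ p.1 → f.1 p = g.1 p) (l) (p : ℝ × ℝ × ℝ)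
    (hp : B ≤ p.1) : (app pd l f).1 p = (app pd l g).1 p := by
  have := app_mem pd (P := fun f => ∀ p : ℝ × ℝ × ℝ, B ≤ p.1 → f.1 p = 0) (fun i w hw p hp => pd_zero_half hw i p hp) l
    (f - g) (fun p hp => by rw [SF.sub_ev, h p hp, sub_self]) p hp
  rwa [app_sub, SF.sub_ev, sub_eq_zero] at this

/-! ### Energy growth along the deformation -/

lemma pd_two (i) : pd i (2 : SF) = 0 := by
  rw [show (2 : SF) = 1 + 1 by norm_num, pd_add, pd_one, add_zero]

lemma Sol.ovp {B : ℝ} {W : Fin 2 → SF} (h : Sol B W) (j l) : OV B (app pd l (W j)) :=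
  (h.ov j).app_pd l

lemma sub_one_sq {r N B : ℝ} (hN : N ^ 2 = B ^ 2 + r ^ 2) (hr : 0 ≤ r) (hB : 2 ≤ B) (hN0 : 0 ≤ N)
    (h : r ≤ N - 1) : N ≤ B ^ 2 ∧ r ≤ B ^ 2 := by
  have h1 : r ≤ (B ^ 2 - 1) / 2 := by nlinarith
  have h2 : N ≤ r + B := by nlinarith
  constructor <;> nlinarith

namespace Bend
variable {B : ℝ} {Φ : SF}

lemma XSb (H : Bend B Φ) {f : SF} (hf : OV B f) : XS (pull Φ f) :=
  XS_pull H.ge (fun p => by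
    have h1 := H.le p
    have h2 := H.ge p
    have h3 := H.hB
    have h4 : √(B ^ 2 + p.2.1 ^ 2 + p.2.2 ^ 2) ^ 2 = B ^ 2 + p.2.1 ^ 2 + p.2.2 ^ 2 := Real.sq_sqrt (by positivity)
    nlinarith [sq_nonneg p.1]) hf

/-- Off the ball on which the slope is strictly below one, everything vanishes. -/
lemma supp (H : Bend B Φ) (p : ℝ × ℝ × ℝ) : (∀ f, OV B f → (pull Φ f).1 p = 0) ∨
    (√(B ^ 2 + p.2.1 ^ 2 + p.2.2 ^ 2) ≤ B ^ 2 ∧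
      √(p.2.1 ^ 2 + p.2.2 ^ 2) ≤ √(B ^ 2 + p.2.1 ^ 2 + p.2.2 ^ 2) - 1 ∧ √(p.2.1 ^ 2 + p.2.2 ^ 2) ≤ B ^ 2) := by
  by_cases h : Φ.1 p - 1 < √(p.2.1 ^ 2 + p.2.2 ^ 2)
  · exact Or.inl fun f hf => hf.at_B (H.ge p) h
  · right
    have h1 := H.le p
    have h4 : √(B ^ 2 + p.2.1 ^ 2 + p.2.2 ^ 2) ^ 2 = B ^ 2 + p.2.1 ^ 2 + p.2.2 ^ 2 := Real.sq_sqrt (by positivity)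
    have h5 : √(p.2.1 ^ 2 + p.2.2 ^ 2) ^ 2 = p.2.1 ^ 2 + p.2.2 ^ 2 := Real.sq_sqrt (by positivity)
    have := sub_one_sq (by rw [h4, h5]; ring) (Real.sqrt_nonneg _) H.hB (Real.sqrt_nonneg _)
      (show √(p.2.1 ^ 2 + p.2.2 ^ 2) ≤ √(B ^ 2 + p.2.1 ^ 2 + p.2.2 ^ 2) - 1 by linarith)
    exact ⟨this.1, by linarith, this.2⟩

lemma slope_le (H : Bend B Φ) (p) : (pd 1 Φ).1 p ^ 2 + (pd 2 Φ).1 p ^ 2 ≤ 1 := by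
  have h1 := H.slope p
  have h2 := H.hB
  have : 0 < B ^ 2 + p.2.1 ^ 2 + p.2.2 ^ 2 := by positivity
  by_contra h
  push Not at h
  nlinarith [sq_nonneg B]

lemma slope1 (H : Bend B Φ) (p) : |(pd 1 Φ).1 p| ≤ 1 := by
  rw [← sq_le_one_iff_abs_le_one]; nlinarith [H.slope_le p, sq_nonneg ((pd 2 Φ).1 p)]
lemma slope2 (H : Bend B Φ) (p) : |(pd 2 Φ).1 p| ≤ 1 := by
  rw [← sq_le_one_iff_abs_le_one]; nlinarith [H.slope_le p, sq_nonneg ((pd 1 Φ).1 p)]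

lemma ed_ev (w : SF) (p) : (ed Φ w).1 p = 1/2 * ((pull Φ (pd 0 w)).1 p ^ 2 + (pull Φ (pd 1 w)).1 p ^ 2
    + (pull Φ (pd 2 w)).1 p ^ 2) + (pull Φ (pd 0 w)).1 p * ((pull Φ (pd 1 w)).1 p * (pd 1 Φ).1 p
    + (pull Φ (pd 2 w)).1 p * (pd 2 Φ).1 p) := rfl

lemma gradSq_ev (w : SF) (p) : (pull Φ (gradSq w)).1 p = (pull Φ (pd 0 w)).1 p ^ 2 + (pull Φ (pd 1 w)).1 p ^ 2
    + (pull Φ (pd 2 w)).1 p ^ 2 := rfl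

lemma quad_low {a b c m n v : ℝ} (hv : 0 ≤ v) (hv1 : v ≤ 1) (h : m ^ 2 + n ^ 2 ≤ v ^ 2) :
    1/2 * (1 - v) * (a ^ 2 + b ^ 2 + c ^ 2) ≤ 1/2 * (a ^ 2 + b ^ 2 + c ^ 2) + a * (b * m + c * n) := by
  have h1 : (b * m + c * n) ^ 2 ≤ (b ^ 2 + c ^ 2) * v ^ 2 := by
    have : (b * m + c * n) ^ 2 ≤ (b ^ 2 + c ^ 2) * (m ^ 2 + n ^ 2) := by nlinarith [sq_nonneg (b * n - c * m)]
    nlinarith [sq_nonneg b, sq_nonneg c]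
  rcases hv.eq_or_lt with rfl | hv
  · have : b * m + c * n = 0 := by nlinarith
    rw [this]; linarith
  · have h2 : 0 ≤ (v * a + (b * m + c * n)) ^ 2 := sq_nonneg _
    have h3 : v * (v * (a ^ 2 + b ^ 2 + c ^ 2) + 2 * (a * (b * m + c * n))) ≥ 0 := by nlinarith
    have h4 := nonneg_of_mul_nonneg_right h3 hv
    linarith

lemma ed_nonneg (H : Bend B Φ) (w p) : 0 ≤ (ed Φ w).1 p := by
  rw [ed_ev]
  have := quad_low (a := (pull Φ (pd 0 w)).1 p) (b := (pull Φ (pd 1 w)).1 p) (c := (pull Φ (pd 2 w)).1 p)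
    zero_le_one le_rfl ((H.slope_le p).trans_eq (one_pow 2).symm)
  linarith

/-- The energy density controls the full gradient: the functions vanish outside a ball on which the slope of
the graphs stays away from one. -/
lemma ed_ge (H : Bend B Φ) (w p) (hw : OV B w) : (pull Φ (gradSq w)).1 p ≤ 2 * B ^ 2 * (ed Φ w).1 p := by
  rcases H.supp p with h | ⟨h1, h2, h3⟩
  · have := H.ed_nonneg w p
    rw [gradSq_ev, h _ (hw.pd 0), h _ (hw.pd 1), h _ (hw.pd 2)]
    simp; positivity
  · obtain ⟨N, hN⟩ : ∃ N, N = √(B ^ 2 + p.2.1 ^ 2 + p.2.2 ^ 2) := ⟨_, rfl⟩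
    obtain ⟨r, hr⟩ : ∃ r, r = √(p.2.1 ^ 2 + p.2.2 ^ 2) := ⟨_, rfl⟩
    have hB := H.hB
    have h4 : N ^ 2 = B ^ 2 + p.2.1 ^ 2 + p.2.2 ^ 2 := hN ▸ Real.sq_sqrt (by positivity)
    have h5 : r ^ 2 = p.2.1 ^ 2 + p.2.2 ^ 2 := hr ▸ Real.sq_sqrt (by positivity)
    have h6 : 0 < N := hN ▸ Real.sqrt_pos.2 (by positivity)
    have h7 : 0 ≤ r := hr ▸ Real.sqrt_nonneg _
    have hs := H.slope p
    rw [← hN] at h1 h2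
    rw [← hr] at h2 h3
    rw [← h4, ← h5] at hs
    have hv : (pd 1 Φ).1 p ^ 2 + (pd 2 Φ).1 p ^ 2 ≤ (r / N) ^ 2 := by
      rw [div_pow, le_div_iff₀ (by positivity)]; exact hs
    have hv1 : r / N ≤ 1 := by rw [div_le_one h6]; linarith
    have := quad_low (a := (pull Φ (pd 0 w)).1 p) (b := (pull Φ (pd 1 w)).1 p) (c := (pull Φ (pd 2 w)).1 p)
      (by positivity) hv1 hv
    rw [← ed_ev, ← gradSq_ev] at this
    have h8 : 1 / B ^ 2 ≤ 1 - r / N := by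
      rw [div_le_iff₀ (by positivity), sub_mul, div_mul_eq_mul_div, le_sub_iff_add_le, ← le_sub_iff_add_le',
        div_le_iff₀ h6]
      nlinarith
    have h9 : 0 ≤ (pull Φ (gradSq w)).1 p := by rw [gradSq_ev]; positivity
    have h10 := mul_le_mul_of_nonneg_right h8 h9
    have h11 : (pull Φ (gradSq w)).1 p = B ^ 2 * (1 / B ^ 2 * (pull Φ (gradSq w)).1 p) := by field_simp
    rw [h11]
    have : 1 / B ^ 2 * (pull Φ (gradSq w)).1 p ≤ 2 * (ed Φ w).1 p := by linarith
    nlinarith [sq_nonneg B]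

lemma ed_le (H : Bend B Φ) (w p) : (ed Φ w).1 p ≤ 2 * (pull Φ (gradSq w)).1 p := by
  rw [ed_ev, gradSq_ev]
  have h1 := H.slope_le p
  generalize (pull Φ (pd 0 w)).1 p = a
  generalize (pull Φ (pd 1 w)).1 p = b
  generalize (pull Φ (pd 2 w)).1 p = c
  generalize (pd 1 Φ).1 p = m at *
  generalize (pd 2 Φ).1 p = n at *
  have h0 : (b * m + c * n) ^ 2 ≤ b ^ 2 + c ^ 2 := by
    have : (b * m + c * n) ^ 2 ≤ (b ^ 2 + c ^ 2) * (m ^ 2 + n ^ 2) := by nlinarith [sq_nonneg (b * n - c * m)]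
    nlinarith [sq_nonneg b, sq_nonneg c]
  nlinarith [sq_nonneg (a - (b * m + c * n)), sq_nonneg a]
end Bend

/-- Bound for `∂₁∂₂(f²)` restricted to a graph, where `m`, `n`, `q` stand for first and second derivatives
of the graph function. -/
lemma sob_alg {k f f0 f1 f2 f00 f01 f02 f12 m n q : ℝ} (a : |f| ≤ k) (a0 : |f0| ≤ k) (a1 : |f1| ≤ k) (a2 : |f2| ≤ k)
    (a00 : |f00| ≤ k) (a01 : |f01| ≤ k) (a02 : |f02| ≤ k) (a12 : |f12| ≤ k) (hm : |m| ≤ 1) (hn : |n| ≤ 1) (hq : |q| ≤ 1) :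
    |2 * (f * (f12 + n * f01 + (m * (f02 + n * f00) + f0 * q)) + (f1 + m * f0) * (f2 + n * f0))| ≤ 34 * k ^ 2 := by
  have hk : 0 ≤ k := (abs_nonneg _).trans a
  have pr : ∀ {x y u v : ℝ}, |x| ≤ u → |y| ≤ v → |x * y| ≤ u * v := fun {x y u v} hx hy => by
    rw [abs_mul]; exact mul_le_mul hx hy (abs_nonneg _) ((abs_nonneg _).trans hx)
  have ad : ∀ {x y u v : ℝ}, |x| ≤ u → |y| ≤ v → |x + y| ≤ u + v := fun {x y u v} hx hy =>
    (abs_add_le x y).trans (add_le_add hx hy)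
  have := pr (show |(2:ℝ)| ≤ 2 by norm_num) (ad (pr a (ad (ad a12 (pr hn a01)) (ad (pr hm (ad a02 (pr hn a00))) (pr a0 hq))))
    (pr (ad a1 (pr hm a0)) (ad a2 (pr hn a0))))
  refine this.trans ?_
  nlinarith

/-- The speed `∂_τ Φ` is at most `√(B² + r²)`, hence bounded where the functions do not vanish. -/
lemma speed_bound {B : ℝ} {Φ : SF} (H : Bend B Φ) {a b : SF} (ha : OV B a) (p) :
    |(pd 0 Φ).1 p * ((pull Φ a).1 p * (pull Φ b).1 p)| ≤ B ^ 2 * ((pull Φ a).1 p ^ 2 + (pull Φ b).1 p ^ 2) := by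
  rcases H.supp p with h0 | ⟨h1, -, -⟩
  · rw [h0 _ ha]; simp; positivity
  · rw [abs_mul]
    have h3 := (H.speed p).trans h1
    generalize (pull Φ a).1 p = x
    generalize (pull Φ b).1 p = y
    have h4 : |x * y| ≤ x ^ 2 + y ^ 2 := by
      rw [abs_le]; constructor <;> nlinarith [sq_nonneg (x - y), sq_nonneg (x + y)]
    exact mul_le_mul h3 h4 (abs_nonneg _) (sq_nonneg B)

/-- Energy density of all derivatives up to order three, with a zeroth-order term. -/
def totD (Φ : SF) (W : Fin 2 → SF) : SF :=
  ∑ j, (∑ l ∈ wd (Fin 3) 3, ed Φ (app pd l (W j)) + pull Φ (W j) ^ 2)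

section
variable {B : ℝ} {Φ : SF} {W : Fin 2 → SF} (H : Bend B Φ) (h : Sol B W)
include H

lemma ed_le_tot (p j) {l : List (Fin 3)} (hl : l.length ≤ 3) :
    (ed Φ (app pd l (W j))).1 p ≤ (totD Φ W).1 p := by
  rw [totD, SF.sum_ev]
  simp only [SF.add_ev, SF.pow_ev, SF.sum_ev]
  have a : (ed Φ (app pd l (W j))).1 p ≤ ∑ l ∈ wd (Fin 3) 3, (ed Φ (app pd l (W j))).1 p :=
    Finset.single_le_sum (f := fun l => (ed Φ (app pd l (W j))).1 p) (fun i _ => H.ed_nonneg _ p) (mem_wd.2 hl)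
  have b := Finset.single_le_sum (f := fun j => ∑ l ∈ wd (Fin 3) 3, (ed Φ (app pd l (W j))).1 p + (pull Φ (W j)).1 p ^ 2)
    (s := Finset.univ)
    (fun i _ => add_nonneg (Finset.sum_nonneg fun l _ => H.ed_nonneg _ p) (sq_nonneg _)) (Finset.mem_univ j)
  nlinarith [sq_nonneg ((pull Φ (W j)).1 p)]

lemma u_le_tot (p j) : (pull Φ (W j)).1 p ^ 2 ≤ (totD Φ W).1 p := by
  rw [totD, SF.sum_ev]
  simp only [SF.add_ev, SF.pow_ev, SF.sum_ev]
  have a : 0 ≤ ∑ l ∈ wd (Fin 3) 3, (ed Φ (app pd l (W j))).1 p := Finset.sum_nonneg fun l _ => H.ed_nonneg _ p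
  have b := Finset.single_le_sum (f := fun j => ∑ l ∈ wd (Fin 3) 3, (ed Φ (app pd l (W j))).1 p + (pull Φ (W j)).1 p ^ 2)
    (s := Finset.univ)
    (fun i _ => add_nonneg (Finset.sum_nonneg fun l _ => H.ed_nonneg _ p) (sq_nonneg _)) (Finset.mem_univ j)
  linarith

lemma tot_nonneg (p) : 0 ≤ (totD Φ W).1 p := (sq_nonneg _).trans (u_le_tot H p 0)

include h
lemma word_le_tot (p j) {l : List (Fin 3)} (hl : l.length ≤ 4) :
    (pull Φ (app pd l (W j))).1 p ^ 2 ≤ 2 * B ^ 2 * (totD Φ W).1 p := by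
  have hB := H.hB
  rcases List.eq_nil_or_concat' l with rfl | ⟨l', i, rfl⟩
  · have := u_le_tot (W := W) H p j
    have := tot_nonneg (W := W) H p
    simp only [app_nil]; nlinarith [sq_nonneg B, mul_le_mul hB hB (by norm_num) (by linarith)]
  · rw [app_append, app_cons, app_nil]
    have h1 : (pull Φ (pd i (app pd l' (W j)))).1 p ^ 2 ≤ (pull Φ (gradSq (app pd l' (W j)))).1 p :=
      gradSq_ge _ i _
    have h2 := H.ed_ge _ p (Sol.ovp h j l')
    have h3 := ed_le_tot (W := W) H p j (l := l') (by simp at hl; omega)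
    nlinarith [sq_nonneg B]

lemma XS_tot : XS (totD Φ W) := by
  refine XS.sum fun j _ => (XS.sum fun l _ => XS_ed fun i => H.XSb ((Sol.ovp h j l).pd i)).add ?_
  exact (H.XSb (h.ov j)).pow two_ne_zero

/-- Sobolev inequality on the slices. -/
lemma bend_sobolev (τ x j) {l : List (Fin 3)} (hl : l.length ≤ 2) :
    (pull Φ (app pd l (W j))).1 (τ, x) ^ 2 ≤ 68 * B ^ 2 * sI τ (totD Φ W) := by
  obtain ⟨w, hw⟩ : ∃ w, w = app pd l (W j) := ⟨_, rfl⟩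
  have hwo : OV B w := hw ▸ Sol.ovp h j l
  rw [← hw]
  have key := sobolev_base (F := pull Φ w ^ 2) (G := (68 * B ^ 2) • totD Φ W) ((H.XSb hwo).pow two_ne_zero)
    ((XS_tot H h).smul _) (τ := τ) (fun y => ?_) x
  · rw [sI_smul] at key
    exact (le_abs_self _).trans key
  · obtain ⟨K, hK⟩ : ∃ K, K = 2 * B ^ 2 * (totD Φ W).1 (τ, y) := ⟨_, rfl⟩
    have b : ∀ l' : List (Fin 3), l'.length ≤ 2 → (pull Φ (app pd l' w)).1 (τ, y) ^ 2 ≤ K := fun l' hl' => by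
      rw [hw, ← app_append, hK]; exact word_le_tot H h _ j (by simp; omega)
    have b0 := b [] (by simp)
    have b1 := b [0] (by simp)
    have b2 := b [1] (by simp)
    have b3 := b [2] (by simp)
    have b00 := b [0, 0] (by simp)
    have b01 := b [0, 1] (by simp)
    have b02 := b [0, 2] (by simp)
    have b12 := b [1, 2] (by simp)
    have e : (68 * B ^ 2) • totD Φ W = (34 : ℝ) • ((2 * B ^ 2) • totD Φ W) := by rw [smul_smul]; ring_nf
    have e2 : ((68 * B ^ 2) • totD Φ W).1 (τ, y) = 34 * K := by
      rw [e, SF.smul_ev, SF.smul_ev, hK]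
    rw [e2]
    simp only [pd_sq, pd_mul, pd1_pull, pd2_pull, pd_add, SF.mul_ev, SF.add_ev, SF.two_ev, app_nil, app_cons,
      pd_comm 2 0, pd_comm 1 0, pd_comm 2 1] at *
    have s1 := H.slope1 (τ, y)
    have s2 := H.slope2 (τ, y)
    have s3 := H.mixed (τ, y)
    rw [pd_comm 2 1] at s3
    have hK0 : 0 ≤ K := (sq_nonneg _).trans b0
    obtain ⟨k, hk, hk0⟩ : ∃ k, k ^ 2 = K ∧ 0 ≤ k := ⟨√K, Real.sq_sqrt hK0, Real.sqrt_nonneg _⟩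
    subst hk
    have ab : ∀ {z : ℝ}, z ^ 2 ≤ k ^ 2 → |z| ≤ k := fun h => abs_le_of_sq_le_sq h hk0
    convert sob_alg (ab b0) (ab b1) (ab b2) (ab b3) (ab b00) (ab b01) (ab b02) (ab b12) s1 s2 s3 using 2
    rw [pd_two, SF.zero_ev]
    ring

/-- The cubic nonlinearity after at most three derivatives: two factors are estimated in the sup norm and
the third by the energy density. -/
lemma box_word_bound (τ x j) {l : List (Fin 3)} (hl : l.length ≤ 3) :
    (pull Φ (box (app pd l (W j)))).1 (τ, x) ^ 2 ≤
      1000 * ((68 * B ^ 2 * sI τ (totD Φ W)) ^ 2 * (2 * B ^ 2 * (totD Φ W).1 (τ, x))) := by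
  obtain ⟨q, hq⟩ : ∃ q : ℝ × ℝ × ℝ, q = (Φ.1 (τ, x), x) := ⟨_, rfl⟩
  have hqB : B ≤ q.1 := by rw [hq]; exact H.ge _
  have S : ∀ j (l : List (Fin 3)), l.length ≤ 2 → (app pd l (W j)).1 q ^ 2 ≤ 68 * B ^ 2 * sI τ (totD Φ W) :=
    fun j l hl => by rw [hq]; exact bend_sobolev H h τ x j hl
  have T : ∀ j (l : List (Fin 3)), l.length ≤ 4 → (app pd l (W j)).1 q ^ 2 ≤ 2 * B ^ 2 * (totD Φ W).1 (τ, x) :=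
    fun j l hl => by rw [hq]; exact word_le_tot H h (τ, x) j hl
  obtain ⟨s, hs⟩ : ∃ s, s = 68 * B ^ 2 * sI τ (totD Φ W) := ⟨_, rfl⟩
  obtain ⟨t, ht⟩ : ∃ t, t = 2 * B ^ 2 * (totD Φ W).1 (τ, x) := ⟨_, rfl⟩
  simp only [← hs, ← ht] at S T ⊢
  have s0 : 0 ≤ s := (sq_nonneg _).trans (S 0 [] (by simp))
  have t0 : 0 ≤ t := (sq_nonneg _).trans (T 0 [] (by simp))
  have pr : ∀ {a b c d : ℝ}, a ^ 2 ≤ c → b ^ 2 ≤ d → (a * b) ^ 2 ≤ c * d := fun {a b c d} h1 h2 => by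
    rw [mul_pow]; exact mul_le_mul h1 h2 (sq_nonneg _) ((sq_nonneg _).trans h1)
  have e1 : (pull Φ (box (app pd l (W j)))).1 (τ, x) = (app pd l (box (W j))).1 q := by
    rw [app_comm pd (T := box) box_pd, hq]; rfl
  have e2 : (app pd l (box (W j))).1 q = (app pd l (-(pd 0 (W (j + 1)) * pd 0 (W (j + 1)) * pd 0 (W j)))).1 q := by
    refine app_pd_eq_half (B := B) (fun p hp => ?_) l q hqB
    rw [h.pde j p hp]; simp only [SF.neg_ev, SF.mul_ev]; ring
  rw [e1, e2, app_neg, SF.neg_ev, neg_sq]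
  have key := app_triple pd (J := fun f => f.1 q ^ 2) (fun v w => by
    simp only [SF.add_ev]; nlinarith [sq_nonneg (v.1 q - w.1 q)]) l (pd 0 (W (j + 1))) (pd 0 (W (j + 1))) (pd 0 (W j))
    (s ^ 2 * t) (fun l1 l2 l3 hl' => by
      have z0 : ∀ (j : Fin 2) (l : List (Fin 3)), app pd l (pd 0 (W j)) = app pd (0 :: l) (W j) := fun _ _ => rfl
      simp only [SF.mul_ev, z0]
      by_cases h1 : 2 ≤ l1.length
      · have := pr (pr (T (j + 1) (0 :: l1) (by simp; omega)) (S (j + 1) (0 :: l2) (by simp; omega)))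
          (S j (0 :: l3) (by simp; omega))
        linarith
      by_cases h2 : 2 ≤ l2.length
      · have := pr (pr (S (j + 1) (0 :: l1) (by simp; omega)) (T (j + 1) (0 :: l2) (by simp; omega)))
          (S j (0 :: l3) (by simp; omega))
        linarith
      · have := pr (pr (S (j + 1) (0 :: l1) (by simp; omega)) (S (j + 1) (0 :: l2) (by simp; omega)))
          (T j (0 :: l3) (by simp; omega))
        linarith)
  refine key.trans ?_
  have : (10 : ℝ) ^ l.length ≤ 1000 := by
    calc (10 : ℝ) ^ l.length ≤ 10 ^ 3 := pow_le_pow_right₀ (by norm_num) hl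
      _ = 1000 := by norm_num
  exact mul_le_mul_of_nonneg_right this (by positivity)

end

/-- The differential inequality for the energy. -/
lemma bend_ineq (B : ℝ) : ∃ C, 0 ≤ C ∧ ∀ Φ W, Bend B Φ → Sol B W → ∀ τ, ∃ D, HasDerivAt (fun s => sI s (totD Φ W)) D τ ∧
    D ≤ C * (sI τ (totD Φ W) * (1 + sI τ (totD Φ W) ^ 2)) := by
  obtain ⟨M, hM⟩ : ∃ M : ℝ, M = 8 * B ^ 4 + B ^ 2 * (1000 * ((68 * B ^ 2) ^ 2 * (2 * B ^ 2))) := ⟨_, rfl⟩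
  have hM0 : 0 ≤ M := by rw [hM]; positivity
  refine ⟨2 * (((wd (Fin 3) 3).card + 1) * M), by positivity, fun Φ W H h τ => ?_⟩
  obtain ⟨E, hE⟩ : ∃ E, E = sI τ (totD Φ W) := ⟨_, rfl⟩
  have hE0 : 0 ≤ E := hE ▸ sI_nonneg fun x => tot_nonneg H _
  have X1 : ∀ j l i, XS (pull Φ (pd i (app pd l (W j)))) := fun j l i => H.XSb ((Sol.ovp h j l).pd i)
  have X2 : ∀ j, XS (pull Φ (W j) ^ 2) := fun j => (H.XSb (h.ov j)).pow two_ne_zero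
  have e : (fun s => sI s (totD Φ W)) = fun s => ∑ j, (∑ l ∈ wd (Fin 3) 3, sI s (ed Φ (app pd l (W j))) + sI s (pull Φ (W j) ^ 2)) := by
    funext s
    rw [totD, sI_sum fun j _ => (XS.sum fun l _ => XS_ed (X1 j l)).add (X2 j)]
    refine Finset.sum_congr rfl fun j _ => ?_
    rw [sI_add (XS.sum fun l _ => XS_ed (X1 j l)) (X2 j), sI_sum fun l _ => XS_ed (X1 j l)]
  have d := HasDerivAt.fun_sum (u := Finset.univ) fun (j : Fin 2) _ => (HasDerivAt.fun_sum (u := wd (Fin 3) 3) fun l _ =>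
    hasDerivAt_energy (X1 j l) τ).add (hasDerivAt_sI (X2 j) τ)
  rw [← hE]
  refine ⟨_, e ▸ d, ?_⟩
  have b1 : ∀ j, ∀ l ∈ wd (Fin 3) 3, sI τ (pd 0 Φ * (pull Φ (pd 0 (app pd l (W j))) * pull Φ (box (app pd l (W j)))))
      ≤ M * (E * (1 + E ^ 2)) := fun j l hl => by
    have hl := mem_wd.1 hl
    have : sI τ (pd 0 Φ * (pull Φ (pd 0 (app pd l (W j))) * pull Φ (box (app pd l (W j))))) ≤
        sI τ ((M * (1 + E ^ 2)) • totD Φ W) := by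
      refine sI_mono (((X1 j l 0).mul_right _).mul_left _) ((XS_tot H h).smul _) fun x => ?_
      simp only [SF.mul_ev, SF.smul_ev]
      refine (le_abs_self _).trans ((speed_bound H ((Sol.ovp h j l).pd 0) (τ, x)).trans ?_)
      have a1 := word_le_tot H h (τ, x) j (l := l ++ [0]) (by simp; omega)
      rw [app_append, app_cons, app_nil] at a1
      have a2 := box_word_bound H h τ x j hl
      rw [← hE] at a2
      have t0 := tot_nonneg (W := W) H (τ, x)
      generalize (totD Φ W).1 (τ, x) = t at *
      have := mul_le_mul_of_nonneg_left (add_le_add a1 a2) (sq_nonneg B)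
      refine this.trans ?_
      rw [hM]
      have p1 : 0 ≤ B ^ 4 * t := by positivity
      have p2 : 0 ≤ B ^ 4 * t * E ^ 2 := by positivity
      have p3 : 0 ≤ B ^ 2 * (1000 * ((68 * B ^ 2) ^ 2 * (2 * B ^ 2))) * t := by positivity
      nlinarith
    rw [sI_smul, ← hE] at this
    linarith
  have b2 : ∀ j, sI τ (pd 0 (pull Φ (W j) ^ 2)) ≤ M * (E * (1 + E ^ 2)) := fun j => by
    have : sI τ (pd 0 (pull Φ (W j) ^ 2)) ≤ sI τ ((M * (1 + E ^ 2)) • totD Φ W) := by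
      refine sI_mono ((X2 j).pd 0) ((XS_tot H h).smul _) fun x => ?_
      simp only [SF.mul_ev, SF.smul_ev, pd_sq, pd0_pull, SF.two_ev]
      have a0 := speed_bound H (b := pd 0 (W j)) (h.ov j) (τ, x)
      have a1 := u_le_tot (W := W) H (τ, x) j
      have a2 := word_le_tot H h (τ, x) j (l := [0]) (by simp)
      rw [app_cons, app_nil] at a2
      have t0 := tot_nonneg (W := W) H (τ, x)
      have a3 := (le_abs_self _).trans a0
      have a4 : (pull Φ (W j)).1 (τ, x) ^ 2 ≤ 2 * B ^ 2 * (totD Φ W).1 (τ, x) := word_le_tot H h (τ, x) j (l := []) (by simp)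
      generalize (totD Φ W).1 (τ, x) = t at *
      have := mul_le_mul_of_nonneg_left (add_le_add a4 a2) (sq_nonneg B)
      have p1 : 0 ≤ B ^ 4 * t := by positivity
      have p2 : 0 ≤ B ^ 4 * t * E ^ 2 := by positivity
      have p3 : 0 ≤ B ^ 2 * (1000 * ((68 * B ^ 2) ^ 2 * (2 * B ^ 2))) * t := by positivity
      have p4 : 0 ≤ B ^ 2 * (1000 * ((68 * B ^ 2) ^ 2 * (2 * B ^ 2))) * t * E ^ 2 := by positivity
      have hB := H.hB
      have p5 : 4 * t * B ^ 2 ≤ B ^ 4 * t := by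
        have : 0 ≤ t * B ^ 2 * (B ^ 2 - 4) := mul_nonneg (by positivity) (by nlinarith)
        nlinarith
      rw [hM]
      have e : ((2 * (pull Φ (W j)).1 (τ, x)) * ((pd 0 Φ).1 (τ, x) * (pull Φ (pd 0 (W j))).1 (τ, x)))
        = 2 * ((pd 0 Φ).1 (τ, x) * ((pull Φ (W j)).1 (τ, x) * (pull Φ (pd 0 (W j))).1 (τ, x))) := by ring
      rw [e]
      nlinarith
    rw [sI_smul, ← hE] at this
    linarith
  have b3 : ∀ j ∈ (Finset.univ : Finset (Fin 2)), (∑ l ∈ wd (Fin 3) 3, sI τ (pd 0 Φ * (pull Φ (pd 0 (app pd l (W j))) * pull Φ (box (app pd l (W j)))))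
      + sI τ (pd 0 (pull Φ (W j) ^ 2))) ≤ ((wd (Fin 3) 3).card + 1) * M * (E * (1 + E ^ 2)) := fun j _ => by
    have := Finset.sum_le_card_nsmul _ _ _ (b1 j)
    rw [nsmul_eq_mul] at this
    linarith [b2 j]
  have := Finset.sum_le_card_nsmul _ _ _ b3
  rw [nsmul_eq_mul] at this
  refine this.trans_eq ?_
  simp; ring

/-! ### Smallness of the boosted energy on the initial hyperboloid -/

/-- A quantity satisfying `F' ≤ C (F + F³)` stays comparable to its small initial value. -/
lemma small_gronwall {F : ℝ → ℝ} {C T : ℝ} (hF : ∀ τ, 0 ≤ F τ) (hC : 0 ≤ C) (hT : 0 ≤ T)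
    (hd : ∀ τ, ∃ D, HasDerivAt F D τ ∧ D ≤ C * (F τ * (1 + F τ ^ 2)))
    (h0 : exp (2 * C * T) * F 0 ^ 2 ≤ 1 / 2) : F T ^ 2 ≤ 2 * exp (2 * C * T) * F 0 ^ 2 := by
  choose D hD1 hD2 using hd
  obtain ⟨z, hz⟩ : ∃ z : ℝ → ℝ, z = fun τ => (F τ ^ 2 / (1 + F τ ^ 2)) * exp (-(2 * C * τ)) := ⟨_, rfl⟩
  have hzd : ∀ τ, HasDerivAt z ((2 * F τ * D τ / (1 + F τ ^ 2) ^ 2 - 2 * C * (F τ ^ 2 / (1 + F τ ^ 2))) * exp (-(2 * C * τ))) τ := by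
    intro τ
    have hp : (1 + F τ ^ 2) ≠ 0 := by positivity
    have h1 := ((hD1 τ).pow 2).div (((hD1 τ).pow 2).const_add 1) hp
    have h2 : HasDerivAt (fun τ => exp (-(2 * C * τ))) (exp (-(2 * C * τ)) * (-(2 * C * 1))) τ :=
      (((hasDerivAt_id τ).const_mul (2 * C)).neg).exp
    rw [hz]
    refine (h1.mul h2).congr_deriv ?_
    simp only [Pi.pow_apply, Pi.div_apply]
    field_simp
    push_cast
    ring
  have hz0 : AntitoneOn z (Set.Icc 0 T) := by
    refine antitoneOn_of_deriv_nonpos (convex_Icc 0 T) (fun τ _ => (hzd τ).continuousAt.continuousWithinAt)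
      (fun τ _ => (hzd τ).differentiableAt.differentiableWithinAt) fun τ _ => ?_
    rw [(hzd τ).deriv]
    refine mul_nonpos_of_nonpos_of_nonneg ?_ (exp_pos _).le
    have hp : 0 < (1 + F τ ^ 2) := by positivity
    rw [sub_nonpos, div_le_iff₀ (by positivity)]
    have e : 2 * C * (F τ ^ 2 / (1 + F τ ^ 2)) * (1 + F τ ^ 2) ^ 2 = 2 * F τ * (C * (F τ * (1 + F τ ^ 2))) := by
      field_simp
    rw [e]
    exact mul_le_mul_of_nonneg_left (hD2 τ) (by linarith [hF τ])
  have h1 := hz0 (Set.left_mem_Icc.2 hT) (Set.right_mem_Icc.2 hT) hT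
  rw [hz] at h1
  simp only [mul_zero, neg_zero, exp_zero, mul_one] at h1
  have h2 : F 0 ^ 2 / (1 + F 0 ^ 2) ≤ F 0 ^ 2 := div_le_self (sq_nonneg _) (by nlinarith [sq_nonneg (F 0)])
  obtain ⟨K, hK⟩ : ∃ K, K = exp (2 * C * T) := ⟨_, rfl⟩
  have hKp : 0 < K := hK ▸ exp_pos _
  rw [exp_neg, ← hK] at h1
  rw [← hK] at h0 ⊢
  have h3 : F T ^ 2 / (1 + F T ^ 2) ≤ K * F 0 ^ 2 := by
    have h4 := mul_le_mul_of_nonneg_left (h1.trans h2) hKp.le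
    have : K * (F T ^ 2 / (1 + F T ^ 2) * K⁻¹) = F T ^ 2 / (1 + F T ^ 2) := by field_simp
    linarith
  rw [div_le_iff₀ (by positivity)] at h3
  nlinarith [sq_nonneg (F T)]

section
variable {B : ℝ} {f g : Fin 2 → SF}

/-- The energies on the initial plane are `O(ε²)`. -/
lemma initial_tot (hB : 2 ≤ B) (hf : ∀ j, XS (f j)) (hg : ∀ j, XS (g j)) :
    ∃ C, 0 ≤ C ∧ ∀ ε W Φ, Dat B f g ε W → Bend B Φ → sI 0 (totD Φ W) ≤ C * ε ^ 2 := by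
  obtain ⟨C, hC, hj⟩ := jets_unif (B := B) hf hg 4
  obtain ⟨V, hV⟩ : ∃ V, V = volume.real (Metric.closedBall (0 : ℝ × ℝ) B) := ⟨_, rfl⟩
  have hV0 : 0 ≤ V := hV ▸ measureReal_nonneg
  refine ⟨(2 * ((wd (Fin 3) 3).card * 6 + 1) * C ^ 2) * V, by positivity, fun ε W Φ d H => ?_⟩
  have w : ∀ j l, l.length ≤ 4 → ∀ x, (pull Φ (app pd l (W j))).1 (0, x) ^ 2 ≤ (C * ε) ^ 2 := fun j l hl x => by
    rw [pull_ev, H.start]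
    exact sq_le_sq' (by linarith [(abs_le.1 (hj ε W d j l hl x)).1]) (abs_le.1 (hj ε W d j l hl x)).2
  have := sI_le_of_bound (R := B) (τ := 0) (K := 2 * ((wd (Fin 3) 3).card * 6 + 1) * C ^ 2 * ε ^ 2) (XS_tot H d.sol) (fun x => ?_) (fun x hx => ?_)
  · rw [← hV] at this; linarith
  · rw [totD, SF.sum_ev]
    simp only [SF.add_ev, SF.pow_ev, SF.sum_ev]
    have b1 : ∀ j, ∀ l ∈ wd (Fin 3) 3, (ed Φ (app pd l (W j))).1 (0, x) ≤ 6 * (C * ε) ^ 2 := fun j l hl => by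
      have := mem_wd.1 hl
      refine (H.ed_le _ _).trans ?_
      rw [Bend.gradSq_ev]
      have a0 := w j (l ++ [0]) (by simp; omega) x
      have a1 := w j (l ++ [1]) (by simp; omega) x
      have a2 := w j (l ++ [2]) (by simp; omega) x
      simp only [app_append, app_cons, app_nil] at a0 a1 a2
      linarith
    have b2 : ∀ j ∈ (Finset.univ : Finset (Fin 2)), (∑ l ∈ wd (Fin 3) 3, (ed Φ (app pd l (W j))).1 (0, x) + (pull Φ (W j)).1 (0, x) ^ 2)
        ≤ ((wd (Fin 3) 3).card * 6 + 1) * (C * ε) ^ 2 := fun j _ => by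
      have := Finset.sum_le_card_nsmul _ _ _ (b1 j)
      rw [nsmul_eq_mul] at this
      have := w j [] (by simp) x
      simp only [app_nil] at this
      linarith
    have := Finset.sum_le_card_nsmul _ _ _ b2
    rw [nsmul_eq_mul] at this
    rw [Finset.card_univ, Fintype.card_fin] at this
    push_cast at this
    linarith
  · have hr : B - 1 < √(x.1 ^ 2 + x.2 ^ 2) := by
      have e1 : |x.1| ≤ √(x.1 ^ 2 + x.2 ^ 2) := Real.abs_le_sqrt (by nlinarith [sq_nonneg x.2])
      have e2 : |x.2| ≤ √(x.1 ^ 2 + x.2 ^ 2) := Real.abs_le_sqrt (by nlinarith [sq_nonneg x.1])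
      have : ‖x‖ ≤ √(x.1 ^ 2 + x.2 ^ 2) := by simpa [Prod.norm_def] using ⟨e1, e2⟩
      linarith
    have z : ∀ F, OV B F → (pull Φ F).1 (0, x) = 0 := fun F hF => by
      rw [pull_ev, H.start]; exact hF.at_B le_rfl hr
    rw [totD, SF.sum_ev]
    simp only [SF.add_ev, SF.pow_ev, SF.sum_ev, z _ (d.sol.ov _), Bend.ed_ev, z _ ((Sol.ovp d.sol _ _).pd _)]
    simp

/-- Time translation. -/
def shiftT (c : ℝ) (f : SF) : SF := ⟨fun p => f.1 (p.1 + c, p.2), f.smooth.comp (by fun_prop)⟩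
lemma shiftT_ev (c f p) : (shiftT c f).1 p = f.1 (p.1 + c, p.2) := rfl
lemma XS.shiftT {f : SF} (hf : XS f) (c : ℝ) : XS (shiftT c f) := fun M => by
  obtain ⟨R, hR⟩ := hf (M + |c|)
  exact ⟨R, fun τ x hτ hx => hR _ x ((abs_add_le τ c).trans (by linarith)) hx⟩

/-- Control of the solution on the initial hyperboloid, in terms of coordinate derivatives. -/
lemma phase1 (hB : 2 ≤ B) (hf : ∀ j, XS (f j)) (hg : ∀ j, XS (g j)) :
    ∃ C ε₁, 0 ≤ C ∧ 0 < ε₁ ∧ ∀ ε W Φ P, Dat B f g ε W → ε ≤ ε₁ → Hyp B Φ P → ∃ G : SF, XS G ∧ sI 0 G ≤ C * ε ^ 2 ∧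
      ∀ j (l : List (Fin 3)), l.length ≤ 4 → ∀ x, (app pd l (W j)).1 (Φ.1 (0, x), x) ^ 2 ≤ G.1 (0, x) := by
  obtain ⟨C1, hC1, h1⟩ := bend_ineq B
  obtain ⟨C2, hC2, h2⟩ := initial_tot hB hf hg
  obtain ⟨Φ1, H1⟩ := exists_bend hB
  obtain ⟨K, hK⟩ : ∃ K, K = exp (2 * C1 * (π / 2)) := ⟨_, rfl⟩
  have hKp : 1 ≤ K := by rw [hK]; exact one_le_exp (by positivity)
  obtain ⟨e1, he1⟩ : ∃ e1 : ℝ, e1 = 1 / (2 * K * (C2 + 1) ^ 2) := ⟨_, rfl⟩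
  have he1p : 0 < e1 := by rw [he1]; positivity
  refine ⟨2 * B ^ 2 * (2 * K * (C2 + 1)), e1, by positivity, he1p, fun ε W Φ P d hε H => ?_⟩
  have i0 := h2 ε W Φ1 d H1
  have hε0 := d.e0
  have hε1 := d.e1
  obtain ⟨F, hF⟩ : ∃ F, F = fun τ => sI τ (totD Φ1 W) := ⟨_, rfl⟩
  have hF0 : ∀ τ, 0 ≤ F τ := fun τ => by rw [hF]; exact sI_nonneg fun x => tot_nonneg H1 _
  have i1 : F 0 ≤ (C2 + 1) * ε ^ 2 := by rw [hF]; nlinarith [sq_nonneg ε]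
  have i1s : F 0 ^ 2 ≤ ((C2 + 1) * ε ^ 2) ^ 2 := pow_le_pow_left₀ (hF0 0) i1 2
  have i2 : K * F 0 ^ 2 ≤ 1 / 2 := by
    have a : ε ^ 4 ≤ e1 := by
      have : ε ^ 4 ≤ ε := by simpa using pow_le_pow_of_le_one hε0.le hε1 (show 1 ≤ 4 by norm_num)
      linarith
    have b : K * ((C2 + 1) * ε ^ 2) ^ 2 ≤ K * (C2 + 1) ^ 2 * e1 := by
      have : K * ((C2 + 1) * ε ^ 2) ^ 2 = K * (C2 + 1) ^ 2 * ε ^ 4 := by ring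
      rw [this]; exact mul_le_mul_of_nonneg_left a (by positivity)
    have c : K * (C2 + 1) ^ 2 * e1 = 1 / 2 := by rw [he1]; field_simp
    nlinarith [mul_le_mul_of_nonneg_left i1s (show 0 ≤ K by linarith)]
  have i3 := small_gronwall (F := F) (C := C1) (T := π / 2) hF0 hC1 (by positivity) (by rw [hF]; exact h1 Φ1 W H1 d.sol) (by rw [← hK]; exact i2)
  rw [← hK] at i3
  have i4 : F (π / 2) ≤ 2 * K * (C2 + 1) * ε ^ 2 := by
    refine abs_le_of_sq_le_sq' (i3.trans ?_) (by positivity) |>.2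
    have : (2 * K * (C2 + 1) * ε ^ 2) ^ 2 = 2 * K * (2 * K * ((C2 + 1) * ε ^ 2) ^ 2) := by ring
    rw [this]
    refine mul_le_mul_of_nonneg_left ?_ (by linarith)
    nlinarith [sq_nonneg (F 0)]
  refine ⟨(2 * B ^ 2) • shiftT (π / 2) (totD Φ1 W), ((XS_tot H1 d.sol).shiftT _).smul _, ?_, fun j l hl x => ?_⟩
  · rw [sI_smul]
    have : sI 0 (shiftT (π / 2) (totD Φ1 W)) = F (π / 2) := by rw [hF]; simp [sI, shiftT]
    rw [this]
    nlinarith [mul_le_mul_of_nonneg_left i4 (show 0 ≤ 2 * B ^ 2 by positivity)]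
  · have := word_le_tot H1 d.sol (π / 2, x) j hl
    rw [pull_ev, H1.last] at this
    have e : Φ.1 (0, x) = √(B ^ 2 + x.1 ^ 2 + x.2 ^ 2) := by
      rw [eq_comm, Real.sqrt_eq_iff_mul_self_eq (by positivity) (H.pos _).le, ← sq, H.sq_ev]; ring
    rw [e, SF.smul_ev, shiftT_ev]
    simpa using this
end

/-- Coordinate derivatives of a product with an affine factor. -/
lemma app_pd_affine {X : SF} (hX : ∀ i, ∃ c : ℝ, c ^ 2 ≤ 1 ∧ pd i X = c • 1) {q : ℝ × ℝ × ℝ} {M : ℝ} (hM : 1 ≤ M)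
    (hq : |X.1 q| ≤ M) (l : List (Fin 3)) : ∀ (g : SF) (K : ℝ),
    (∀ l' : List (Fin 3), l'.length ≤ l.length → (app pd l' g).1 q ^ 2 ≤ K) →
      (app pd l (X * g)).1 q ^ 2 ≤ 4 ^ l.length * (M ^ 2 * K) := by
  have hM2 : X.1 q ^ 2 ≤ M ^ 2 := sq_le_sq' (by linarith [(abs_le.1 hq).1]) (abs_le.1 hq).2
  induction l with
  | nil =>
    intro g K h
    have := h [] le_rfl
    simp only [app_nil, SF.mul_ev, List.length_nil, pow_zero, one_mul, mul_pow] at *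
    exact mul_le_mul hM2 this (sq_nonneg _) (sq_nonneg _)
  | cons i l ih =>
    intro g K h
    obtain ⟨c, hc, e⟩ := hX i
    have a1 := ih (pd i g) K fun l' hl' => h (i :: l') (by simpa using hl')
    have a2 := h l (by simp)
    have e2 : app pd (i :: l) (X * g) = app pd l (X * pd i g) + c • app pd l g := by
      rw [app_cons, pd_mul, e, app_add]
      have : (g : SF) * (c • (1 : SF)) = c • g := by simp
      rw [this, app_smul]
    rw [e2, SF.add_ev, SF.smul_ev, List.length_cons, pow_succ 4]
    have hK : 0 ≤ K := (sq_nonneg _).trans a2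
    have a3 : (c * (app pd l g).1 q) ^ 2 ≤ 4 ^ l.length * (M ^ 2 * K) := by
      have : 1 ≤ (4 : ℝ) ^ l.length * M ^ 2 := one_le_mul_of_one_le_of_one_le (one_le_pow₀ (by norm_num)) (one_le_pow₀ hM)
      rw [mul_pow]
      have := mul_le_mul hc a2 (sq_nonneg _) zero_le_one
      nlinarith
    generalize (app pd l (X * pd i g)).1 q = a at *
    generalize c * (app pd l g).1 q = b at *
    nlinarith [sq_nonneg (a - b)]

/-- Boosts of words controlled by coordinate words. -/
lemma app_pd_Lf {q : ℝ × ℝ × ℝ} {M : ℝ} (hM : 1 ≤ M) (h0 : |q.1| ≤ M) (h1 : |q.2.1| ≤ M) (h2 : |q.2.2| ≤ M)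
    (i : Fin 2) {n : ℕ} (hn : n ≤ 3) {w : SF} {K : ℝ}
    (h : ∀ l : List (Fin 3), l.length ≤ n + 1 → (app pd l w).1 q ^ 2 ≤ K) (l : List (Fin 3)) (hl : l.length ≤ n) :
    (app pd l (Lf i w)).1 q ^ 2 ≤ 256 * (M ^ 2 * K) := by
  have aT : ∀ i, ∃ c : ℝ, c ^ 2 ≤ 1 ∧ pd i cT = c • 1 := fun i => by
    fin_cases i
    · exact ⟨1, by simp, by simp⟩
    · exact ⟨0, by simp, by simp⟩
    · exact ⟨0, by simp, by simp⟩
  have aX : ∀ k i, ∃ c : ℝ, c ^ 2 ≤ 1 ∧ pd i (cX k) = c • 1 := fun k i => by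
    fin_cases k <;> fin_cases i
    · exact ⟨0, by simp, by simp⟩
    · exact ⟨1, by simp, by simp⟩
    · exact ⟨0, by simp, by simp⟩
    · exact ⟨0, by simp, by simp⟩
    · exact ⟨0, by simp, by simp⟩
    · exact ⟨1, by simp, by simp⟩
  have hX : ∀ k, |(cX k).1 q| ≤ M := fun k => by fin_cases k <;> assumption
  have hp : (4 : ℝ) ^ l.length ≤ 64 := by
    calc (4 : ℝ) ^ l.length ≤ 4 ^ 3 := pow_le_pow_right₀ (by norm_num) (by omega)
      _ = 64 := by norm_num
  have hK : 0 ≤ M ^ 2 * K := mul_nonneg (sq_nonneg _) ((sq_nonneg _).trans (h [] (by simp)))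
  have key : ∀ j : Fin 3, (app pd l (cT * pd j w + cX i * pd 0 w)).1 q ^ 2 ≤ 256 * (M ^ 2 * K) := fun j => by
    have a1 := app_pd_affine aT hM h0 l (pd j w) K fun l' hl' => h (j :: l') (by simp; omega)
    have a2 := app_pd_affine (aX i) hM (hX i) l (pd 0 w) K fun l' hl' => h (0 :: l') (by simp; omega)
    rw [app_add, SF.add_ev]
    have := mul_le_mul_of_nonneg_right hp hK
    generalize (app pd l (cT * pd j w)).1 q = a at *
    generalize (app pd l (cX i * pd 0 w)).1 q = b at *
    nlinarith [sq_nonneg (a - b)]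
  fin_cases i
  · exact key 1
  · exact key 2

/-- At a point of bounded coordinates, words in the boosts are controlled by words in the coordinate
derivatives. -/
lemma app_pd_app_Lf {q : ℝ × ℝ × ℝ} {M : ℝ} (hM : 1 ≤ M) (h0 : |q.1| ≤ M) (h1 : |q.2.1| ≤ M) (h2 : |q.2.2| ≤ M)
    (L : List (Fin 2)) : ∀ (n : ℕ) (w : SF) (K : ℝ), n + L.length ≤ 4 →
    (∀ l : List (Fin 3), l.length ≤ n + L.length → (app pd l w).1 q ^ 2 ≤ K) → ∀ l : List (Fin 3), l.length ≤ n →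
    (app pd l (app Lf L w)).1 q ^ 2 ≤ (256 * M ^ 2) ^ L.length * K := by
  induction L with
  | nil => intro n w K _ h l hl; simpa using h l (by simpa using hl)
  | cons i L ih =>
    intro n w K hn h l hl
    rw [List.length_cons] at *
    have := ih n (Lf i w) (256 * (M ^ 2 * K)) (by omega) (fun l' hl' =>
      app_pd_Lf hM h0 h1 h2 i (n := n + L.length) (by omega) (fun l'' hl'' => h l'' (by omega)) l' hl') l hl
    rw [app_cons]
    refine this.trans (le_of_eq (by ring))

lemma Hyp.d_sq_le {B : ℝ} {Φ P : SF} (H : Hyp B Φ P) (p) : (pd 1 Φ).1 p ^ 2 + (pd 2 Φ).1 p ^ 2 ≤ 1 := by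
  rw [H.d1, H.d2]
  have h1 := H.inv_ev p
  have h2 := H.sq_ev p
  simp only [SF.mul_ev]
  show (P.1 p * p.2.1) ^ 2 + (P.1 p * p.2.2) ^ 2 ≤ 1
  have : 1 = P.1 p ^ 2 * Φ.1 p ^ 2 := by rw [← mul_pow, h1]; norm_num
  rw [this, h2]
  nlinarith [mul_nonneg (sq_nonneg (P.1 p)) (add_nonneg (sq_nonneg B) (sq_nonneg p.1))]

lemma Hyp.ed_le {B : ℝ} {Φ P : SF} (H : Hyp B Φ P) (w p) : (ed Φ w).1 p ≤ 2 * (gradSq w).1 (Φ.1 p, p.2) := by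
  have h := H.d_sq_le p
  simp only [ed, gradSq, SF.add_ev, SF.mul_ev, SF.smul_ev, SF.pow_ev, pull_ev]
  generalize (pd 0 w).1 (Φ.1 p, p.2) = a
  generalize (pd 1 w).1 (Φ.1 p, p.2) = b
  generalize (pd 2 w).1 (Φ.1 p, p.2) = c
  generalize (pd 1 Φ).1 p = m at *
  generalize (pd 2 Φ).1 p = n at *
  nlinarith [sq_nonneg (a * m - b), sq_nonneg (a * n - c), mul_le_mul_of_nonneg_left h (sq_nonneg a)]

/-- The energy on the hyperboloids: boosted gradients up to order three, and a Hardy-type weighted `L²` term. -/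
def totH (Φ P : SF) (W : Fin 2 → SF) : SF :=
  ∑ j, (∑ l ∈ wd (Fin 2) 3, ed Φ (app Lf l (W j)) + (1 / 8 : ℝ) • (P * pull Φ (W j)) ^ 2)

section
variable {B : ℝ} {f g : Fin 2 → SF}
/-- The boosted energy on the initial hyperboloid is `O(ε²)`, with constants uniform over solutions. -/
lemma phase1L (hB : 2 ≤ B) (hf : ∀ j, XS (f j)) (hg : ∀ j, XS (g j)) :
    ∃ C ε₁, 0 ≤ C ∧ 0 < ε₁ ∧ ∀ ε W Φ P, Dat B f g ε W → ε ≤ ε₁ → Hyp B Φ P → sI 0 (totH Φ P W) ≤ C * ε ^ 2 := by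
  obtain ⟨C, e1, hC, he1, h⟩ := phase1 hB hf hg
  obtain ⟨M, hM⟩ : ∃ M, M = B ^ 2 := ⟨_, rfl⟩
  have hM1 : 1 ≤ M := by rw [hM]; nlinarith
  obtain ⟨N, hN⟩ : ∃ N : ℝ, N = (256 * M ^ 2) ^ 3 := ⟨_, rfl⟩
  have hN1 : 1 ≤ 256 * M ^ 2 := by nlinarith
  have hN0 : 0 ≤ N := by rw [hN]; positivity
  refine ⟨(2 * ((wd (Fin 2) 3).card * (6 * N) + 1)) * C, e1, by positivity, he1, fun ε W Φ P d hε H => ?_⟩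
  obtain ⟨G, hG, hG0, hw⟩ := h ε W Φ P d hε H
  have hX : XS (totH Φ P W) := XS.sum fun j _ => (XS.sum fun l _ => XS_ed fun i => H.XSp ((OV.app_Lf (d.sol.ov j) l).pd i)).add
    ((((H.XSp (d.sol.ov j)).mul_left P).pow two_ne_zero).smul _)
  have : sI 0 (totH Φ P W) ≤ sI 0 ((2 * ((wd (Fin 2) 3).card * (6 * N) + 1)) • G) := by
    refine sI_mono hX (hG.smul _) fun x => ?_
    have hG0' : 0 ≤ G.1 (0, x) := (sq_nonneg _).trans (hw 0 [] (by simp) x)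
    have hsq := H.sq_ev (0, x)
    have hpos := H.pos (0, x)
    have hgB := H.geB (0, x)
    have hinv := H.inv_ev (0, x)
    have hP := H.Ppos (0, x)
    simp only at hsq
    have hN1' : 1 ≤ N := by rw [hN]; exact one_le_pow₀ hN1
    have c1 : ∀ j, ∀ l ∈ wd (Fin 2) 3, (ed Φ (app Lf l (W j))).1 (0, x) ≤ 6 * N * G.1 (0, x) := fun j l hl => by
      have hl := mem_wd.1 hl
      refine (H.ed_le _ _).trans ?_
      have e : (√(x.1 ^ 2 + x.2 ^ 2)) ^ 2 = x.1 ^ 2 + x.2 ^ 2 := Real.sq_sqrt (by positivity)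
      have e0 := Real.sqrt_nonneg (x.1 ^ 2 + x.2 ^ 2)
      by_cases hr : Φ.1 (0, x) - 1 < √(x.1 ^ 2 + x.2 ^ 2)
      · have z : ∀ F, OV B F → F.1 (Φ.1 (0, x), x) = 0 := fun F hF => hF.at_B hgB hr
        simp only [gradSq, SF.add_ev, SF.pow_ev, z _ ((OV.app_Lf (d.sol.ov j) l).pd _)]
        have : 0 ≤ 6 * N * G.1 (0, x) := by positivity
        simpa using this
      · have hr := not_lt.1 hr
        obtain ⟨r, hrr⟩ : ∃ r, r = √(x.1 ^ 2 + x.2 ^ 2) := ⟨_, rfl⟩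
        rw [← hrr] at e e0 hr
        have b1 : 2 * r + 1 ≤ B ^ 2 := by nlinarith
        have b2 : Φ.1 (0, x) ≤ B + r := by
          refine abs_le_of_sq_le_sq' ?_ (by linarith) |>.2
          nlinarith
        have q1 : |x.1| ≤ r := abs_le_of_sq_le_sq (by nlinarith [sq_nonneg x.2]) e0
        have q2 : |x.2| ≤ r := abs_le_of_sq_le_sq (by nlinarith [sq_nonneg x.1]) e0
        have k0 : |Φ.1 (0, x)| ≤ M := by rw [abs_of_pos hpos, hM]; nlinarith
        have key : ∀ i : Fin 3, (pd i (app Lf l (W j))).1 (Φ.1 (0, x), x) ^ 2 ≤ N * G.1 (0, x) := fun i => by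
          have := app_pd_app_Lf (q := (Φ.1 (0, x), x)) (M := M) hM1 k0 (by simp only; linarith) (by simp only; linarith) l 1 (W j) (G.1 (0, x))
            (by omega) (fun l' hl' => hw j l' (by omega) x) [i] (by simp)
          simp only [app_cons, app_nil] at this
          refine this.trans (mul_le_mul_of_nonneg_right ?_ hG0')
          rw [hN]; exact pow_le_pow_right₀ hN1 hl
        simp only [gradSq, SF.add_ev, SF.pow_ev]
        linarith [key 0, key 1, key 2]
    have c2 : ∀ j, (P * pull Φ (W j)).1 (0, x) ^ 2 ≤ G.1 (0, x) := fun j => by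
      have a1 := hw j [] (by simp) x
      rw [app_nil] at a1
      rw [SF.mul_ev, pull_ev, mul_pow]
      have : P.1 (0, x) ^ 2 ≤ 1 := by
        have : P.1 (0, x) ≤ 1 := by nlinarith [d.sol.hB]
        nlinarith
      nlinarith [sq_nonneg ((W j).1 (Φ.1 (0, x), x))]
    have c3 : ∀ j ∈ (Finset.univ : Finset (Fin 2)), (∑ l ∈ wd (Fin 2) 3, (ed Φ (app Lf l (W j))).1 (0, x) +
        (1 / 8 : ℝ) * (P * pull Φ (W j)).1 (0, x) ^ 2) ≤ ((wd (Fin 2) 3).card * (6 * N) + 1) * G.1 (0, x) := fun j _ => by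
      have := Finset.sum_le_card_nsmul _ _ _ (c1 j)
      rw [nsmul_eq_mul] at this
      linarith [c2 j]
    have := Finset.sum_le_card_nsmul _ _ _ c3
    rw [nsmul_eq_mul, Finset.card_univ, Fintype.card_fin, Nat.cast_ofNat] at this
    rw [totH, SF.sum_ev]
    simp only [SF.add_ev, SF.smul_ev, SF.pow_ev, SF.sum_ev]
    linarith
  rw [sI_smul] at this
  have k : 0 ≤ (2 * (((wd (Fin 2) 3).card : ℝ) * (6 * N) + 1)) := by positivity
  nlinarith [mul_le_mul_of_nonneg_left hG0 k]
end

/-! ### Gagliardo–Nirenberg estimates on hyperboloids -/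

/-- Coordinate direction of a tangential field. -/
def dir : Fin 2 → Fin 3 := ![1, 2]
lemma Xf_eq (Φ : SF) (k w) : Xf Φ k w = Φ * pd (dir k) w := by
  fin_cases k <;> rfl
lemma sI_pd_dir {f : SF} (hf : XS f) (k τ) : sI τ (pd (dir k) f) = 0 := by
  fin_cases k
  · exact sI_pd1 hf τ
  · exact sI_pd2 hf τ
lemma XS.Xf {f : SF} (hf : XS f) (Φ : SF) (k) : XS (Xf Φ k f) := by
  rw [Xf_eq]; exact (hf.pd _).mul_left _
lemma XS.app_Xf {f : SF} (hf : XS f) (Φ : SF) (l) : XS (app (_root_.Xf Φ) l f) :=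
  app_mem _ (P := XS) (fun i _ h => h.Xf Φ i) l f hf
/-- Integration by parts in integrated form. -/
lemma sI_ibp {F G : SF} (hF : XS F) (hG : XS G) (k : Fin 2) {τ : ℝ} {H : SF} (hH : XS H) (e : pd (dir k) H = F + G) :
    sI τ F = - sI τ G := by
  have := sI_pd_dir hH k τ
  rw [e, sI_add hF hG] at this
  linarith

lemma dirabs {B : ℝ} {Φ P : SF} (H : Hyp B Φ P) (k p) : |(pd (dir k) Φ).1 p| ≤ 1 := by
  have := H.d_sq_le p
  rw [← sq_le_one_iff_abs_le_one]
  fin_cases k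
  · show (pd 1 Φ).1 p ^ 2 ≤ 1
    nlinarith [sq_nonneg ((pd 2 Φ).1 p)]
  · show (pd 2 Φ).1 p ^ 2 ≤ 1
    nlinarith [sq_nonneg ((pd 1 Φ).1 p)]

/-- Functions on a slice with a weighted pointwise bound and weighted `L²` bounds on three derivatives. -/
structure GN (Φ P : SF) (τ A Q : ℝ) (f : SF) : Prop where
  xs : XS f
  pt : ∀ x, Φ.1 (τ, x) * f.1 (τ, x) ^ 2 ≤ A ^ 2
  q : ∀ l : List (Fin 2), l.length ≤ 3 → sI τ ((P * app (Xf Φ) l f) ^ 2) ≤ Q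

namespace GN
variable {B : ℝ} {Φ P f : SF} {τ A Q : ℝ}

lemma pt' (H : Hyp B Φ P) (h : GN Φ P τ A Q f) (x) : f.1 (τ, x) ^ 2 ≤ A ^ 2 * P.1 (τ, x) := by
  have h1 := H.inv_ev (τ, x)
  have h2 := H.Ppos (τ, x)
  have h3 := h.pt x
  have := mul_le_mul_of_nonneg_left h3 h2.le
  nlinarith

/-- `∫ P (X f)⁴ ≲ A² Q`, by integrating one derivative by parts and using the pointwise bound on `f`. -/
lemma four (H : Hyp B Φ P) (h : GN Φ P τ A Q f) (k : Fin 2) : sI τ (P * Xf Φ k f ^ 4) ≤ 9 * A ^ 2 * Q := by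
  obtain ⟨g, hg⟩ : ∃ g, g = Xf Φ k f := ⟨_, rfl⟩
  have xg : XS g := hg ▸ h.xs.Xf Φ k
  have e1 : P * g ^ 4 = pd (dir k) f * g ^ 3 := by
    have : g = Φ * pd (dir k) f := by rw [hg, Xf_eq]
    linear_combination (g ^ 3 * P) * this + g ^ 3 * pd (dir k) f * H.inv
  have hh : pd (dir k) g = P * Xf Φ k g := by
    rw [Xf_eq, ← mul_assoc, H.inv, one_mul]
  have ib := sI_ibp (τ := τ) (F := P * g ^ 4) (G := (3 : ℝ) • (f * g ^ 2 * pd (dir k) g)) (H := f * g ^ 3)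
    ((xg.pow (by norm_num)).mul_left _) ((((h.xs.mul_right _)).mul_right _).smul _) k (h.xs.mul_right _) (by
      rw [e1, pow_succ g 2, pd_mul, pd_mul, pd_sq]
      ext p; simp only [SF.add_ev, SF.mul_ev, SF.smul_ev, SF.pow_ev, SF.two_ev]; ring)
  have x1 : XS (P * g ^ 4) := (xg.pow (by norm_num)).mul_left _
  have x2 : XS ((P * Xf Φ k g) ^ 2) := (((xg.Xf Φ k)).mul_left _).pow two_ne_zero
  have key : sI τ (-((3 : ℝ) • (f * g ^ 2 * pd (dir k) g))) ≤ sI τ ((1 / 2 : ℝ) • (P * g ^ 4) + (9 / 2 * A ^ 2) • (P * Xf Φ k g) ^ 2) := by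
    refine sI_mono ((((h.xs.mul_right _)).mul_right _).smul _).neg ((x1.smul _).add (x2.smul _)) fun x => ?_
    rw [hh]
    have hp := h.pt' H x
    have hP := H.Ppos (τ, x)
    simp only [SF.add_ev, SF.mul_ev, SF.smul_ev, SF.pow_ev, SF.neg_ev]
    generalize f.1 (τ, x) = u at *
    generalize g.1 (τ, x) = v at *
    generalize (Xf Φ k g).1 (τ, x) = w at *
    generalize P.1 (τ, x) = p at *
    have : 0 ≤ p * (v ^ 2 + 3 * (u * w)) ^ 2 := by positivity
    have := mul_le_mul_of_nonneg_right hp (mul_nonneg hP.le (sq_nonneg w))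
    nlinarith
  rw [sI_neg, ← ib, sI_add (x1.smul _) (x2.smul _), sI_smul, sI_smul] at key
  have q := h.q [k, k] (by simp)
  simp only [app_cons, app_nil, ← hg] at q
  rw [← hg]
  nlinarith [mul_le_mul_of_nonneg_left q (sq_nonneg A)]

/-- The term `∫ P g² (X g)²`, with a parameter. -/
lemma quart {g : SF} (xg : XS g) (H : Hyp B Φ P) (j : Fin 2) {β : ℝ} (hβ : 0 < β) :
    sI τ (P * (g * Xf Φ j g) ^ 2) ≤ β / 6 * sI τ (g ^ 6) + 1 / (6 * β) * sI τ ((P * Xf Φ j (Xf Φ j g)) ^ 2) := by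
  obtain ⟨h, hh⟩ : ∃ h, h = Xf Φ j g := ⟨_, rfl⟩
  have xh : XS h := hh ▸ xg.Xf Φ j
  rw [← hh]
  have dh : pd (dir j) h = P * Xf Φ j h := by
    rw [Xf_eq, ← mul_assoc, H.inv, one_mul]
  have dg : pd (dir j) g = P * h := by
    rw [hh, Xf_eq, ← mul_assoc, H.inv, one_mul]
  have ib := sI_ibp (τ := τ) (F := P * (g * h) ^ 2) (G := (1 / 3 : ℝ) • (g ^ 3 * (P * Xf Φ j h))) (H := (1 / 3 : ℝ) • (g ^ 3 * h))
    (((xg.mul_right _).pow (by norm_num)).mul_left _) (((xg.pow (by norm_num)).mul_right _).smul _) j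
      (((xg.pow (by norm_num)).mul_right _).smul _) (by
      rw [pow_succ g 2, pd_smul, pd_mul, pd_mul, pd_sq, dh, dg]
      ext p; simp only [SF.add_ev, SF.mul_ev, SF.smul_ev, SF.pow_ev, SF.two_ev]; ring)
  have x2 : XS ((P * Xf Φ j h) ^ 2) := (((xh.Xf Φ j)).mul_left _).pow two_ne_zero
  have x1 : XS (g ^ 6) := xg.pow (by norm_num)
  have key : sI τ (-((1 / 3 : ℝ) • (g ^ 3 * (P * Xf Φ j h)))) ≤ sI τ ((β / 6) • g ^ 6 + (1 / (6 * β)) • (P * Xf Φ j h) ^ 2) := by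
    refine sI_mono (((xg.pow (by norm_num)).mul_right _).smul _).neg ((x1.smul _).add (x2.smul _)) fun x => ?_
    simp only [SF.add_ev, SF.smul_ev, SF.neg_ev, SF.mul_ev, SF.pow_ev]
    generalize P.1 (τ, x) * (Xf Φ j h).1 (τ, x) = w at *
    generalize g.1 (τ, x) = v at *
    have e : β / 6 * v ^ 6 + 1 / (6 * β) * w ^ 2 - -(1 / 3 * (v ^ 3 * w)) = (β * v ^ 3 + w) ^ 2 / (6 * β) := by field_simp; ring
    have : 0 ≤ (β * v ^ 3 + w) ^ 2 / (6 * β) := by positivity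
    linarith
  rw [sI_neg, ← ib, sI_add (x1.smul _) (x2.smul _), sI_smul, sI_smul] at key
  exact key

/-- `∫ (X f)⁶ ≲ A⁴ Q`: the endpoint `L⁶` bound for first derivatives. -/
lemma six (H : Hyp B Φ P) (hA : 0 < A) (h : GN Φ P τ A Q f) (k : Fin 2) : sI τ (Xf Φ k f ^ 6) ≤ 314 * A ^ 4 * Q := by
  obtain ⟨g, hg⟩ : ∃ g, g = Xf Φ k f := ⟨_, rfl⟩
  have xg : XS g := hg ▸ h.xs.Xf Φ k
  have y := h.four H k
  have p := quart (τ := τ) xg H k (β := 3 / (50 * A ^ 2)) (by positivity)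
  have q3 := h.q [k, k, k] (by simp)
  simp only [app_cons, app_nil] at q3
  rw [← hg] at y q3 ⊢
  have hh : Φ * pd (dir k) g = Xf Φ k g := by rw [Xf_eq]
  have e1 : g ^ 6 = Φ * pd (dir k) f * g ^ 5 := by
    have : g = Φ * pd (dir k) f := by rw [hg, Xf_eq]
    linear_combination g ^ 5 * this
  have x6 : XS (g ^ 6) := xg.pow (by norm_num)
  have xG : XS (f * (pd (dir k) Φ * g ^ 5 + (5 : ℝ) • (g ^ 4 * Xf Φ k g))) := h.xs.mul_right _
  have x4 : XS (P * g ^ 4) := (xg.pow (by norm_num)).mul_left _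
  have xp : XS (P * (g * Xf Φ k g) ^ 2) := ((xg.mul_right _).pow two_ne_zero).mul_left _
  have ib := sI_ibp (τ := τ) (F := g ^ 6) (G := f * (pd (dir k) Φ * g ^ 5 + (5 : ℝ) • (g ^ 4 * Xf Φ k g))) (H := f * (Φ * g ^ 5))
    x6 xG k (h.xs.mul_right _) (by
      have : pd (dir k) (f * (Φ * g ^ 5)) = Φ * pd (dir k) f * g ^ 5 + f * (pd (dir k) Φ * g ^ 5 + 5 * (g ^ 4 * (Φ * pd (dir k) g))) := by
        rw [show g ^ 5 = g ^ 2 * g ^ 2 * g by ring, pd_mul, pd_mul, pd_mul, pd_mul, pd_sq]; ring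
      rw [this, hh, e1]
      ext p; simp only [SF.add_ev, SF.mul_ev, SF.smul_ev, SF.pow_ev]
      have : (5 : SF).1 p = 5 := rfl
      rw [this])
  have key : sI τ (-(f * (pd (dir k) Φ * g ^ 5 + (5 : ℝ) • (g ^ 4 * Xf Φ k g)))) ≤
      sI τ ((1 / 2 : ℝ) • g ^ 6 + A ^ 2 • (P * g ^ 4) + (25 * A ^ 2) • (P * (g * Xf Φ k g) ^ 2)) := by
    refine sI_mono xG.neg (((x6.smul _).add (x4.smul _)).add (xp.smul _)) fun x => ?_
    have hp := h.pt' H x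
    have hd := dirabs H k (τ, x)
    simp only [SF.add_ev, SF.mul_ev, SF.smul_ev, SF.pow_ev, SF.neg_ev]
    generalize f.1 (τ, x) = u at *
    generalize g.1 (τ, x) = v at *
    generalize (Xf Φ k g).1 (τ, x) = w at *
    generalize P.1 (τ, x) = p at *
    generalize (pd (dir k) Φ).1 (τ, x) = d at *
    have d2 : d ^ 2 ≤ 1 := (sq_le_one_iff_abs_le_one d).2 hd
    have a1 := mul_le_mul_of_nonneg_right hp (show 0 ≤ v ^ 4 by positivity)
    have a2 := mul_le_mul_of_nonneg_right hp (show 0 ≤ (v * w) ^ 2 by positivity)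
    have a3 : -(u * (d * v ^ 5)) ≤ 1 / 4 * v ^ 6 + u ^ 2 * v ^ 4 := by
      have := mul_le_mul_of_nonneg_left d2 (show 0 ≤ u ^ 2 * v ^ 4 by positivity)
      nlinarith [sq_nonneg (v ^ 3 / 2 + u * v ^ 2 * d)]
    have a4 : -(u * (5 * (v ^ 4 * w))) ≤ 1 / 4 * v ^ 6 + 25 * (u ^ 2 * (v * w) ^ 2) := by
      nlinarith [sq_nonneg (v ^ 3 / 2 + 5 * u * v * w)]
    nlinarith
  rw [sI_neg, ← ib, sI_add ((x6.smul _).add (x4.smul _)) (xp.smul _), sI_add (x6.smul _) (x4.smul _), sI_smul, sI_smul, sI_smul] at key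
  have p2 : 25 * A ^ 2 * sI τ (P * (g * Xf Φ k g) ^ 2) ≤ 1 / 4 * sI τ (g ^ 6) + 25 * 50 / 18 * A ^ 4 * Q := by
    have e : 25 * A ^ 2 * (3 / (50 * A ^ 2) / 6 * sI τ (g ^ 6) + 1 / (6 * (3 / (50 * A ^ 2))) * sI τ ((P * Xf Φ k (Xf Φ k g)) ^ 2))
        = 1 / 4 * sI τ (g ^ 6) + 25 * 50 / 18 * A ^ 4 * sI τ ((P * Xf Φ k (Xf Φ k g)) ^ 2) := by field_simp; ring
    have p' := mul_le_mul_of_nonneg_left p (show 0 ≤ 25 * A ^ 2 by positivity)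
    rw [e] at p'
    have := mul_le_mul_of_nonneg_left q3 (show 0 ≤ 25 * 50 / 18 * A ^ 4 by positivity)
    linarith
  have y2 := mul_le_mul_of_nonneg_left y (sq_nonneg A)
  have hQ : 0 ≤ A ^ 4 * Q := mul_nonneg (by positivity) ((sI_nonneg fun x => by rw [SF.pow_ev]; positivity).trans q3)
  nlinarith

/-- Weighted `L²` bound for a first times a second derivative of the same function. -/
lemma quartQ (H : Hyp B Φ P) (hA : 0 < A) (h : GN Φ P τ A Q f) (k j : Fin 2) :
    sI τ (P * (Xf Φ k f * Xf Φ j (Xf Φ k f)) ^ 2) ≤ 6 * A ^ 2 * Q := by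
  have s := h.six H hA k
  have p := quart (τ := τ) (h.xs.Xf Φ k) H j (β := 3 / (50 * A ^ 2)) (by positivity)
  have q3 := h.q [k, j, j] (by simp)
  simp only [app_cons, app_nil] at q3
  refine p.trans ?_
  have e : 1 / (6 * (3 / (50 * A ^ 2))) = 50 / 18 * A ^ 2 := by field_simp; norm_num
  have e2 : 3 / (50 * A ^ 2) / 6 * (314 * A ^ 4 * Q) = 314 / 100 * A ^ 2 * Q := by field_simp; ring
  rw [e]
  have h1 := mul_le_mul_of_nonneg_left s (show 0 ≤ 3 / (50 * A ^ 2) / 6 by positivity)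
  have h2 := mul_le_mul_of_nonneg_left q3 (show 0 ≤ 50 / 18 * A ^ 2 by positivity)
  have hQ : 0 ≤ A ^ 2 * Q := mul_nonneg (by positivity) ((sI_nonneg fun x => by rw [SF.pow_ev]; positivity).trans q3)
  linarith

/-- Polarized form of `quartQ`: the first and second derivatives may fall on different functions. -/
lemma mixed (H : Hyp B Φ P) (hA : 0 < A) {f' : SF} (h : GN Φ P τ A Q f) (h' : GN Φ P τ A Q f') (i k j : Fin 2) :
    sI τ (P * (Xf Φ i f * Xf Φ j (Xf Φ k f')) ^ 2) ≤ 170 * A ^ 2 * Q := by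
  have p1 := h.quartQ H hA i j
  have p2 := h'.quartQ H hA k j
  have s1 := h.six H hA i
  have s2 := h'.six H hA k
  have q3 := h'.q [k, j, j] (by simp)
  simp only [app_cons, app_nil] at q3
  have xa := h.xs.Xf Φ i
  have xb := h'.xs.Xf Φ k
  generalize Xf Φ i f = a at *
  generalize Xf Φ k f' = b at *
  obtain ⟨c, hc⟩ : ∃ c, c = Xf Φ j b := ⟨_, rfl⟩
  obtain ⟨a', ha'⟩ : ∃ a', a' = Xf Φ j a := ⟨_, rfl⟩
  obtain ⟨d, hd⟩ : ∃ d, d = Xf Φ j c := ⟨_, rfl⟩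
  have xc : XS c := hc ▸ xb.Xf Φ j
  have xd : XS d := hd ▸ xc.Xf Φ j
  have dx : ∀ g, pd (dir j) g = P * Xf Φ j g := fun g => by rw [Xf_eq, ← mul_assoc, H.inv, one_mul]
  rw [← hc, ← hd] at q3
  rw [← hc] at p2 ⊢
  rw [← ha'] at p1
  have ib := sI_ibp (τ := τ) (F := P * (a * c) ^ 2) (G := b * (P * ((2 : ℝ) • (a * a' * c) + a ^ 2 * d))) (H := b * (a ^ 2 * c))
    (((xa.mul_right _).pow two_ne_zero).mul_left _) (xb.mul_right _) j (xb.mul_right _) (by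
      rw [pd_mul, pd_mul, pd_sq, dx, dx, dx, ← hc, ← hd, ← ha']
      ext p; simp only [SF.add_ev, SF.mul_ev, SF.smul_ev, SF.pow_ev, SF.two_ev]; ring)
  have x1 : XS (P * (a * a') ^ 2) := ((xa.mul_right _).pow two_ne_zero).mul_left _
  have x2 : XS (P * (b * c) ^ 2) := ((xb.mul_right _).pow two_ne_zero).mul_left _
  have x3 : XS (a ^ 6) := xa.pow (by norm_num)
  have x4 : XS (b ^ 6) := xb.pow (by norm_num)
  have x5 : XS ((P * d) ^ 2) := (xd.mul_left _).pow two_ne_zero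
  have key : sI τ (-(b * (P * ((2 : ℝ) • (a * a' * c) + a ^ 2 * d)))) ≤
      sI τ (P * (a * a') ^ 2 + P * (b * c) ^ 2 + ((1 / (3 * A ^ 2)) • a ^ 6 + (1 / (6 * A ^ 2)) • b ^ 6 + (A ^ 2 / 2) • (P * d) ^ 2)) := by
    refine sI_mono (xb.mul_right _).neg ((x1.add x2).add (((x3.smul _).add (x4.smul _)).add (x5.smul _))) fun x => ?_
    have hP := H.Ppos (τ, x)
    simp only [SF.add_ev, SF.mul_ev, SF.smul_ev, SF.pow_ev, SF.neg_ev]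
    generalize a.1 (τ, x) = u at *
    generalize b.1 (τ, x) = v at *
    generalize c.1 (τ, x) = w at *
    generalize a'.1 (τ, x) = u' at *
    generalize d.1 (τ, x) = w' at *
    generalize P.1 (τ, x) = p at *
    have c1 : 0 ≤ p * (u * u' + v * w) ^ 2 := by positivity
    have c2 : 0 ≤ (u ^ 2 * v + A ^ 2 * (p * w')) ^ 2 / (2 * A ^ 2) := by positivity
    have e2 : (u ^ 2 * v + A ^ 2 * (p * w')) ^ 2 / (2 * A ^ 2) = 1 / (2 * A ^ 2) * (u ^ 4 * v ^ 2) + u ^ 2 * v * (p * w') + A ^ 2 / 2 * (p * w') ^ 2 := by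
      field_simp; ring
    have c3 : u ^ 4 * v ^ 2 ≤ 2 / 3 * u ^ 6 + 1 / 3 * v ^ 6 := by
      have hm : ∀ m n : ℝ, 0 ≤ m → 0 ≤ n → m ^ 2 * n ≤ 2 / 3 * m ^ 3 + 1 / 3 * n ^ 3 := fun m n hm hn => by
        nlinarith [mul_nonneg (add_nonneg (add_nonneg hm hm) hn) (sq_nonneg (m - n))]
      have := hm (u ^ 2) (v ^ 2) (sq_nonneg _) (sq_nonneg _)
      nlinarith
    have c4 := mul_le_mul_of_nonneg_left c3 (show 0 ≤ 1 / (2 * A ^ 2) by positivity)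
    have e4 : 1 / (2 * A ^ 2) * (2 / 3 * u ^ 6 + 1 / 3 * v ^ 6) = 1 / (3 * A ^ 2) * u ^ 6 + 1 / (6 * A ^ 2) * v ^ 6 := by field_simp; ring
    nlinarith
  rw [sI_neg, ← ib, sI_add (x1.add x2) (((x3.smul _).add (x4.smul _)).add (x5.smul _)), sI_add x1 x2,
    sI_add ((x3.smul _).add (x4.smul _)) (x5.smul _), sI_add (x3.smul _) (x4.smul _), sI_smul, sI_smul, sI_smul] at key
  have t1 := mul_le_mul_of_nonneg_left s1 (show 0 ≤ 1 / (3 * A ^ 2) by positivity)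
  have t2 := mul_le_mul_of_nonneg_left s2 (show 0 ≤ 1 / (6 * A ^ 2) by positivity)
  have e1 : 1 / (3 * A ^ 2) * (314 * A ^ 4 * Q) + 1 / (6 * A ^ 2) * (314 * A ^ 4 * Q) = 157 * (A ^ 2 * Q) := by field_simp; ring
  have t3 := mul_le_mul_of_nonneg_left q3 (show 0 ≤ A ^ 2 / 2 by positivity)
  have hQ : 0 ≤ A ^ 2 * Q := mul_nonneg (by positivity) ((sI_nonneg fun x => by rw [SF.pow_ev]; positivity).trans q3)
  linarith

/-- The trilinear estimate for words of increasing length. The lengths are `(0, 0, ≤ 3)`, `(0, 1, 1)`, `(0,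
1, 2)` or `(1, 1, 1)`. -/
lemma tri_sorted (H : Hyp B Φ P) (hA : 0 < A) {f g h : SF} (hf : GN Φ P τ A Q f) (hg : GN Φ P τ A Q g) (hh : GN Φ P τ A Q h)
    (l1 l2 l3 : List (Fin 2)) (h1 : l1.length ≤ l2.length) (h2 : l2.length ≤ l3.length) (h3 : l1.length + l2.length + l3.length ≤ 3) :
    sI τ ((app (Xf Φ) l1 f * app (Xf Φ) l2 g * app (Xf Φ) l3 h) ^ 2) ≤ 314 * A ^ 4 * Q := by
  have x1 := hf.xs.app_Xf Φ l1
  have x2 := hg.xs.app_Xf Φ l2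
  have x3 := hh.xs.app_Xf Φ l3
  have xx : XS ((app (Xf Φ) l1 f * app (Xf Φ) l2 g * app (Xf Φ) l3 h) ^ 2) := (x3.mul_left _).pow two_ne_zero
  have hQ : 0 ≤ Q := (sI_nonneg fun x => by rw [SF.pow_ev]; positivity).trans (hf.q [] (by simp))
  have hQ' : 0 ≤ A ^ 4 * Q := by positivity
  by_cases n2 : l2.length = 0
  · obtain rfl : l2 = [] := List.length_eq_zero_iff.1 n2
    obtain rfl : l1 = [] := List.length_eq_zero_iff.1 (by omega)
    have q := hh.q l3 (by simpa using h3)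
    simp only [app_nil] at *
    have : sI τ ((f * g * app (Xf Φ) l3 h) ^ 2) ≤ sI τ (A ^ 4 • (P * app (Xf Φ) l3 h) ^ 2) := by
      refine sI_mono xx (((x3.mul_left _).pow two_ne_zero).smul _) fun x => ?_
      have a1 := hf.pt' H x
      have a2 := hg.pt' H x
      simp only [SF.mul_ev, SF.smul_ev, SF.pow_ev]
      have := mul_le_mul a1 a2 (sq_nonneg _) ((sq_nonneg _).trans a1)
      have := mul_le_mul_of_nonneg_right this (sq_nonneg ((app (Xf Φ) l3 h).1 (τ, x)))
      nlinarith
    rw [sI_smul] at this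
    have := mul_le_mul_of_nonneg_left q (show 0 ≤ A ^ 4 by positivity)
    linarith
  by_cases n1 : l1.length = 0
  · obtain rfl : l1 = [] := List.length_eq_zero_iff.1 n1
    obtain ⟨i, rfl⟩ : ∃ i, l2 = [i] := List.length_eq_one_iff.1 (by simp at h3; omega)
    simp only [app_nil, app_cons] at *
    have a1 := fun x => hf.pt' H x
    by_cases n3 : l3.length = 1
    · obtain ⟨k, rfl⟩ := List.length_eq_one_iff.1 n3
      simp only [app_nil, app_cons] at *
      have y1 := hg.four H i
      have y2 := hh.four H k
      generalize Xf Φ i g = u at *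
      generalize Xf Φ k h = v at *
      have xu : XS (P * u ^ 4) := (x2.pow (by norm_num)).mul_left _
      have xv : XS (P * v ^ 4) := (x3.pow (by norm_num)).mul_left _
      have : sI τ ((f * u * v) ^ 2) ≤ sI τ (A ^ 2 • (P * u ^ 4 + P * v ^ 4)) := by
        refine sI_mono xx ((xu.add xv).smul _) fun x => ?_
        have a := a1 x
        have hP := H.Ppos (τ, x)
        simp only [SF.mul_ev, SF.smul_ev, SF.pow_ev, SF.add_ev]
        generalize u.1 (τ, x) = u at *
        generalize v.1 (τ, x) = v at *
        have := mul_le_mul_of_nonneg_right a (show 0 ≤ (u * v) ^ 2 by positivity)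
        have : 0 ≤ A ^ 2 * P.1 (τ, x) * ((u ^ 2 - v ^ 2) ^ 2 + u ^ 4 + v ^ 4) := by positivity
        nlinarith
      rw [sI_smul, sI_add xu xv] at this
      have := mul_le_mul_of_nonneg_left (add_le_add y1 y2) (sq_nonneg A)
      nlinarith
    · obtain ⟨k, j, rfl⟩ : ∃ k j, l3 = [k, j] := List.length_eq_two.1 (by simp at h3 h2; omega)
      simp only [app_nil, app_cons] at *
      have y := hg.mixed H hA hh i k j
      generalize Xf Φ i g = u at *
      generalize Xf Φ j (Xf Φ k h) = v at *
      have xu : XS (P * (u * v) ^ 2) := ((x2.mul_right _).pow (by norm_num)).mul_left _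
      have : sI τ ((f * u * v) ^ 2) ≤ sI τ (A ^ 2 • (P * (u * v) ^ 2)) := by
        refine sI_mono xx (xu.smul _) fun x => ?_
        have a := a1 x
        simp only [SF.mul_ev, SF.smul_ev, SF.pow_ev, SF.add_ev]
        have := mul_le_mul_of_nonneg_right a (sq_nonneg (u.1 (τ, x) * v.1 (τ, x)))
        nlinarith
      rw [sI_smul] at this
      have := mul_le_mul_of_nonneg_left y (sq_nonneg A)
      nlinarith
  · obtain ⟨i, rfl⟩ : ∃ i, l1 = [i] := List.length_eq_one_iff.1 (by omega)
    obtain ⟨j, rfl⟩ : ∃ i, l2 = [i] := List.length_eq_one_iff.1 (by simp at h3 ⊢; omega)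
    obtain ⟨k, rfl⟩ : ∃ i, l3 = [i] := List.length_eq_one_iff.1 (by simp at h3 h2; omega)
    simp only [app_nil, app_cons] at *
    have y1 := hf.six H hA i
    have y2 := hg.six H hA j
    have y3 := hh.six H hA k
    generalize Xf Φ i f = u at *
    generalize Xf Φ j g = v at *
    generalize Xf Φ k h = w at *
    have xu : XS (u ^ 6) := x1.pow (by norm_num)
    have xv : XS (v ^ 6) := x2.pow (by norm_num)
    have xw : XS (w ^ 6) := x3.pow (by norm_num)
    have : sI τ ((u * v * w) ^ 2) ≤ sI τ ((1 / 3 : ℝ) • (u ^ 6 + v ^ 6 + w ^ 6)) := by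
      refine sI_mono xx (((xu.add xv).add xw).smul _) fun x => ?_
      simp only [SF.mul_ev, SF.smul_ev, SF.pow_ev, SF.add_ev]
      have hm : ∀ m n o : ℝ, 0 ≤ m → 0 ≤ n → 0 ≤ o → m * n * o ≤ 1 / 3 * (m ^ 3 + n ^ 3 + o ^ 3) := fun m n o hm hn ho => by
        nlinarith [mul_nonneg (add_nonneg (add_nonneg hm hn) ho) (add_nonneg (add_nonneg (sq_nonneg (m - n)) (sq_nonneg (n - o))) (sq_nonneg (m - o)))]
      have := hm _ _ _ (sq_nonneg (u.1 (τ, x))) (sq_nonneg (v.1 (τ, x))) (sq_nonneg (w.1 (τ, x)))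
      nlinarith
    rw [sI_smul, sI_add (xu.add xv) xw, sI_add xu xv] at this
    linarith

/-- Trilinear Gagliardo–Nirenberg estimate, for at most three fields distributed over three factors. -/
lemma tri (H : Hyp B Φ P) (hA : 0 < A) {f g h : SF} (hf : GN Φ P τ A Q f) (hg : GN Φ P τ A Q g) (hh : GN Φ P τ A Q h)
    (l1 l2 l3 : List (Fin 2)) (h3 : l1.length + l2.length + l3.length ≤ 3) :
    sI τ ((app (Xf Φ) l1 f * app (Xf Φ) l2 g * app (Xf Φ) l3 h) ^ 2) ≤ 314 * A ^ 4 * Q := by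
  have r1 : ∀ a b c : SF, a * b * c = b * a * c := fun a b c => by ring
  have r2 : ∀ a b c : SF, a * b * c = a * c * b := fun a b c => by ring
  rcases le_total l1.length l2.length with a | a <;> rcases le_total l2.length l3.length with b | b <;>
  rcases le_total l1.length l3.length with c | c
  · exact tri_sorted H hA hf hg hh l1 l2 l3 a b h3
  · exact tri_sorted H hA hf hg hh l1 l2 l3 a b h3
  · rw [r2]; exact tri_sorted H hA hf hh hg l1 l3 l2 c b (by omega)
  · rw [r2, r1]; exact tri_sorted H hA hh hf hg l3 l1 l2 c a (by omega)
  · rw [r1]; exact tri_sorted H hA hg hf hh l2 l1 l3 a c (by omega)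
  · rw [r1, r2]; exact tri_sorted H hA hg hh hf l2 l3 l1 b c (by omega)
  · rw [r1, r2, r1]; exact tri_sorted H hA hh hg hf l3 l2 l1 b a (by omega)
  · rw [r1, r2, r1]; exact tri_sorted H hA hh hg hf l3 l2 l1 b a (by omega)
end GN

/-! ### Coercivity and Klainerman–Sobolev bounds on hyperboloids -/

lemma app_Lf_eq_half {B : ℝ} {f g : SF} (h : ∀ p, B ≤ p.1 → f.1 p = g.1 p) (l) (p : ℝ × ℝ × ℝ)
    (hp : B ≤ p.1) : (app Lf l f).1 p = (app Lf l g).1 p := by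
  have := app_mem Lf (P := fun f => ∀ p : ℝ × ℝ × ℝ, B ≤ p.1 → f.1 p = 0) (fun i w hw p hp => by
    fin_cases i
    · simp only [Fin.zero_eta, Lf0, SF.add_ev, SF.mul_ev, pd_zero_half hw _ p hp]; simp
    · simp only [Fin.mk_one, Lf1, SF.add_ev, SF.mul_ev, pd_zero_half hw _ p hp]; simp) l
    (f - g) (fun p hp => by rw [SF.sub_ev, h p hp, sub_self]) p hp
  rwa [app_sub, SF.sub_ev, sub_eq_zero] at this

section
variable {B : ℝ} {Φ P : SF} {W : Fin 2 → SF} (H : Hyp B Φ P) (h : Sol B W)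
include H

/-- The energy density in terms of boosts. -/
lemma Hyp.ed_boost (w p) : (ed Φ w).1 p = 1 / 2 * ((B ^ 2 + p.1 ^ 2) * (P * pull Φ (pd 0 w)).1 p ^ 2
    + (P * pull Φ (Lf 0 w)).1 p ^ 2 + (P * pull Φ (Lf 1 w)).1 p ^ 2) := by
  have h1 := H.inv_ev p
  have h2 := H.sq_ev p
  simp only [ed, H.d1, H.d2, Lf0, Lf1, map_add, map_mul, pull_T, pull_X, SF.add_ev, SF.mul_ev, SF.smul_ev, SF.pow_ev]
  have eX0 : (cX 0).1 p = p.2.1 := rfl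
  have eX1 : (cX 1).1 p = p.2.2 := rfl
  rw [eX0, eX1]
  generalize (pull Φ (pd 0 w)).1 p = a at *
  generalize (pull Φ (pd 1 w)).1 p = b at *
  generalize (pull Φ (pd 2 w)).1 p = c at *
  generalize Φ.1 p = t at *
  generalize P.1 p = q at *
  have h3 : q ^ 2 * t ^ 2 = 1 := by rw [← mul_pow, h1, one_pow]
  have e : (q * (t * b + p.2.1 * a)) ^ 2 + (q * (t * c + p.2.2 * a)) ^ 2
    = q ^ 2 * t ^ 2 * (b ^ 2 + c ^ 2) + q * t * q * (2 * a * (b * p.2.1 + c * p.2.2)) + q ^ 2 * a ^ 2 * (p.2.1 ^ 2 + p.2.2 ^ 2) := by ring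
  have e2 : (B ^ 2 + p.1 ^ 2) * (q * a) ^ 2 = a ^ 2 * (q ^ 2 * t ^ 2) - q ^ 2 * a ^ 2 * (p.2.1 ^ 2 + p.2.2 ^ 2) := by rw [h2]; ring
  have : (B ^ 2 + p.1 ^ 2) * (q * a) ^ 2 + (q * (t * b + p.2.1 * a)) ^ 2 + (q * (t * c + p.2.2 * a)) ^ 2 =
    a ^ 2 + b ^ 2 + c ^ 2 + 2 * a * q * (b * p.2.1 + c * p.2.2) := by
    rw [add_assoc, e, e2, h3, h1]; ring
  rw [this]; ring

lemma Hyp.ed_nonneg (w p) : 0 ≤ (ed Φ w).1 p := by rw [H.ed_boost]; positivity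

/-- The energy density controls the gradient with weight `(B² + τ²) / t²`. -/
lemma Hyp.grad_le (w p) : (B ^ 2 + p.1 ^ 2) * (P.1 p ^ 2 * (gradSq w).1 (Φ.1 p, p.2)) ≤ 10 * (ed Φ w).1 p := by
  have h1 := H.inv_ev p
  have h2 := H.sq_ev p
  rw [H.ed_boost]
  simp only [gradSq, Lf0, Lf1, map_add, map_mul, pull_T, pull_X, SF.add_ev, SF.mul_ev, SF.pow_ev, pull_ev]
  have eX0 : (cX 0).1 p = p.2.1 := rfl
  have eX1 : (cX 1).1 p = p.2.2 := rfl
  rw [eX0, eX1]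
  generalize (pd 0 w).1 (Φ.1 p, p.2) = a at *
  generalize (pd 1 w).1 (Φ.1 p, p.2) = b at *
  generalize (pd 2 w).1 (Φ.1 p, p.2) = c at *
  generalize Φ.1 p = t at *
  generalize P.1 p = q at *
  obtain ⟨s, hs⟩ : ∃ s, s = B ^ 2 + p.1 ^ 2 := ⟨_, rfl⟩
  obtain ⟨x, hx⟩ : ∃ x, x = p.2.1 := ⟨_, rfl⟩
  obtain ⟨y, hy⟩ : ∃ y, y = p.2.2 := ⟨_, rfl⟩
  rw [← hs] at h2 ⊢
  rw [← hx, ← hy] at h2 ⊢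
  have hs0 : 0 ≤ s := by rw [hs]; positivity
  have h3 : q ^ 2 * t ^ 2 = 1 := by rw [← mul_pow, h1, one_pow]
  have sq : s * q ^ 2 ≤ 1 := by rw [← h3, h2]; nlinarith [mul_nonneg (sq_nonneg q) (add_nonneg (sq_nonneg x) (sq_nonneg y))]
  have xq : q ^ 2 * (x ^ 2 + y ^ 2) ≤ 1 := by rw [← h3, h2]; nlinarith [mul_nonneg (sq_nonneg q) hs0]
  have eb : b = q * (t * b + x * a) - q * x * a := by linear_combination -b * h1
  have ec : c = q * (t * c + y * a) - q * y * a := by linear_combination -c * h1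
  obtain ⟨m, hm⟩ : ∃ m, m = q * (t * b + x * a) := ⟨_, rfl⟩
  obtain ⟨n, hn⟩ : ∃ n, n = q * (t * c + y * a) := ⟨_, rfl⟩
  rw [← hm] at eb ⊢
  rw [← hn] at ec ⊢
  have b2 : b ^ 2 ≤ 2 * m ^ 2 + 2 * (q ^ 2 * x ^ 2 * a ^ 2) := by rw [eb]; nlinarith [sq_nonneg (m + q * x * a)]
  have c2 : c ^ 2 ≤ 2 * n ^ 2 + 2 * (q ^ 2 * y ^ 2 * a ^ 2) := by rw [ec]; nlinarith [sq_nonneg (n + q * y * a)]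
  have a2 := mul_le_mul_of_nonneg_right xq (sq_nonneg a)
  have g : a ^ 2 + b ^ 2 + c ^ 2 ≤ 3 * a ^ 2 + 2 * m ^ 2 + 2 * n ^ 2 := by nlinarith
  have g1 := mul_le_mul_of_nonneg_left g (show 0 ≤ s * q ^ 2 by positivity)
  have g2 := mul_le_mul_of_nonneg_right sq (show 0 ≤ 2 * m ^ 2 + 2 * n ^ 2 by positivity)
  have : 0 ≤ s * q ^ 2 * a ^ 2 := by positivity
  nlinarith [sq_nonneg m, sq_nonneg n]

lemma Hyp.ed_le_tot (p j) {l : List (Fin 2)} (hl : l.length ≤ 3) :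
    (ed Φ (app Lf l (W j))).1 p ≤ (totH Φ P W).1 p := by
  rw [totH, SF.sum_ev]
  simp only [SF.add_ev, SF.pow_ev, SF.sum_ev, SF.smul_ev]
  have a : (ed Φ (app Lf l (W j))).1 p ≤ ∑ l ∈ wd (Fin 2) 3, (ed Φ (app Lf l (W j))).1 p :=
    Finset.single_le_sum (f := fun l => (ed Φ (app Lf l (W j))).1 p) (fun i _ => H.ed_nonneg _ p) (mem_wd.2 hl)
  have b := Finset.single_le_sum (f := fun j => ∑ l ∈ wd (Fin 2) 3, (ed Φ (app Lf l (W j))).1 p + 1 / 8 * (P * pull Φ (W j)).1 p ^ 2)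
    (s := Finset.univ)
    (fun i _ => add_nonneg (Finset.sum_nonneg fun l _ => H.ed_nonneg _ p) (by positivity)) (Finset.mem_univ j)
  nlinarith [sq_nonneg ((P * pull Φ (W j)).1 p)]

lemma Hyp.u_le_tot (p j) : (P * pull Φ (W j)).1 p ^ 2 ≤ 8 * (totH Φ P W).1 p := by
  rw [totH, SF.sum_ev]
  simp only [SF.add_ev, SF.pow_ev, SF.sum_ev, SF.smul_ev]
  have a : 0 ≤ ∑ l ∈ wd (Fin 2) 3, (ed Φ (app Lf l (W j))).1 p := Finset.sum_nonneg fun l _ => H.ed_nonneg _ p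
  have b := Finset.single_le_sum (f := fun j => ∑ l ∈ wd (Fin 2) 3, (ed Φ (app Lf l (W j))).1 p + 1 / 8 * (P * pull Φ (W j)).1 p ^ 2)
    (s := Finset.univ)
    (fun i _ => add_nonneg (Finset.sum_nonneg fun l _ => H.ed_nonneg _ p) (by positivity)) (Finset.mem_univ j)
  linarith

lemma Hyp.tot_nonneg (p) : 0 ≤ (totH Φ P W).1 p := by
  have := H.u_le_tot (W := W) p 0
  nlinarith [sq_nonneg ((P * pull Φ (W 0)).1 p)]

/-- Boosted words up to order four, with the weight `1/t`. -/
lemma Hyp.word_le_tot (p j) {l : List (Fin 2)} (hl : l.length ≤ 4) :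
    (P * pull Φ (app Lf l (W j))).1 p ^ 2 ≤ 8 * (totH Φ P W).1 p := by
  rcases List.eq_nil_or_concat' l with rfl | ⟨l', i, rfl⟩
  · exact H.u_le_tot p j
  · have h1 := H.ed_le_tot (W := W) p j (l := l') (by simp at hl; omega)
    have h2 := H.tot_nonneg (W := W) p
    rw [H.ed_boost] at h1
    rw [app_append, app_cons, app_nil]
    have : 0 ≤ (B ^ 2 + p.1 ^ 2) * (P * pull Φ (pd 0 (app Lf l' (W j)))).1 p ^ 2 := by positivity
    fin_cases i
    · simp only [Fin.zero_eta]
      nlinarith [sq_nonneg ((P * pull Φ (Lf 1 (app Lf l' (W j)))).1 p)]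
    · simp only [Fin.mk_one]
      nlinarith [sq_nonneg ((P * pull Φ (Lf 0 (app Lf l' (W j)))).1 p)]

/-- Boosts of the time derivative gain a factor of the hyperbolic time. -/
lemma Hyp.psi_le_tot (p j) {l : List (Fin 2)} (hl : l.length ≤ 3) :
    (B ^ 2 + p.1 ^ 2) * (P * app (Xf Φ) l (pull Φ (pd 0 (W j)))).1 p ^ 2 ≤ 640 * (totH Φ P W).1 p := by
  have h2 := H.tot_nonneg (W := W) p
  have hB := H.hB
  have hs : 0 < B ^ 2 + p.1 ^ 2 := by positivity
  have hP := H.Ppos p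
  have key := app_Lf_pd l 0 (W j) (Φ.1 p, p.2) (10 * (totH Φ P W).1 p / ((B ^ 2 + p.1 ^ 2) * P.1 p ^ 2)) fun l' hl' => by
    rw [le_div_iff₀ (by positivity)]
    have := H.grad_le (app Lf l' (W j)) p
    have := H.ed_le_tot (W := W) p j (l := l') (by omega)
    nlinarith
  rw [← H.pull_app, SF.mul_ev, mul_pow, pull_ev]
  have hp : (4 : ℝ) ^ l.length ≤ 64 := by
    calc (4 : ℝ) ^ l.length ≤ 4 ^ 3 := pow_le_pow_right₀ (by norm_num) hl
      _ = 64 := by norm_num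
  have key2 := key.trans (mul_le_mul_of_nonneg_right hp (by positivity))
  rw [← mul_div_assoc, le_div_iff₀ (by positivity)] at key2
  linarith

/-- Sobolev inequality on a hyperboloid, in terms of the fields `Φ ∂ᵢ` and the weight `P = 1/Φ`. -/
lemma Hyp.sobolev {g G : SF} (hg : XS g) (hG : XS G) {τ : ℝ}
    (hh : ∀ l : List (Fin 2), l.length ≤ 2 → ∀ x, (P * app (Xf Φ) l g).1 (τ, x) ^ 2 ≤ G.1 (τ, x)) (x) :
    g.1 (τ, x) ^ 2 ≤ 6 * sI τ G := by
  have dx : ∀ w, pd 1 w = P * Xf Φ 0 w := fun w => by rw [Xf0, ← mul_assoc, H.inv, one_mul]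
  have dy : ∀ w, pd 2 w = P * Xf Φ 1 w := fun w => by rw [Xf1, ← mul_assoc, H.inv, one_mul]
  have key := sobolev_base (F := g ^ 2) (G := (6 : ℝ) • G) (hg.pow two_ne_zero) (hG.smul _) (τ := τ) (fun y => ?_) x
  · rw [sI_smul] at key
    exact (le_abs_self _).trans key
  have e : pd 2 (pd 1 (g ^ 2)) = 2 * ((P * Xf Φ 1 g) * (P * Xf Φ 0 g)) + 2 * ((P * g) * (P * Xf Φ 1 (Xf Φ 0 g)))
      - (2 : SF) * (pd 2 Φ * ((P * g) * (P * Xf Φ 0 g))) := by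
    rw [pd_sq, pd_mul, pd_mul, pd_two, dx g, pd_mul, H.dP, dy (Xf Φ 0 g), dy g]
    ring
  rw [e]
  have a0 := hh [] (by simp) y
  have a1 := hh [0] (by simp) y
  have a2 := hh [1] (by simp) y
  have a3 := hh [0, 1] (by simp) y
  simp only [app_nil, app_cons] at *
  have hd := dirabs H 1 (τ, y)
  simp only [show pd (dir 1) Φ = pd 2 Φ from rfl] at hd
  generalize P * g = u at *
  generalize P * Xf Φ 0 g = v at *
  generalize P * Xf Φ 1 g = w at *
  generalize P * Xf Φ 1 (Xf Φ 0 g) = z at *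
  generalize pd 2 Φ = d at *
  simp only [SF.sub_ev, SF.add_ev, SF.mul_ev, SF.smul_ev, SF.two_ev]
  generalize u.1 (τ, y) = u at *
  generalize v.1 (τ, y) = v at *
  generalize w.1 (τ, y) = w at *
  generalize z.1 (τ, y) = z at *
  generalize d.1 (τ, y) = d at *
  generalize G.1 (τ, y) = K at *
  have m : ∀ a b : ℝ, a ^ 2 ≤ K → b ^ 2 ≤ K → |a * b| ≤ K := fun a b ha hb => by
    rw [abs_le]; constructor <;> nlinarith [sq_nonneg (a - b), sq_nonneg (a + b)]
  have m1 := m _ _ a2 a1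
  have m2 := m _ _ a0 a3
  have m3 : |d * (u * v)| ≤ K := by
    rw [abs_mul]
    have := m _ _ a0 a1
    nlinarith [abs_nonneg d, abs_nonneg (u * v)]
  rw [abs_le] at *
  constructor <;> linarith [m1.1, m1.2, m2.1, m2.2, m3.1, m3.2]

include h

lemma Hyp.XS_tot : XS (totH Φ P W) := XS.sum fun j _ => (XS.sum fun l _ => XS_ed fun i => H.XSp ((OV.app_Lf (h.ov j) l).pd i)).add
    ((((H.XSp (h.ov j)).mul_left P).pow two_ne_zero).smul _)

/-- Pointwise bound for the time derivatives. -/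
lemma Hyp.psi_sup (τ x j) : (B ^ 2 + τ ^ 2) * (pd 0 (W j)).1 (Φ.1 (τ, x), x) ^ 2 ≤ 3840 * sI τ (totH Φ P W) := by
  have hB := H.hB
  have hs : 0 < B ^ 2 + τ ^ 2 := by positivity
  have := H.sobolev (g := pull Φ (pd 0 (W j))) (G := (640 / (B ^ 2 + τ ^ 2)) • totH Φ P W) (τ := τ) (H.XSp ((h.ov j).pd 0))
    ((H.XS_tot h).smul _) (fun l hl x => by
      rw [SF.smul_ev, div_mul_eq_mul_div, le_div_iff₀ hs, mul_comm]
      exact H.psi_le_tot (τ, x) j (by omega)) x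
  rw [sI_smul, pull_ev, div_mul_eq_mul_div, ← mul_div_assoc, le_div_iff₀ hs] at this
  linarith

/-- Pointwise bound for at most two boosts of the solution. -/
lemma Hyp.word_sup (τ x j) {l : List (Fin 2)} (hl : l.length ≤ 2) :
    (app Lf l (W j)).1 (Φ.1 (τ, x), x) ^ 2 ≤ 48 * sI τ (totH Φ P W) := by
  have := H.sobolev (g := pull Φ (app Lf l (W j))) (G := (8 : ℝ) • totH Φ P W) (τ := τ) (H.XSp (OV.app_Lf (h.ov j) l))
    ((H.XS_tot h).smul _) (fun l' hl' x => by
      rw [SF.smul_ev, ← H.pull_app, ← app_append]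
      exact H.word_le_tot (τ, x) j (by simp; omega)) x
  rw [sI_smul, pull_ev] at this
  simp only at this
  linarith
end

/-! ### Growth of the boosted energy -/

/-- Triples of words of total length at most three. -/
def trip : Finset (List (Fin 2) × List (Fin 2) × List (Fin 2)) :=
  (wd (Fin 2) 3 ×ˢ wd (Fin 2) 3 ×ˢ wd (Fin 2) 3).filter fun t => t.1.length + t.2.1.length + t.2.2.length ≤ 3
lemma mem_trip {t} : t ∈ trip ↔ t.1.length + t.2.1.length + t.2.2.length ≤ 3 := by
  simp only [trip, Finset.mem_filter, Finset.mem_product, mem_wd]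
  constructor
  · exact fun h => h.2
  · intro h; exact ⟨⟨by omega, by omega, by omega⟩, h⟩

section
variable {B : ℝ} {Φ P : SF} {W : Fin 2 → SF}

/-- Under the pointwise bootstrap bound, the energy makes the time derivatives satisfy the hypotheses of the
trilinear estimate. -/
lemma Hyp.gn (H : Hyp B Φ P) (h : Sol B W) {τ A : ℝ} (hb : ∀ j x, Φ.1 (τ, x) * (pd 0 (W j)).1 (Φ.1 (τ, x), x) ^ 2 ≤ A ^ 2) (j) :
    GN Φ P τ A (640 / (B ^ 2 + τ ^ 2) * sI τ (totH Φ P W)) (pull Φ (pd 0 (W j))) := by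
  have hB := H.hB
  have hs : 0 < B ^ 2 + τ ^ 2 := by positivity
  have xs := H.XSp ((h.ov j).pd 0)
  refine ⟨xs, fun x => hb j x, fun l hl => ?_⟩
  rw [← sI_smul]
  refine sI_mono (((xs.app_Xf Φ l).mul_left _).pow two_ne_zero) ((H.XS_tot h).smul _) fun x => ?_
  rw [SF.smul_ev, SF.pow_ev, div_mul_eq_mul_div, le_div_iff₀ hs, mul_comm]
  exact H.psi_le_tot (τ, x) j hl

/-- `L²` bound for the commuted nonlinearity on a hyperboloid. -/
lemma Hyp.box_int (H : Hyp B Φ P) (h : Sol B W) {τ A : ℝ} (hA : 0 < A)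
    (hb : ∀ j x, Φ.1 (τ, x) * (pd 0 (W j)).1 (Φ.1 (τ, x), x) ^ 2 ≤ A ^ 2) (j) {l : List (Fin 2)} (hl : l.length ≤ 3) :
    sI τ (pull Φ (box (app Lf l (W j))) ^ 2) ≤
      1000 * (trip.card * (314 * A ^ 4 * (640 / (B ^ 2 + τ ^ 2) * sI τ (totH Φ P W)))) := by
  obtain ⟨ψ, hψ⟩ : ∃ ψ : Fin 2 → SF, ψ = fun j => pull Φ (pd 0 (W j)) := ⟨_, rfl⟩
  have gn : ∀ j, GN Φ P τ A (640 / (B ^ 2 + τ ^ 2) * sI τ (totH Φ P W)) (ψ j) := fun j => by rw [hψ]; exact H.gn h hb j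
  obtain ⟨S, hS⟩ : ∃ S, S = fun t : List (Fin 2) × List (Fin 2) × List (Fin 2) =>
    (app (Xf Φ) t.1 (ψ (j + 1)) * app (Xf Φ) t.2.1 (ψ (j + 1)) * app (Xf Φ) t.2.2 (ψ j)) ^ 2 := ⟨_, rfl⟩
  have xS : ∀ t ∈ trip, XS (S t) := fun t _ => by
    rw [hS]; exact (((gn j).xs.app_Xf Φ _).mul_left _).pow two_ne_zero
  have xb : XS (pull Φ (box (app Lf l (W j))) ^ 2) := by
    have ov := OV.app_Lf (h.ov j) l
    exact (H.XSp (((ov.pd 0).pd 0).sub ((ov.pd 1).pd 1) |>.sub ((ov.pd 2).pd 2))).pow two_ne_zero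
  have key : sI τ (pull Φ (box (app Lf l (W j))) ^ 2) ≤ sI τ ((1000 : ℝ) • ∑ t ∈ trip, S t) := by
    refine sI_mono xb ((XS.sum xS).smul _) fun x => ?_
    rw [SF.smul_ev, SF.sum_ev, SF.pow_ev]
    have e1 : (pull Φ (box (app Lf l (W j)))).1 (τ, x) =
        -(app (Xf Φ) l (ψ (j + 1) * ψ (j + 1) * ψ j)).1 (τ, x) := by
      have e2 : (app Lf l (box (W j))).1 (Φ.1 (τ, x), x) = (app Lf l (-(pd 0 (W (j + 1)) * pd 0 (W (j + 1)) * pd 0 (W j)))).1 (Φ.1 (τ, x), x) := by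
        refine app_Lf_eq_half (B := B) (fun p hp => ?_) l _ (H.geB _)
        rw [h.pde j p hp]; simp only [SF.neg_ev, SF.mul_ev]; ring
      rw [app_comm Lf (T := box) box_Lf, pull_ev, e2, app_neg, SF.neg_ev, neg_inj, hψ]
      simp only [← map_mul, ← H.pull_app, pull_ev]
    rw [e1, neg_sq]
    have key := app_triple (Xf Φ) (J := fun f => f.1 (τ, x) ^ 2) (fun v w => by
      simp only [SF.add_ev]; nlinarith [sq_nonneg (v.1 (τ, x) - w.1 (τ, x))]) l (ψ (j + 1)) (ψ (j + 1)) (ψ j)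
      (∑ t ∈ trip, (S t).1 (τ, x)) (fun l1 l2 l3 hl' => by
        have := Finset.single_le_sum (f := fun t => (S t).1 (τ, x)) (s := trip) (fun t _ => by rw [hS]; simp only [SF.pow_ev]; positivity)
          (mem_trip.2 (show (l1, l2, l3).1.length + _ + _ ≤ 3 by simp only; omega))
        rw [hS] at this ⊢
        exact this)
    refine key.trans ?_
    have hp : (10 : ℝ) ^ l.length ≤ 1000 := by
      calc (10 : ℝ) ^ l.length ≤ 10 ^ 3 := pow_le_pow_right₀ (by norm_num) hl
        _ = 1000 := by norm_num
    exact mul_le_mul_of_nonneg_right hp (Finset.sum_nonneg fun t _ => by rw [hS]; simp only [SF.pow_ev]; positivity)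
  rw [sI_smul, sI_sum xS] at key
  refine key.trans (mul_le_mul_of_nonneg_left ?_ (by norm_num))
  rw [← nsmul_eq_mul]
  refine Finset.sum_le_card_nsmul _ _ _ fun t ht => ?_
  rw [hS]
  exact GN.tri H hA (gn _) (gn _) (gn _) _ _ _ (mem_trip.1 ht)

/-- The energy inequality on hyperboloids under a pointwise bound. -/
lemma hyp_ineq : ∃ C, 0 ≤ C ∧ ∀ B Φ P W, Hyp B Φ P → Sol B W → ∀ τ A, 0 ≤ τ → 0 < A →
    (∀ j x, Φ.1 (τ, x) * (pd 0 (W j)).1 (Φ.1 (τ, x), x) ^ 2 ≤ A ^ 2) →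
    ∃ D, HasDerivAt (fun s => sI s (totH Φ P W)) D τ ∧ D ≤ τ / (B ^ 2 + τ ^ 2) * ((C * A ^ 2 + 1 / 4) * sI τ (totH Φ P W)) := by
  obtain ⟨M, hM⟩ : ∃ M : ℝ, M = 1 + 1000 * (trip.card * (314 * 640)) / 2 := ⟨_, rfl⟩
  have hM0 : 0 ≤ M := by rw [hM]; positivity
  refine ⟨2 * (wd (Fin 2) 3).card * M, by positivity, fun B Φ P W H h τ A hτ hA hb => ?_⟩
  have hB := H.hB
  obtain ⟨E, hE⟩ : ∃ E, E = sI τ (totH Φ P W) := ⟨_, rfl⟩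
  have hE0 : 0 ≤ E := hE ▸ sI_nonneg fun x => H.tot_nonneg _
  obtain ⟨s, hs⟩ : ∃ s, s = B ^ 2 + τ ^ 2 := ⟨_, rfl⟩
  have hs0 : 0 < s := by rw [hs]; positivity
  have X1 : ∀ j l i, XS (pull Φ (pd i (app Lf l (W j)))) := fun j l i => H.XSp ((OV.app_Lf (h.ov j) l).pd i)
  have X2 : ∀ j, XS ((P * pull Φ (W j)) ^ 2) := fun j => ((H.XSp (h.ov j)).mul_left P).pow two_ne_zero
  have XT := H.XS_tot h
  have edE : ∀ j, ∀ l : List (Fin 2), l.length ≤ 3 → sI τ (ed Φ (app Lf l (W j))) ≤ E := fun j l hl => by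
    rw [hE]; exact sI_mono (XS_ed (X1 j l)) XT fun x => H.ed_le_tot _ j hl
  have b1 : ∀ j, ∀ l ∈ wd (Fin 2) 3, sI τ (pd 0 Φ * (pull Φ (pd 0 (app Lf l (W j))) * pull Φ (box (app Lf l (W j))))) ≤
      τ / s * (M * A ^ 2 * E) := fun j l hl => by
    have hl := mem_wd.1 hl
    obtain ⟨w, hw⟩ : ∃ w, w = app Lf l (W j) := ⟨_, rfl⟩
    have ov : OV B w := hw ▸ OV.app_Lf (h.ov j) l
    have xb : XS (pull Φ (box w)) := H.XSp (((ov.pd 0).pd 0).sub ((ov.pd 1).pd 1) |>.sub ((ov.pd 2).pd 2))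
    have xe : XS (ed Φ w) := hw ▸ XS_ed (X1 j l)
    have bi := H.box_int h hA hb j hl
    have ee := edE j l hl
    have x0 : XS (pull Φ (pd 0 w)) := hw ▸ X1 j l 0
    rw [← hw] at bi ee ⊢
    have : sI τ (pd 0 Φ * (pull Φ (pd 0 w) * pull Φ (box w))) ≤
        sI τ ((τ / s) • (A ^ 2 • ed Φ w + (s / (2 * A ^ 2)) • pull Φ (box w) ^ 2)) := by
      refine sI_mono ((x0.mul_right _).mul_left _) (((xe.smul _).add ((xb.pow two_ne_zero).smul _)).smul _) fun x => ?_
      have eb := H.ed_boost w (τ, x)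
      simp only [← hs, SF.mul_ev] at eb
      rw [H.d0]
      simp only [SF.smul_ev, SF.mul_ev, SF.add_ev, SF.pow_ev, eb]
      have eT : cT.1 (τ, x) = τ := rfl
      rw [eT]
      generalize (pull Φ (pd 0 w)).1 (τ, x) = a at *
      generalize (pull Φ (box w)).1 (τ, x) = b at *
      generalize (pull Φ (Lf 0 w)).1 (τ, x) = c at *
      generalize (pull Φ (Lf 1 w)).1 (τ, x) = d at *
      generalize P.1 (τ, x) = p at *
      have e1 : p * τ * (a * b) = τ / s * (s * (p * a) * b) := by field_simp
      rw [e1]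
      refine mul_le_mul_of_nonneg_left ?_ (by positivity)
      have e2 : A ^ 2 * (1 / 2 * (s * (p * a) ^ 2 + (p * c) ^ 2 + (p * d) ^ 2)) + s / (2 * A ^ 2) * b ^ 2 - s * (p * a) * b
        = s * (A ^ 2 * (p * a) - b) ^ 2 / (2 * A ^ 2) + A ^ 2 * (1 / 2 * ((p * c) ^ 2 + (p * d) ^ 2)) := by field_simp; ring
      have : 0 ≤ s * (A ^ 2 * (p * a) - b) ^ 2 / (2 * A ^ 2) + A ^ 2 * (1 / 2 * ((p * c) ^ 2 + (p * d) ^ 2)) := by positivity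
      linarith
    rw [sI_smul, sI_add (xe.smul _) ((xb.pow two_ne_zero).smul _), sI_smul, sI_smul] at this
    refine this.trans (mul_le_mul_of_nonneg_left ?_ (by positivity))
    rw [← hs, ← hE] at bi
    have t1 := mul_le_mul_of_nonneg_left ee (sq_nonneg A)
    have t2 := mul_le_mul_of_nonneg_left bi (show 0 ≤ s / (2 * A ^ 2) by positivity)
    have e : A ^ 2 * E + s / (2 * A ^ 2) * (1000 * (trip.card * (314 * A ^ 4 * (640 / s * E)))) = M * A ^ 2 * E := by
      rw [hM]; field_simp
    linarith
  have b2 : ∀ j, sI τ (pd 0 ((P * pull Φ (W j)) ^ 2)) ≤ τ / s * E := fun j => by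
    have ee := edE j [] (by simp)
    rw [app_nil] at ee
    have xe : XS (ed Φ (W j)) := XS_ed (X1 j [])
    have : sI τ (pd 0 ((P * pull Φ (W j)) ^ 2)) ≤ sI τ ((τ / s) • ed Φ (W j)) := by
      refine sI_mono ((X2 j).pd 0) (xe.smul _) fun x => ?_
      have eb := H.ed_boost (W j) (τ, x)
      simp only [← hs, SF.mul_ev] at eb
      rw [pd_sq, pd_mul, H.dP, pd0_pull, H.d0]
      simp only [SF.smul_ev, SF.mul_ev, SF.add_ev, SF.pow_ev, SF.neg_ev, SF.two_ev, eb]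
      have eT : cT.1 (τ, x) = τ := rfl
      rw [eT]
      generalize (pull Φ (pd 0 (W j))).1 (τ, x) = a at *
      generalize (pull Φ (W j)).1 (τ, x) = u at *
      generalize (pull Φ (Lf 0 (W j))).1 (τ, x) = c at *
      generalize (pull Φ (Lf 1 (W j))).1 (τ, x) = d at *
      generalize P.1 (τ, x) = p at *
      have e1 : τ / s * (1 / 2 * (s * (p * a) ^ 2 + (p * c) ^ 2 + (p * d) ^ 2)) = τ * (1 / 2 * (p * a) ^ 2) + τ / s * (1 / 2 * ((p * c) ^ 2 + (p * d) ^ 2)) := by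
        field_simp; ring
      rw [e1]
      have : 0 ≤ τ / s * (1 / 2 * ((p * c) ^ 2 + (p * d) ^ 2)) := by positivity
      have : 0 ≤ τ * (p * a - 2 * p ^ 2 * u) ^ 2 := by positivity
      nlinarith
    rw [sI_smul] at this
    exact this.trans (mul_le_mul_of_nonneg_left ee (by positivity))
  have hd : HasDerivAt (fun s => sI s (totH Φ P W)) (∑ j, (∑ l ∈ wd (Fin 2) 3, sI τ (pd 0 Φ * (pull Φ (pd 0 (app Lf l (W j))) * pull Φ (box (app Lf l (W j)))))
      + 1 / 8 * sI τ (pd 0 ((P * pull Φ (W j)) ^ 2)))) τ := by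
    have e : (fun s => sI s (totH Φ P W)) = fun s => ∑ j, (∑ l ∈ wd (Fin 2) 3, sI s (ed Φ (app Lf l (W j))) + 1 / 8 * sI s ((P * pull Φ (W j)) ^ 2)) := by
      funext s
      have x3 : ∀ j, XS (∑ l ∈ wd (Fin 2) 3, ed Φ (app Lf l (W j))) := fun j => XS.sum fun l _ => XS_ed (X1 j l)
      rw [totH, sI_sum fun j _ => (x3 j).add ((X2 j).smul _)]
      refine Finset.sum_congr rfl fun j _ => ?_
      rw [sI_add (x3 j) ((X2 j).smul _), sI_sum fun l _ => XS_ed (X1 j l), sI_smul]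
    rw [e]
    refine HasDerivAt.fun_sum fun j _ => HasDerivAt.add ?_ ((hasDerivAt_sI (X2 j) τ).const_mul _)
    exact HasDerivAt.fun_sum fun l _ => hasDerivAt_energy (X1 j l) τ
  refine ⟨_, hd, ?_⟩
  have b3 : ∀ j ∈ (Finset.univ : Finset (Fin 2)), (∑ l ∈ wd (Fin 2) 3, sI τ (pd 0 Φ * (pull Φ (pd 0 (app Lf l (W j))) * pull Φ (box (app Lf l (W j)))))
      + 1 / 8 * sI τ (pd 0 ((P * pull Φ (W j)) ^ 2))) ≤ (wd (Fin 2) 3).card * (τ / s * (M * A ^ 2 * E)) + 1 / 8 * (τ / s * E) := fun j _ => by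
    have := Finset.sum_le_card_nsmul _ _ _ (b1 j)
    rw [nsmul_eq_mul] at this
    linarith [b2 j]
  have := Finset.sum_le_card_nsmul _ _ _ b3
  rw [nsmul_eq_mul, Finset.card_univ, Fintype.card_fin, Nat.cast_ofNat] at this
  rw [← hs, ← hE]
  linarith

/-- Slow growth of the energy as long as the pointwise bound holds. -/
lemma hyp_growth : ∃ κ, 0 < κ ∧ ∀ B Φ P W, Hyp B Φ P → Sol B W → ∀ lam A, 0 < A → A ≤ κ →
    (∀ τ, 0 ≤ τ → τ ≤ lam → ∀ j x, Φ.1 (τ, x) * (pd 0 (W j)).1 (Φ.1 (τ, x), x) ^ 2 ≤ A ^ 2) →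
    ∀ τ, 0 ≤ τ → τ ≤ lam → sI τ (totH Φ P W) ^ 4 ≤ sI 0 (totH Φ P W) ^ 4 * (B ^ 2 + τ ^ 2) := by
  obtain ⟨C, hC, hh⟩ := hyp_ineq
  obtain ⟨κ, hκ⟩ : ∃ κ : ℝ, κ = min 1 (1 / (4 * (C + 1))) := ⟨_, rfl⟩
  have hκ0 : 0 < κ := by rw [hκ]; positivity
  refine ⟨κ, hκ0, fun B Φ P W H h lam A hA hAκ hb τ hτ hτl => ?_⟩
  have hA1 : A ≤ 1 := hAκ.trans (hκ ▸ min_le_left _ _)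
  have hA2 : A ≤ 1 / (4 * (C + 1)) := hAκ.trans (hκ ▸ min_le_right _ _)
  have hB := H.hB
  have hCA : C * A ^ 2 ≤ 1 / 4 := by
    rw [le_div_iff₀ (by positivity)] at hA2
    nlinarith [mul_nonneg hC hA.le]
  obtain ⟨F, hF⟩ : ∃ F, F = fun s => sI s (totH Φ P W) := ⟨_, rfl⟩
  have hF0 : ∀ s, 0 ≤ F s := fun s => by rw [hF]; exact sI_nonneg fun x => H.tot_nonneg _
  have hd : ∀ s ∈ Set.Icc 0 lam, ∃ D, HasDerivAt F D s ∧ D ≤ s / (B ^ 2 + s ^ 2) * (1 / 2 * F s) := fun s hs => by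
    obtain ⟨D, h1, h2⟩ := hh B Φ P W H h s A hs.1 hA (hb s hs.1 hs.2)
    refine ⟨D, hF ▸ h1, h2.trans (mul_le_mul_of_nonneg_left ?_ (div_nonneg hs.1 (by positivity)))⟩
    rw [hF]
    exact mul_le_mul_of_nonneg_right (by linarith) (by have := hF0 s; rwa [hF] at this)
  choose! D hD1 hD2 using hd
  have hzd : ∀ s ∈ Set.Icc 0 lam, HasDerivAt (fun s => F s ^ 4 / (B ^ 2 + s ^ 2))
      ((4 * F s ^ 3 * D s * (B ^ 2 + s ^ 2) - F s ^ 4 * (2 * s)) / (B ^ 2 + s ^ 2) ^ 2) s := fun s hs => by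
    have hp : B ^ 2 + s ^ 2 ≠ 0 := by positivity
    have := ((hD1 s hs).pow 4).div (((hasDerivAt_id s).pow 2).const_add (B ^ 2)) hp
    refine this.congr_deriv ?_
    simp
  -- the growth rate at most `τ / (2 (B² + τ²))` makes `E⁴ / (B² + τ²)` nonincreasing
  have anti : AntitoneOn (fun s => F s ^ 4 / (B ^ 2 + s ^ 2)) (Set.Icc 0 lam) := by
    refine antitoneOn_of_deriv_nonpos (convex_Icc 0 lam) (fun s hs => (hzd s hs).continuousAt.continuousWithinAt)
      (fun s hs => (hzd s (interior_subset hs)).differentiableAt.differentiableWithinAt) fun s hs => ?_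
    have hs := interior_subset hs
    rw [(hzd s hs).deriv]
    refine div_nonpos_of_nonpos_of_nonneg ?_ (by positivity)
    have hp : 0 < B ^ 2 + s ^ 2 := by positivity
    have := mul_le_mul_of_nonneg_left (hD2 s hs) (show 0 ≤ 4 * F s ^ 3 * (B ^ 2 + s ^ 2) by have := hF0 s; positivity)
    have e : 4 * F s ^ 3 * (B ^ 2 + s ^ 2) * (s / (B ^ 2 + s ^ 2) * (1 / 2 * F s)) = F s ^ 4 * (2 * s) := by field_simp; ring
    linarith
  have key := anti (Set.left_mem_Icc.2 (hτ.trans hτl)) ⟨hτ, hτl⟩ hτ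
  rw [hF] at key
  simp only at key
  rw [div_le_iff₀ (by positivity)] at key
  refine key.trans (mul_le_mul_of_nonneg_right (div_le_self (by positivity) ?_) (by positivity))
  nlinarith
end

/-! ### The profile equation along outgoing rays -/

/-- The rotation field. -/
def Om (w : SF) : SF := cX 0 * pd 2 w - cX 1 * pd 1 w

lemma Om_sq (w : SF) : cT ^ 2 * Om (Om w) = cX 0 ^ 2 * Lf 1 (Lf 1 w) - cX 0 * cX 1 * (Lf 0 (Lf 1 w) + Lf 1 (Lf 0 w))
    + cX 1 ^ 2 * Lf 0 (Lf 0 w) - cT * cX 0 * Lf 0 w - cT * cX 1 * Lf 1 w := by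
  simp only [Om, Lf0, Lf1, pd_sub, pd_add, pd_mul, pd0_T, pd1_T, pd2_T, pd0_X0, pd1_X0, pd2_X0, pd0_X1, pd1_X1, pd2_X1,
      pd_comm 1 0, pd_comm 2 0, pd_comm 2 1]
  ring

/-- The profile `½(∂_r - ∂_t)(r^{1/2} w)` along the outgoing ray `r = t - q` in direction `ω`. -/
def rV (w : SF) (q a b t : ℝ) : ℝ :=
  w.1 (t, (t - q) * a, (t - q) * b) / (4 * √(t - q)) + √(t - q) / 2 *
    (a * (pd 1 w).1 (t, (t - q) * a, (t - q) * b) + b * (pd 2 w).1 (t, (t - q) * a, (t - q) * b)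
      - (pd 0 w).1 (t, (t - q) * a, (t - q) * b))

/-- The companion `½(∂_r + ∂_t)(r^{1/2} w)`, which decays faster. -/
def rD (w : SF) (q a b t : ℝ) : ℝ :=
  w.1 (t, (t - q) * a, (t - q) * b) / (4 * √(t - q)) + √(t - q) / 2 *
    (a * (pd 1 w).1 (t, (t - q) * a, (t - q) * b) + b * (pd 2 w).1 (t, (t - q) * a, (t - q) * b)
      + (pd 0 w).1 (t, (t - q) * a, (t - q) * b))

/-- The angular source term along a ray. -/
def rG (w : SF) (q a b t : ℝ) : ℝ :=
  -(4 * (Om (Om w)).1 (t, (t - q) * a, (t - q) * b) + w.1 (t, (t - q) * a, (t - q) * b)) / (8 * √(t - q) ^ 3)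

lemma rD_sub_rV (w q a b t) : rD w q a b t - rV w q a b t = √(t - q) * (pd 0 w).1 (t, (t - q) * a, (t - q) * b) := by
  unfold rD rV; ring

/-- The derivative along the outgoing ray is `∂ₜ + ∂ᵣ`. -/
lemma ray_hasDeriv (f : SF) (q a b t : ℝ) : HasDerivAt (fun t => f.1 (t, (t - q) * a, (t - q) * b))
    ((pd 0 f).1 (t, (t - q) * a, (t - q) * b) + a * (pd 1 f).1 (t, (t - q) * a, (t - q) * b)
      + b * (pd 2 f).1 (t, (t - q) * a, (t - q) * b)) t := by
  have h1 : HasDerivAt (fun t : ℝ => (t - q) * a) a t := by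
    simpa using ((hasDerivAt_id t).sub_const q).mul_const a
  have h2 : HasDerivAt (fun t : ℝ => (t - q) * b) b t := by
    simpa using ((hasDerivAt_id t).sub_const q).mul_const b
  have := hasDerivAt_curve f (hasDerivAt_id t) h1 h2
  refine this.congr_deriv ?_
  simp only [id, one_mul]

/-- The profile equation along an outgoing ray. -/
lemma rV_deriv {B : ℝ} {W : Fin 2 → SF} (h : Sol B W) (j) {q a b t : ℝ} (hab : a ^ 2 + b ^ 2 = 1) (ht : B ≤ t) (hq : q < t) :
    HasDerivAt (rV (W j) q a b) (√(t - q) / 2 * (pd 0 (W (j + 1))).1 (t, (t - q) * a, (t - q) * b) ^ 2 *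
      (pd 0 (W j)).1 (t, (t - q) * a, (t - q) * b) + rG (W j) q a b t) t := by
  have hr : 0 < t - q := by linarith
  have hk : 0 < √(t - q) := Real.sqrt_pos.2 hr
  have d1 : HasDerivAt (fun t => √(t - q)) (1 / (2 * √(t - q))) t :=
    ((hasDerivAt_id t).sub_const q).sqrt hr.ne'
  have d2 := (ray_hasDeriv (W j) q a b t).div (d1.const_mul 4) (by positivity)
  have d3 := (d1.div_const 2).mul ((((ray_hasDeriv (pd 1 (W j)) q a b t).const_mul a).add
    ((ray_hasDeriv (pd 2 (W j)) q a b t).const_mul b)).sub (ray_hasDeriv (pd 0 (W j)) q a b t))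
  have d4 := d2.add d3
  have P := h.pde j (t, (t - q) * a, (t - q) * b) ht
  refine HasDerivAt.congr_deriv (f := rV (W j) q a b) d4 ?_
  simp only [Pi.add_apply, Pi.sub_apply]
  unfold rG
  have eO : (Om (Om (W j))).1 (t, (t - q) * a, (t - q) * b) =
      (t - q) ^ 2 * (a ^ 2 * (pd 2 (pd 2 (W j))).1 (t, (t - q) * a, (t - q) * b) -
        2 * a * b * (pd 2 (pd 1 (W j))).1 (t, (t - q) * a, (t - q) * b) +
        b ^ 2 * (pd 1 (pd 1 (W j))).1 (t, (t - q) * a, (t - q) * b)) -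
      (t - q) * (a * (pd 1 (W j)).1 (t, (t - q) * a, (t - q) * b) + b * (pd 2 (W j)).1 (t, (t - q) * a, (t - q) * b)) := by
    have : Om (Om (W j)) = cX 0 ^ 2 * pd 2 (pd 2 (W j)) - 2 * cX 0 * cX 1 * pd 2 (pd 1 (W j)) + cX 1 ^ 2 * pd 1 (pd 1 (W j))
        - cX 0 * pd 1 (W j) - cX 1 * pd 2 (W j) := by
      simp only [Om, pd_sub, pd_add, pd_mul, pd1_X0, pd2_X0, pd1_X1, pd2_X1, pd_comm 1 2]
      ring
    rw [this]
    simp only [SF.sub_ev, SF.add_ev, SF.mul_ev, SF.pow_ev, SF.two_ev]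
    have e0 : (cX 0).1 (t, (t - q) * a, (t - q) * b) = (t - q) * a := rfl
    have e1 : (cX 1).1 (t, (t - q) * a, (t - q) * b) = (t - q) * b := rfl
    rw [e0, e1]; ring
  rw [eO]
  simp only [box, SF.sub_ev] at P
  rw [pd_comm 1 0, pd_comm 2 0, pd_comm 1 2]
  obtain ⟨k, hk'⟩ : ∃ k, k = √(t - q) := ⟨_, rfl⟩
  have hkr : t - q = k ^ 2 := by rw [hk', Real.sq_sqrt hr.le]
  rw [← hk'] at hk ⊢
  rw [hkr] at P ⊢
  obtain ⟨x, hx⟩ : ∃ x, x = (t, k ^ 2 * a, k ^ 2 * b) := ⟨_, rfl⟩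
  rw [← hx] at P ⊢
  generalize (pd 0 (pd 0 (W j))).1 x = u00 at *
  generalize (pd 1 (pd 1 (W j))).1 x = u11 at *
  generalize (pd 2 (pd 2 (W j))).1 x = u22 at *
  generalize (pd 0 (pd 1 (W j))).1 x = u01 at *
  generalize (pd 0 (pd 2 (W j))).1 x = u02 at *
  generalize (pd 2 (pd 1 (W j))).1 x = u12 at *
  generalize (pd 0 (W j)).1 x = u0 at *
  generalize (pd 1 (W j)).1 x = u1 at *
  generalize (pd 2 (W j)).1 x = u2 at *
  generalize (W j).1 x = u at *
  generalize (pd 0 (W (j+1))).1 x = v0 at *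
  have hu00 : u00 = u11 + u22 - v0 ^ 2 * u0 := by linarith
  rw [hu00]
  field_simp
  linear_combination 64 * k ^ 4 * (u11 + u22) * hab

/-- Pointwise control by `Y` of the invariantly weighted velocities and of the words of at most two boosts. -/
def Ctl (W : Fin 2 → SF) (Y : ℝ) (p : ℝ × ℝ × ℝ) : Prop := ∀ j,
  (p.1 ^ 2 - p.2.1 ^ 2 - p.2.2 ^ 2) * (pd 0 (W j)).1 p ^ 2 ≤ Y ∧
  ∀ l : List (Fin 2), l.length ≤ 2 → (app Lf l (W j)).1 p ^ 2 ≤ Y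

/-- In the zone `t ≥ 2q`, `rD` decays like `(Y/t)^{1/2}`. -/
lemma rD_est {W : Fin 2 → SF} {Y q a b t : ℝ} (hab : a ^ 2 + b ^ 2 = 1) (hq : 0 ≤ q) (ht : 0 < t) (hqt : 2 * q ≤ t)
    (h : Ctl W Y (t, (t - q) * a, (t - q) * b)) (j) : rD (W j) q a b t ^ 2 ≤ 4 * Y / t := by
  have h0 := (h j).1
  have h1 := (h j).2 [] (by simp)
  have h2 := (h j).2 [0] (by simp)
  have h3 := (h j).2 [1] (by simp)
  simp only [app_cons, app_nil, Lf0, Lf1, SF.add_ev, SF.mul_ev] at h1 h2 h3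
  have e0 : (cX 0).1 (t, (t - q) * a, (t - q) * b) = (t - q) * a := rfl
  have e1 : (cX 1).1 (t, (t - q) * a, (t - q) * b) = (t - q) * b := rfl
  have e2 : cT.1 (t, (t - q) * a, (t - q) * b) = t := rfl
  rw [e0, e2] at h2
  rw [e1, e2] at h3
  unfold rD
  have hr : 0 < t - q := by linarith
  have hk : 0 < √(t - q) := Real.sqrt_pos.2 hr
  obtain ⟨k, hk'⟩ : ∃ k, k = √(t - q) := ⟨_, rfl⟩
  have hkr : k ^ 2 = t - q := by rw [hk', Real.sq_sqrt hr.le]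
  rw [← hk'] at hk ⊢
  obtain ⟨x, hx⟩ : ∃ x, x = (t, (t - q) * a, (t - q) * b) := ⟨_, rfl⟩
  rw [← hx] at h0 h1 h2 h3 ⊢
  have h0' : q ^ 2 * (pd 0 (W j)).1 x ^ 2 ≤ Y := by
    refine le_trans (mul_le_mul_of_nonneg_right ?_ (sq_nonneg _)) h0
    rw [hx]; simp only
    have : t ^ 2 - ((t - q) * a) ^ 2 - ((t - q) * b) ^ 2 = t ^ 2 - (t - q) ^ 2 * (a ^ 2 + b ^ 2) := by ring
    rw [this, hab]; nlinarith
  generalize (pd 0 (W j)).1 x = u0 at *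
  generalize (pd 1 (W j)).1 x = u1 at *
  generalize (pd 2 (W j)).1 x = u2 at *
  generalize (W j).1 x = u at *
  obtain ⟨m, hm⟩ : ∃ m, m = a * u1 + b * u2 + u0 := ⟨_, rfl⟩
  rw [← hm]
  have em : t * m = a * (t * u1 + (t - q) * a * u0) + b * (t * u2 + (t - q) * b * u0) + q * u0 := by
    rw [hm]; linear_combination (q - t) * u0 * hab
  generalize t * u1 + (t - q) * a * u0 = l1 at *
  generalize t * u2 + (t - q) * b * u0 = l2 at *
  have hm2 : (t * m) ^ 2 ≤ 6 * Y := by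
    rw [em]
    have c1 : (a * l1 + b * l2) ^ 2 ≤ l1 ^ 2 + l2 ^ 2 := by
      have : l1 ^ 2 + l2 ^ 2 = (a * l1 + b * l2) ^ 2 + (b * l1 - a * l2) ^ 2 := by linear_combination (-l1^2-l2^2) * hab
      nlinarith [sq_nonneg (b * l1 - a * l2)]
    nlinarith [sq_nonneg (a * l1 + b * l2 - q * u0)]
  have hY : 0 ≤ Y := (sq_nonneg _).trans h1
  rw [le_div_iff₀ ht]
  have c2 : (u / (4 * k) + k / 2 * m) ^ 2 ≤ u ^ 2 / (8 * k ^ 2) + k ^ 2 * m ^ 2 / 2 := by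
    have : u ^ 2 / (8 * k ^ 2) + k ^ 2 * m ^ 2 / 2 - (u / (4 * k) + k / 2 * m) ^ 2 = (u / (4 * k) - k / 2 * m) ^ 2 := by
      field_simp; ring
    nlinarith [sq_nonneg (u / (4 * k) - k / 2 * m)]
  refine (mul_le_mul_of_nonneg_right c2 ht.le).trans ?_
  rw [add_mul, hkr]
  have c3 : u ^ 2 / (8 * (t - q)) * t ≤ Y / 4 := by
    rw [div_mul_eq_mul_div, div_le_iff₀ (by positivity)]
    have := mul_le_mul h1 (show t ≤ 2 * (t - q) by linarith) ht.le hY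
    linarith only [this]
  have c4 : (t - q) * m ^ 2 / 2 * t ≤ 3 * Y := by
    rw [mul_pow] at hm2
    have := mul_nonneg (mul_nonneg hq ht.le) (sq_nonneg m)
    linarith only [this, hm2]
  linarith

/-- In the zone `t ≥ 2q`, the source `rG` decays like `(Y/t³)^{1/2}`. -/
lemma rG_est {W : Fin 2 → SF} {Y q a b t : ℝ} (hab : a ^ 2 + b ^ 2 = 1) (hq : 0 ≤ q) (ht : 0 < t) (hqt : 2 * q ≤ t)
    (h : Ctl W Y (t, (t - q) * a, (t - q) * b)) (j) : rG (W j) q a b t ^ 2 ≤ 79 * Y / t ^ 3 := by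
  have h1 := (h j).2 [] (by simp)
  have h2 := (h j).2 [0] (by simp)
  have h3 := (h j).2 [1] (by simp)
  have h4 := (h j).2 [0, 0] (by simp)
  have h5 := (h j).2 [0, 1] (by simp)
  have h6 := (h j).2 [1, 0] (by simp)
  have h7 := (h j).2 [1, 1] (by simp)
  simp only [app_cons, app_nil] at h1 h2 h3 h4 h5 h6 h7
  have eO := congrArg (fun g : SF => g.1 (t, (t - q) * a, (t - q) * b)) (Om_sq (W j))
  simp only [SF.sub_ev, SF.add_ev, SF.mul_ev, SF.pow_ev] at eO
  have e0 : (cX 0).1 (t, (t - q) * a, (t - q) * b) = (t - q) * a := rfl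
  have e1 : (cX 1).1 (t, (t - q) * a, (t - q) * b) = (t - q) * b := rfl
  have e2 : cT.1 (t, (t - q) * a, (t - q) * b) = t := rfl
  rw [e0, e1, e2] at eO
  unfold rG
  have hr : 0 < t - q := by linarith
  have hk : 0 < √(t - q) := Real.sqrt_pos.2 hr
  obtain ⟨k, hk'⟩ : ∃ k, k = √(t - q) := ⟨_, rfl⟩
  have hkr : k ^ 2 = t - q := by rw [hk', Real.sq_sqrt hr.le]
  rw [← hk'] at hk ⊢
  obtain ⟨x, hx⟩ : ∃ x, x = (t, (t - q) * a, (t - q) * b) := ⟨_, rfl⟩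
  rw [← hx] at h1 h2 h3 h4 h5 h6 h7 eO ⊢
  generalize (Om (Om (W j))).1 x = o at *
  generalize (Lf 0 (W j)).1 x = v0 at *
  generalize (Lf 1 (W j)).1 x = v1 at *
  generalize (Lf 0 (Lf 0 (W j))).1 x = v00 at *
  generalize (Lf 0 (Lf 1 (W j))).1 x = v01 at *
  generalize (Lf 1 (Lf 0 (W j))).1 x = v10 at *
  generalize (Lf 1 (Lf 1 (W j))).1 x = v11 at *
  generalize (W j).1 x = u at *
  have hY : 0 ≤ Y := (sq_nonneg _).trans h1
  obtain ⟨y, hy⟩ : ∃ y, y = √Y := ⟨_, rfl⟩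
  have hy2 : y ^ 2 = Y := by rw [hy, Real.sq_sqrt hY]
  have hy0 : 0 ≤ y := hy ▸ Real.sqrt_nonneg _
  rw [← hy2] at h1 h2 h3 h4 h5 h6 h7
  have A : ∀ {v : ℝ}, v ^ 2 ≤ y ^ 2 → |v| ≤ y := fun h => abs_le_of_sq_le_sq h hy0
  have ha : |(t - q) * a| ≤ t := abs_le_of_sq_le_sq (by rw [mul_pow]; nlinarith [sq_nonneg b]) ht.le
  have hb : |(t - q) * b| ≤ t := abs_le_of_sq_le_sq (by rw [mul_pow]; nlinarith [sq_nonneg a]) ht.le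
  have hat : |t| = t := abs_of_pos ht
  generalize (t - q) * a = X at *
  generalize (t - q) * b = Z at *
  have mm : ∀ {c d v : ℝ}, |c| ≤ t → |d| ≤ t → |v| ≤ y → |c * d * v| ≤ t ^ 2 * y := fun h1 h2 h3 => by
    rw [abs_mul, abs_mul, pow_two]
    gcongr
  have o1 : |t ^ 2 * o| ≤ 6 * (t ^ 2 * y) := by
    have e : t ^ 2 * o = X * X * v11 - X * Z * v01 - X * Z * v10 + Z * Z * v00 - t * X * v0 - t * Z * v1 := by
      rw [eO]; ring
    have m1 := abs_le.1 (mm ha ha (A h7))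
    have m2 := abs_le.1 (mm ha hb (A h5))
    have m3 := abs_le.1 (mm ha hb (A h6))
    have m4 := abs_le.1 (mm hb hb (A h4))
    have m5 := abs_le.1 (mm hat.le ha (A h2))
    have m6 := abs_le.1 (mm hat.le hb (A h3))
    rw [e, abs_le]
    constructor <;> linarith
  have o2 : |o| ≤ 6 * y := by
    rw [abs_mul, abs_of_pos (by positivity : 0 < t ^ 2)] at o1
    have : 0 < t ^ 2 := by positivity
    nlinarith
  have o3 : |-(4 * o + u)| ≤ 25 * y := by
    have := abs_le.1 o2
    have := abs_le.1 (A h1)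
    rw [abs_le]; constructor <;> linarith
  have o4 : (-(4 * o + u)) ^ 2 ≤ 625 * Y := by
    have h := sq_le_sq' (by linarith only [(abs_le.1 o3).1]) (abs_le.1 o3).2
    rw [mul_pow, hy2] at h
    linarith only [h]
  rw [div_pow, div_le_div_iff₀ (by positivity) (by positivity)]
  have k6 : (8 * k ^ 3) ^ 2 = 64 * (t - q) ^ 3 := by rw [← hkr]; ring
  have k7 : t ^ 3 ≤ 8 * (t - q) ^ 3 := by
    have := pow_le_pow_left₀ ht.le (show t ≤ 2 * (t - q) by linarith) 3
    linarith [show (2 * (t - q)) ^ 3 = 8 * (t - q) ^ 3 by ring]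
  rw [k6]
  have m1 := mul_le_mul o4 k7 (by positivity) (by positivity)
  have m2 : 0 ≤ Y * (t - q) ^ 3 := by positivity
  linarith only [m1, m2]

lemma hasDerivAt_quart {t : ℝ} (ht : 0 < t) : HasDerivAt (fun t => 1 / √√t) (-(1 / (4 * √√t ^ 5))) t := by
  have h1 : HasDerivAt (fun t => √t) (1 / (2 * √t)) t := Real.hasDerivAt_sqrt ht.ne'
  have hs : 0 < √t := Real.sqrt_pos.2 ht
  have hq : 0 < √√t := Real.sqrt_pos.2 hs
  have h2 := (h1.sqrt hs.ne')
  have h3 := h2.inv hq.ne'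
  simp only [one_div] at h3 ⊢
  refine h3.congr_deriv ?_
  have : √t = √√t ^ 2 := (Real.sq_sqrt hs.le).symm
  rw [this]
  generalize √√t = k at *
  rw [Real.sqrt_sq hq.le]
  field_simp; norm_num

/-- A damped scalar equation with an integrable source stays bounded. -/
lemma damped_bound {V e β : ℝ → ℝ} {t0 t1 K δ : ℝ} (h1 : 1 ≤ t0) (h01 : t0 ≤ t1) (hδ : 0 < δ)
    (hV : ∀ t ∈ Set.Icc t0 t1, HasDerivAt V (-β t * V t + e t) t) (hβ : ∀ t ∈ Set.Icc t0 t1, 0 ≤ β t)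
    (he : ∀ t ∈ Set.Icc t0 t1, |e t| ≤ K / √√t ^ 5) : |V t1| ≤ |V t0| + δ + 4 * K := by
  have hpos : ∀ t ∈ Set.Icc t0 t1, 0 < t := fun t ht => by linarith [ht.1]
  have hK : 0 ≤ K := by
    have h := (abs_nonneg _).trans (he t0 ⟨le_rfl, h01⟩)
    have : 0 < √√t0 ^ 5 := by have := hpos t0 ⟨le_rfl, h01⟩; positivity
    by_contra hn
    exact absurd h (not_le.2 (div_neg_of_neg_of_pos (not_le.1 hn) this))
  have hd : ∀ t ∈ Set.Icc t0 t1, HasDerivAt (fun t => √(V t ^ 2 + δ ^ 2) + (4 * K) * (1 / √√t))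
      ((2 * V t * (-β t * V t + e t)) / (2 * √(V t ^ 2 + δ ^ 2)) + (4 * K) * (-(1 / (4 * √√t ^ 5)))) t := fun t ht => by
    have a1 := ((hV t ht).pow 2).add_const (δ ^ 2)
    have a2 := a1.sqrt (show V t ^ 2 + δ ^ 2 ≠ 0 by positivity)
    refine (a2.add ((hasDerivAt_quart (hpos t ht)).const_mul (4 * K))).congr_deriv ?_
    simp
  have anti : AntitoneOn (fun t => √(V t ^ 2 + δ ^ 2) + (4 * K) * (1 / √√t)) (Set.Icc t0 t1) := by
    refine antitoneOn_of_deriv_nonpos (convex_Icc _ _) (fun s hs => (hd s hs).continuousAt.continuousWithinAt)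
      (fun s hs => (hd s (interior_subset hs)).differentiableAt.differentiableWithinAt) fun s hs => ?_
    have hs := interior_subset hs
    rw [(hd s hs).deriv]
    have hN : 0 < √(V s ^ 2 + δ ^ 2) := Real.sqrt_pos.2 (by positivity)
    have hVN : |V s| ≤ √(V s ^ 2 + δ ^ 2) := Real.le_sqrt_of_sq_le (by rw [sq_abs]; nlinarith)
    have b1 : (2 * V s * (-β s * V s + e s)) / (2 * √(V s ^ 2 + δ ^ 2)) ≤ |e s| := by
      rw [div_le_iff₀ (by positivity)]
      have c1 : V s * e s ≤ |V s| * |e s| := by rw [← abs_mul]; exact le_abs_self _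
      have c2 := mul_le_mul_of_nonneg_right hVN (abs_nonneg (e s))
      have c3 := mul_nonneg (hβ s hs) (sq_nonneg (V s))
      nlinarith
    have b2 := he s hs
    have b3 : (4 * K) * (-(1 / (4 * √√s ^ 5))) = - (K / √√s ^ 5) := by
      have : 0 < √√s := by have := hpos s hs; positivity
      field_simp
    linarith
  have key := anti ⟨le_rfl, h01⟩ ⟨h01, le_rfl⟩ h01
  simp only at key
  have c1 : |V t1| ≤ √(V t1 ^ 2 + δ ^ 2) := Real.le_sqrt_of_sq_le (by rw [sq_abs]; nlinarith)
  have c2 : √(V t0 ^ 2 + δ ^ 2) ≤ |V t0| + δ := by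
    rw [Real.sqrt_le_left (by positivity)]
    have := abs_nonneg (V t0)
    nlinarith [sq_abs (V t0)]
  have c3 : 0 ≤ (4 * K) * (1 / √√t1) := by positivity
  have c4 : (4 * K) * (1 / √√t0) ≤ 4 * K := by
    have : 1 ≤ √√t0 := by
      rw [Real.one_le_sqrt, Real.one_le_sqrt]; exact h1
    exact mul_le_of_le_one_right (by positivity) (by rw [div_le_one (by linarith)]; exact this)
  linarith

/-! ### Improved decay -/

lemma Ctl.mono {W : Fin 2 → SF} {Y Y' : ℝ} {p} (h : Ctl W Y p) (hY : Y ≤ Y') : Ctl W Y' p := fun j =>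
  ⟨(h j).1.trans hY, fun l hl => ((h j).2 l hl).trans hY⟩

/-- A property of all points inside the future region between two hyperboloids. -/
def Reg (B lam : ℝ) (Q : ℝ → ℝ → ℝ → ℝ → Prop) : Prop := ∀ t x1 x2 s, 0 < t → 0 < s → s ^ 2 = t ^ 2 - x1 ^ 2 - x2 ^ 2 →
  B ≤ s → s ^ 2 ≤ B ^ 2 + lam ^ 2 → Q t x1 x2 s

/-- With `Y = k² ε² √t`, `rD` is `O(t^{-1/4})` and the source terms are `O(t^{-5/4})`. -/
lemma ray_small {W : Fin 2 → SF} {k ε A q a b t : ℝ} (hab : a ^ 2 + b ^ 2 = 1) (hq : 1 ≤ q) (hqt : 2 * q ≤ t) (hk : 0 ≤ k)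
    (hε : 0 < ε) (hA : A ^ 2 ≤ 1)
    (h : Ctl W (k ^ 2 * ε ^ 2 * √t) (t, (t - q) * a, (t - q) * b))
    (hb : ∀ j, t * (pd 0 (W j)).1 (t, (t - q) * a, (t - q) * b) ^ 2 ≤ A ^ 2) (j) :
    |rD (W j) q a b t| ≤ 2 * k * ε / √√t ∧ |rG (W j) q a b t| ≤ 9 * k * ε / √√t ^ 5 ∧
    |1 / 2 * (pd 0 (W (j + 1))).1 (t, (t - q) * a, (t - q) * b) ^ 2 * rD (W j) q a b t + rG (W j) q a b t| ≤
      10 * k * ε / √√t ^ 5 := by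
  have ht : 0 < t := by linarith
  have h1 := rD_est hab (by linarith) ht hqt h j
  have h2 := rG_est hab (by linarith) ht hqt h j
  have h3 := hb (j + 1)
  have hs : 0 < √t := Real.sqrt_pos.2 ht
  have hh : 0 < √√t := Real.sqrt_pos.2 hs
  have e1 : √t = √√t ^ 2 := (Real.sq_sqrt hs.le).symm
  have e2 : t = √√t ^ 4 := by rw [show √√t ^ 4 = (√√t ^ 2) ^ 2 by ring, ← e1, Real.sq_sqrt ht.le]
  generalize rD (W j) q a b t = d at *
  generalize rG (W j) q a b t = g at *
  generalize (pd 0 (W (j + 1))).1 (t, (t - q) * a, (t - q) * b) = ψ at *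
  clear h hb
  obtain ⟨r, hr⟩ : ∃ r, r = √√t := ⟨_, rfl⟩
  rw [← hr] at e1 e2 hh ⊢
  rw [e1, e2] at h1 h2
  have b1 : |d| ≤ 2 * k * ε / r := by
    refine abs_le_of_sq_le_sq (h1.trans_eq ?_) (by positivity)
    field_simp; ring
  have b2 : |g| ≤ 9 * k * ε / r ^ 5 := by
    refine abs_le_of_sq_le_sq (h2.trans ?_) (by positivity)
    rw [div_pow, div_le_div_iff₀ (by positivity) (by positivity)]
    have : 0 ≤ k ^ 2 * ε ^ 2 * r ^ 12 := by positivity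
    linarith only [this]
  refine ⟨b1, b2, ?_⟩
  have b3 : ψ ^ 2 ≤ 1 / r ^ 4 := by
    rw [le_div_iff₀ (by positivity), ← e2]; linarith
  refine (abs_add_le _ _).trans ?_
  rw [abs_mul, abs_of_nonneg (by positivity : 0 ≤ 1 / 2 * ψ ^ 2)]
  have b4 := mul_le_mul (mul_le_mul_of_nonneg_left b3 (by norm_num : (0:ℝ) ≤ 1 / 2)) b1 (abs_nonneg _) (by positivity)
  have e3 : 1 / 2 * (1 / r ^ 4) * (2 * k * ε / r) = k * ε / r ^ 5 := by field_simp
  rw [e3] at b4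
  refine (add_le_add b4 b2).trans_eq ?_
  ring

set_option maxHeartbeats 1000000 in
/-- Pointwise decay of the velocities, with a constant independent of the bootstrap constant. -/
lemma decay_improve {B : ℝ} (hB : 2 ≤ B) {k : ℝ} (hk : 0 ≤ k) : ∃ C, 0 ≤ C ∧ ∀ (ε : ℝ) (W : Fin 2 → SF) (lam A : ℝ), 0 < ε →
    Sol B W → A ^ 2 ≤ 1 → Reg B lam (fun t x1 x2 s => Ctl W (k ^ 2 * ε ^ 2 * √s) (t, x1, x2)) →
    Reg B lam (fun t x1 x2 _ => ∀ j, t * (pd 0 (W j)).1 (t, x1, x2) ^ 2 ≤ A ^ 2) →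
    Reg B lam (fun t x1 x2 _ => ∀ j, t * (pd 0 (W j)).1 (t, x1, x2) ^ 2 ≤ C * ε ^ 2) := by
  obtain ⟨c, hc⟩ : ∃ c, c = 44 * k + 2 * B * k + 1 := ⟨_, rfl⟩
  have hc0 : 0 ≤ c := by rw [hc]; positivity
  have hcC : 2 * B * k ^ 2 ≤ 2 * c ^ 2 := by
    have h1 : 2 * B * k ≤ c := by rw [hc]; linarith
    have h2 : k ≤ c := by
      have : 0 ≤ 2 * B * k := by positivity
      rw [hc]; linarith
    have := mul_le_mul h1 h2 hk hc0
    linarith only [this, sq_nonneg c]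
  refine ⟨2 * c ^ 2, by positivity, fun ε W lam A hε hS hA hctl hboot => ?_⟩
  -- points where time is comparable to the hyperbolic distance
  have near : Reg B lam fun t x1 x2 s => t ≤ 2 * B * s → ∀ j, t * (pd 0 (W j)).1 (t, x1, x2) ^ 2 ≤ 2 * B * k ^ 2 * ε ^ 2 := by
    intro t x1 x2 s ht hs hst hBs hsl hts j
    have h1 := (hctl t x1 x2 s ht hs hst hBs hsl j).1
    simp only [← hst] at h1
    generalize (pd 0 (W j)).1 (t, x1, x2) = ψ at *
    have h2 : √s ≤ s := by
      rw [Real.sqrt_le_left hs.le]; nlinarith only [hs, hBs, hB]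
    have h3 : k ^ 2 * ε ^ 2 * √s ≤ k ^ 2 * ε ^ 2 * s := by gcongr
    have h4 : s * ψ ^ 2 ≤ k ^ 2 * ε ^ 2 := by
      have : s * (s * ψ ^ 2) ≤ s * (k ^ 2 * ε ^ 2) := by linarith only [h1, h3]
      exact le_of_mul_le_mul_left this hs
    have h5 := mul_le_mul_of_nonneg_right hts (sq_nonneg ψ)
    have h6 := mul_le_mul_of_nonneg_left h4 (show 0 ≤ 2 * B by linarith)
    linarith only [h5, h6]
  intro t1 x1 x2 s1 ht hs hst hBs hsl j
  have near1 := near t1 x1 x2 s1 ht hs hst hBs hsl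
  obtain ⟨r, hr⟩ : ∃ r, r = √(x1 ^ 2 + x2 ^ 2) := ⟨_, rfl⟩
  have hr0 : 0 ≤ r := hr ▸ Real.sqrt_nonneg _
  have hr2 : r ^ 2 = x1 ^ 2 + x2 ^ 2 := by rw [hr, Real.sq_sqrt (by positivity)]
  have hst' : s1 ^ 2 = t1 ^ 2 - r ^ 2 := by rw [hr2]; linarith
  rcases le_or_gt (2 * r) t1 with hcase | hcase
  · refine (near1 ?_ j).trans (mul_le_mul_of_nonneg_right hcC (sq_nonneg ε))
    have h1 : t1 ≤ 2 * s1 := by nlinarith only [hst', hcase, hr0, ht, hs]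
    nlinarith only [h1, hB, hs]
  have hrp : 0 < r := by linarith
  obtain ⟨q, hq⟩ : ∃ q, q = t1 - r := ⟨_, rfl⟩
  have hs1t : s1 ≤ t1 := by nlinarith only [hst', hr0, ht, hs]
  rcases lt_or_ge q 1 with hq1 | hq1
  · have : (pd 0 (W j)).1 (t1, x1, x2) = 0 := ((hS.ov j).pd 0).at_B (by linarith) (by rw [← hr]; linarith)
    rw [this]
    have : 0 ≤ 2 * c ^ 2 * ε ^ 2 := by positivity
    linarith
  obtain ⟨a, ha⟩ : ∃ a, a = x1 / r := ⟨_, rfl⟩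
  obtain ⟨b, hb⟩ : ∃ b, b = x2 / r := ⟨_, rfl⟩
  have hab : a ^ 2 + b ^ 2 = 1 := by
    rw [ha, hb, div_pow, div_pow, ← add_div, ← hr2, div_self (by positivity)]
  have ex1 : (t1 - q) * a = x1 := by rw [ha, hq]; field_simp; ring
  have ex2 : (t1 - q) * b = x2 := by rw [hb, hq]; field_simp; ring
  -- the time at which the ray has entered both the region and the zone `t ≥ 2q`
  obtain ⟨t0, ht0⟩ : ∃ t0, t0 = max (2 * q) ((B ^ 2 / q + q) / 2) := ⟨_, rfl⟩
  have hqp : 0 < q := by linarith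
  have hs1q : s1 ^ 2 = q * (2 * t1 - q) := by rw [hst', hq]; ring
  have ht01 : t0 ≤ t1 := by
    rw [ht0]
    refine max_le (by linarith) ?_
    have : B ^ 2 / q ≤ 2 * t1 - q := by
      rw [div_le_iff₀ hqp]; nlinarith only [hs1q, hBs, hB]
    linarith
  -- every point of the ray between the two times lies in the region
  have ray : ∀ t, t0 ≤ t → t ≤ t1 → 2 * q ≤ t ∧ ∃ s, 0 < s ∧ s ^ 2 = q * (2 * t - q) ∧ s ≤ t ∧
      s ^ 2 = t ^ 2 - ((t - q) * a) ^ 2 - ((t - q) * b) ^ 2 ∧ B ≤ s ∧ s ^ 2 ≤ B ^ 2 + lam ^ 2 := by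
    intro t h1 h2
    have h3 : 2 * q ≤ t := (le_max_left _ _).trans (ht0 ▸ h1)
    have h4 : (B ^ 2 / q + q) / 2 ≤ t := (le_max_right _ _).trans (ht0 ▸ h1)
    have h5 : B ^ 2 ≤ q * (2 * t - q) := by
      have : B ^ 2 / q ≤ 2 * t - q := by linarith
      rw [div_le_iff₀ hqp] at this; linarith
    have hp : 0 < q * (2 * t - q) := lt_of_lt_of_le (by positivity) h5
    have h6 : √(q * (2 * t - q)) ^ 2 = q * (2 * t - q) := Real.sq_sqrt hp.le
    refine ⟨h3, √(q * (2 * t - q)), Real.sqrt_pos.2 hp, h6, ?_, ?_, ?_, ?_⟩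
    · rw [Real.sqrt_le_left (by linarith only [h3, hqp])]; nlinarith only [sq_nonneg (t - q)]
    · rw [h6]; linear_combination (t - q) ^ 2 * hab
    · exact Real.le_sqrt_of_sq_le h5
    · rw [h6]
      have : q * (2 * t - q) ≤ q * (2 * t1 - q) := by gcongr
      linarith
  have ctl : ∀ t, t0 ≤ t → t ≤ t1 → Ctl W (k ^ 2 * ε ^ 2 * √t) (t, (t - q) * a, (t - q) * b) := by
    intro t h1 h2
    obtain ⟨h3, s, g1, g2, g3, g4, g5, g6⟩ := ray t h1 h2
    refine (hctl t _ _ s (by linarith only [h3, hqp]) g1 g4 g5 g6).mono ?_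
    gcongr
  have bt : ∀ t, t0 ≤ t → t ≤ t1 → ∀ j, t * (pd 0 (W j)).1 (t, (t - q) * a, (t - q) * b) ^ 2 ≤ A ^ 2 := by
    intro t h1 h2
    obtain ⟨h3, s, g1, g2, g3, g4, g5, g6⟩ := ray t h1 h2
    exact hboot t _ _ s (by linarith only [h3, hqp]) g1 g4 g5 g6
  have small : ∀ t, t0 ≤ t → t ≤ t1 → _ := fun t h1 h2 =>
    ray_small hab hq1 (ray t h1 h2).1 hk hε hA (ctl t h1 h2) (bt t h1 h2) j
  have hone : ∀ t, t0 ≤ t → t ≤ t1 → 1 ≤ √√t := fun t h1 h2 => by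
    have := (ray t h1 h2).1
    rw [Real.one_le_sqrt, Real.one_le_sqrt]; linarith
  have hB0 : ∀ t, t0 ≤ t → t ≤ t1 → B ≤ t := fun t h1 h2 => by
    obtain ⟨h3, s, g1, g2, g3, g4, g5, g6⟩ := ray t h1 h2
    exact g5.trans g3
  have dsm : ∀ t, t0 ≤ t → t ≤ t1 → |rD (W j) q a b t| ≤ 2 * k * ε := fun t h1 h2 =>
    (small t h1 h2).1.trans (div_le_self (by positivity) (hone t h1 h2))
  -- the profile along the ray
  have hV := damped_bound (V := rV (W j) q a b) (t0 := t0) (t1 := t1) (K := 10 * k * ε) (δ := ε)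
    (e := fun t => 1 / 2 * (pd 0 (W (j + 1))).1 (t, (t - q) * a, (t - q) * b) ^ 2 * rD (W j) q a b t + rG (W j) q a b t)
    (β := fun t => 1 / 2 * (pd 0 (W (j + 1))).1 (t, (t - q) * a, (t - q) * b) ^ 2)
    (by have := (ray t0 le_rfl ht01).1; linarith) ht01 hε
    (fun t ht => by
      have h1 := (ray t ht.1 ht.2).1
      have h2 := rD_sub_rV (W j) q a b t
      refine (rV_deriv hS j hab (hB0 t ht.1 ht.2) (by linarith)).congr_deriv ?_
      generalize (pd 0 (W (j + 1))).1 (t, (t - q) * a, (t - q) * b) = ψ at *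
      linear_combination (-1 / 2 * ψ ^ 2) * h2)
    (fun t ht => by positivity)
    (fun t ht => (small t ht.1 ht.2).2.2)
  -- the profile at the initial time
  have hr01 : ∀ t, t0 ≤ t → t ≤ t1 → (√(t - q) * (pd 0 (W j)).1 (t, (t - q) * a, (t - q) * b)) ^ 2 =
      (t - q) * (pd 0 (W j)).1 (t, (t - q) * a, (t - q) * b) ^ 2 := fun t h1 h2 => by
    rw [mul_pow, Real.sq_sqrt]
    have := (ray t h1 h2).1
    linarith
  have hV0 : |rV (W j) q a b t0| ≤ 2 * k * ε + 2 * B * k * ε := by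
    obtain ⟨h3, s, g1, g2, g3, g4, g5, g6⟩ := ray t0 le_rfl ht01
    have hts : t0 ≤ 2 * B * s := by
      rcases le_total ((B ^ 2 / q + q) / 2) (2 * q) with hm | hm
      · rw [max_eq_left hm] at ht0
        rw [ht0] at g2 ⊢
        have : q ≤ s := by nlinarith only [g1, g2, hqp]
        nlinarith only [this, hB, g1]
      · rw [max_eq_right hm] at ht0
        have : q * (2 * t0 - q) = B ^ 2 := by rw [ht0]; field_simp; ring
        nlinarith only [this, h3, hq1, g5, hB, hqp]
    have n := near t0 _ _ s (by linarith only [h3, hqp]) g1 g4 g5 g6 hts j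
    have e := hr01 t0 le_rfl ht01
    have hv := rD_sub_rV (W j) q a b t0
    have hd := dsm t0 le_rfl ht01
    have : |√(t0 - q) * (pd 0 (W j)).1 (t0, (t0 - q) * a, (t0 - q) * b)| ≤ 2 * B * k * ε := by
      refine abs_le_of_sq_le_sq ?_ (by positivity)
      rw [e]
      generalize (pd 0 (W j)).1 (t0, (t0 - q) * a, (t0 - q) * b) = ψ at *
      have m1 : (t0 - q) * ψ ^ 2 ≤ t0 * ψ ^ 2 := by gcongr; linarith
      have m2 : 2 * B * (k ^ 2 * ε ^ 2) ≤ (2 * B) ^ 2 * (k ^ 2 * ε ^ 2) := by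
        refine mul_le_mul_of_nonneg_right ?_ (by positivity)
        nlinarith only [hB]
      calc _ ≤ _ := m1
        _ ≤ _ := n
        _ ≤ (2 * B) ^ 2 * (k ^ 2 * ε ^ 2) := by linarith
        _ = _ := by ring
    rw [← hv] at this
    have e2 : rV (W j) q a b t0 = rD (W j) q a b t0 - (rD (W j) q a b t0 - rV (W j) q a b t0) := by ring
    rw [e2]
    exact (abs_sub _ _).trans (by linarith)
  have e := hr01 t1 ht01 le_rfl
  have hv := rD_sub_rV (W j) q a b t1
  have hd := dsm t1 ht01 le_rfl
  have fin : |√(t1 - q) * (pd 0 (W j)).1 (t1, (t1 - q) * a, (t1 - q) * b)| ≤ c * ε := by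
    rw [← hv]
    refine (abs_sub _ _).trans ?_
    rw [hc]; linarith
  have fin2 := sq_le_sq' (by linarith [(abs_le.1 fin).1]) (abs_le.1 fin).2
  rw [e, ex1, ex2] at fin2
  generalize (pd 0 (W j)).1 (t1, x1, x2) = ψ at *
  have : t1 * ψ ^ 2 ≤ 2 * (t1 - q) * ψ ^ 2 := by
    gcongr
    linarith [(ray t1 ht01 le_rfl).1]
  linarith

/-! ### Closing the bootstrap -/

/-- The parameter of the hyperboloid through a given point. -/
lemma Hyp.param {B : ℝ} {Φ P : SF} (H : Hyp B Φ P) {lam t x1 x2 s : ℝ} (hl : 0 ≤ lam) (ht : 0 < t)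
    (hst : s ^ 2 = t ^ 2 - x1 ^ 2 - x2 ^ 2) (hBs : B ≤ s) (hsl : s ^ 2 ≤ B ^ 2 + lam ^ 2) :
    ∃ τ, 0 ≤ τ ∧ τ ≤ lam ∧ B ^ 2 + τ ^ 2 = s ^ 2 ∧ Φ.1 (τ, x1, x2) = t := by
  have hB := H.hB
  have h1 : 0 ≤ s ^ 2 - B ^ 2 := by nlinarith
  have h2 : √(s ^ 2 - B ^ 2) ^ 2 = s ^ 2 - B ^ 2 := Real.sq_sqrt h1
  refine ⟨√(s ^ 2 - B ^ 2), Real.sqrt_nonneg _, ?_, by linarith, ?_⟩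
  · rw [Real.sqrt_le_left hl]; linarith
  · have h3 := H.sq_ev (√(s ^ 2 - B ^ 2), x1, x2)
    have h4 := H.pos (√(s ^ 2 - B ^ 2), x1, x2)
    simp only [h2] at h3
    exact (pow_left_inj₀ h4.le ht.le two_ne_zero).1 (by linarith)

/-- Global decay of small solutions, obtained by continuous induction over hyperboloids. -/
theorem global_decay {B : ℝ} {f g : Fin 2 → SF} (hB : 2 ≤ B) (hf : ∀ j, XS (f j)) (hg : ∀ j, XS (g j)) :
    ∃ k ε₀, 0 ≤ k ∧ 0 < ε₀ ∧ ∀ ε W, Dat B f g ε W → ε ≤ ε₀ → ∀ lam, 0 ≤ lam →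
      Reg B lam (fun t x1 x2 s => Ctl W (k ^ 2 * ε ^ 2 * √s) (t, x1, x2)) ∧
      Reg B lam (fun t x1 x2 _ => ∀ j, t * (pd 0 (W j)).1 (t, x1, x2) ^ 2 ≤ 1) := by
  obtain ⟨C1, ε₁, hC1, hε₁, init⟩ := phase1L hB hf hg
  obtain ⟨κ, hκ, growth⟩ := hyp_growth
  obtain ⟨k, hk⟩ : ∃ k, k = √(3840 * C1) := ⟨_, rfl⟩
  have hk0 : 0 ≤ k := hk ▸ Real.sqrt_nonneg _
  have hk2 : k ^ 2 = 3840 * C1 := by rw [hk, Real.sq_sqrt (by positivity)]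
  obtain ⟨C, hC, improve⟩ := decay_improve hB hk0
  -- the bootstrap constant is `A = ε M`, larger than what the improved estimate returns
  obtain ⟨M, hM⟩ : ∃ M, M = 2 * (C + 3840 * C1) + 1 := ⟨_, rfl⟩
  have hM1 : 1 ≤ M := by rw [hM]; linarith
  obtain ⟨Φ, P, H⟩ := exists_hyp hB
  refine ⟨k, min ε₁ (min 1 κ / M), hk0, by positivity, fun ε W D hε lam hlam => ?_⟩
  have hε0 := D.e0
  have hεε : ε ≤ ε₁ := hε.trans (min_le_left _ _)
  have hεM : ε * M ≤ min 1 κ := by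
    rw [← le_div_iff₀ (by positivity)]; exact hε.trans (min_le_right _ _)
  obtain ⟨A, hA⟩ : ∃ A, A = ε * M := ⟨_, rfl⟩
  rw [← hA] at hεM
  have hA0 : 0 < A := by rw [hA]; positivity
  have hA1 : A ^ 2 ≤ 1 := by
    have := hεM.trans (min_le_left _ _)
    nlinarith only [this, hA0]
  have hAκ : A ≤ κ := hεM.trans (min_le_right _ _)
  have hA2 : 2 * ((C + 3840 * C1) * ε ^ 2) + ε ^ 2 ≤ A ^ 2 := by
    have : A ^ 2 = M ^ 2 * ε ^ 2 := by rw [hA]; ring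
    rw [this]
    have : M * ε ^ 2 ≤ M ^ 2 * ε ^ 2 := by
      refine mul_le_mul_of_nonneg_right ?_ (sq_nonneg ε)
      nlinarith only [hM1]
    rw [hM] at this ⊢
    linarith only [this]
  have E0 := init ε W Φ P D hεε H
  -- the quantity controlled by the bootstrap
  obtain ⟨F, hF⟩ : ∃ F : Fin 2 → SF, F = fun j => Φ * (pull Φ (pd 0 (W j))) ^ 2 := ⟨_, rfl⟩
  have hFe : ∀ j τ x, (F j).1 (τ, x) = Φ.1 (τ, x) * (pd 0 (W j)).1 (Φ.1 (τ, x), x) ^ 2 := fun j τ x => by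
    rw [hF]; simp only [SF.mul_ev, SF.pow_ev, pull_ev]
  have hFX : ∀ j, XS (F j) := fun j => by
    rw [hF]; exact ((H.XSp ((D.sol.ov j).pd 0)).pow two_ne_zero).mul_left _
  -- consequences of the bootstrap assumption
  have cons : ∀ lam, 0 ≤ lam → (∀ τ, 0 ≤ τ → τ ≤ lam → ∀ j x, (F j).1 (τ, x) ≤ A ^ 2) →
      Reg B lam (fun t x1 x2 s => Ctl W (k ^ 2 * ε ^ 2 * √s) (t, x1, x2)) ∧
      Reg B lam (fun t x1 x2 _ => ∀ j, t * (pd 0 (W j)).1 (t, x1, x2) ^ 2 ≤ A ^ 2) := by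
    intro lam hlam hb
    constructor
    · intro t x1 x2 s ht hs hst hBs hsl
      obtain ⟨τ, h1, h2, h3, h4⟩ := H.param hlam ht hst hBs hsl
      have gr := growth B Φ P W H D.sol lam A hA0 hAκ (fun τ h1 h2 j x => by rw [← hFe]; exact hb τ h1 h2 j x) τ h1 h2
      have Ep : 0 ≤ sI τ (totH Φ P W) := sI_nonneg fun x => H.tot_nonneg (τ, x)
      have E0p : 0 ≤ sI 0 (totH Φ P W) := sI_nonneg fun x => H.tot_nonneg (0, x)
      have bd : sI τ (totH Φ P W) ≤ C1 * ε ^ 2 * √s := by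
        refine le_of_pow_le_pow_left₀ (n := 4) (by norm_num) (by positivity) (gr.trans ?_)
        rw [h3, mul_pow, show √s ^ 4 = (√s ^ 2) ^ 2 by ring, Real.sq_sqrt hs.le]
        gcongr
      intro j
      have ps := H.psi_sup D.sol τ (x1, x2) j
      rw [h4, h3, hst] at ps
      refine ⟨?_, fun l hl => ?_⟩
      · refine ps.trans ?_
        rw [hk2]; linarith only [bd]
      · have ws := H.word_sup D.sol τ (x1, x2) j hl
        rw [h4] at ws
        refine ws.trans ?_
        rw [hk2]
        have : 0 ≤ C1 * ε ^ 2 * √s := by positivity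
        linarith only [bd, this]
    · intro t x1 x2 s ht hs hst hBs hsl j
      obtain ⟨τ, h1, h2, h3, h4⟩ := H.param hlam ht hst hBs hsl
      have := hb τ h1 h2 j (x1, x2)
      rw [hFe, h4] at this
      exact this
  -- strict improvement
  have strict : ∀ lam, 0 ≤ lam → (∀ τ, 0 ≤ τ → τ ≤ lam → ∀ j x, (F j).1 (τ, x) ≤ A ^ 2) → ∀ j x, (F j).1 (lam, x) < A ^ 2 := by
    intro lam hlam hb j x
    obtain ⟨c1, c2⟩ := cons lam hlam hb
    have hp := H.pos (lam, x)
    have hsq := H.sq_ev (lam, x)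
    have hpos : 0 < B ^ 2 + lam ^ 2 := by positivity
    have := improve ε W lam A hε0 D.sol hA1 c1 c2 (Φ.1 (lam, x)) x.1 x.2 (√(B ^ 2 + lam ^ 2)) hp (Real.sqrt_pos.2 hpos)
      (by rw [Real.sq_sqrt hpos.le, hsq]; ring) (Real.le_sqrt_of_sq_le (by nlinarith only [sq_nonneg lam]))
      (by rw [Real.sq_sqrt hpos.le]) j
    rw [hFe]
    have e2 : 0 < ε ^ 2 := by positivity
    have e3 : 0 ≤ (C + 3840 * C1) * ε ^ 2 := by positivity
    have e4 : 0 ≤ 3840 * C1 * ε ^ 2 := by positivity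
    linarith only [this, e2, e3, hA2, e4]
  have base : ∀ j x, (F j).1 (0, x) ≤ A ^ 2 := by
    intro j x
    have ps := H.psi_sup D.sol 0 x j
    have hsq := H.sq_ev (0, x)
    have hp := H.pos (0, x)
    have gB := H.geB (0, x)
    rw [hFe]
    by_cases hx : Φ.1 (0, x) - 1 < √(x.1 ^ 2 + x.2 ^ 2)
    · rw [((D.sol.ov j).pd 0).at_B gB hx]
      have : 0 ≤ A ^ 2 := by positivity
      linarith only [this]
    · have hr := Real.sqrt_nonneg (x.1 ^ 2 + x.2 ^ 2)
      have hr2 : √(x.1 ^ 2 + x.2 ^ 2) ^ 2 = x.1 ^ 2 + x.2 ^ 2 := Real.sq_sqrt (by positivity)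
      have hT : Φ.1 (0, x) ≤ B ^ 2 + 0 ^ 2 := by
        simp only at hsq
        nlinarith only [hsq, hx, hr, hr2, hp]
      have m := mul_le_mul_of_nonneg_right hT (sq_nonneg ((pd 0 (W j)).1 (Φ.1 (0, x), x)))
      have e2 : 0 < ε ^ 2 := by positivity
      have e3 : 0 ≤ C * ε ^ 2 := by positivity
      have e4 : 0 ≤ 3840 * C1 * ε ^ 2 := by positivity
      linarith only [m, ps, E0, hA2, e2, e3, e4]
  -- continuous induction
  obtain ⟨S, hS⟩ : ∃ S : Set ℝ, S = {lam | ∀ θ ∈ Set.Icc (0:ℝ) 1, ∀ j x, (F j).1 (θ * lam, x) ≤ A ^ 2} := ⟨_, rfl⟩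
  have mS : ∀ lam, 0 ≤ lam → (lam ∈ S ↔ ∀ τ, 0 ≤ τ → τ ≤ lam → ∀ j x, (F j).1 (τ, x) ≤ A ^ 2) := by
    intro lam hl
    rw [hS]
    refine ⟨fun h τ h1 h2 j x => ?_, fun h θ hθ j x => h _ (mul_nonneg hθ.1 hl) (mul_le_of_le_one_left hl hθ.2) j x⟩
    rcases hl.eq_or_lt with h0 | h0
    · have := h 0 (by simp) j x
      rw [zero_mul] at this
      rwa [show τ = 0 by linarith]
    · have := h (τ / lam) ⟨by positivity, by rw [div_le_one h0]; exact h2⟩ j x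
      rwa [div_mul_cancel₀ _ h0.ne'] at this
  have clS : IsClosed S := by
    rw [hS]
    simp only [Set.setOf_forall]
    refine isClosed_iInter fun θ => isClosed_iInter fun _ => isClosed_iInter fun j => isClosed_iInter fun x => ?_
    exact isClosed_le ((F j).cont.comp (by fun_prop)) continuous_const
  have all : Set.Icc 0 lam ⊆ S := by
    refine (clS.inter isClosed_Icc).Icc_subset_of_forall_exists_gt ((mS 0 le_rfl).2 fun τ h1 h2 j x => ?_) ?_
    · rw [show τ = 0 by linarith]; exact base j x
    · rintro l ⟨hl, hl0, hl1⟩ y hy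
      have hb := (mS l hl0).1 hl
      have st := strict l hl0 hb
      choose R hR using fun j => hFX j (l + 1)
      have ev : ∀ᶠ τ in 𝓝 l, ∀ x ∈ Metric.closedBall (0 : ℝ × ℝ) (max (R 0) (R 1)), ∀ j, (F j).1 (τ, x) < A ^ 2 := by
        refine (isCompact_closedBall _ _).eventually_forall_of_forall_eventually fun x _ => ?_
        rw [eventually_all]
        intro j
        have hc : ContinuousAt (fun z : ℝ × ℝ × ℝ => (F j).1 (z.1, z.2)) (l, x) := (F j).cont.continuousAt
        exact hc.eventually_lt continuousAt_const (st j x)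
      obtain ⟨δ, hδ, ev⟩ := Metric.eventually_nhds_iff.1 ev
      have hy : l < y := hy
      obtain ⟨z, hz⟩ : ∃ z, z = min y (l + min (δ / 2) 1) := ⟨_, rfl⟩
      have hmin : 0 < min (δ / 2) 1 := by positivity
      have hlz : l < z := by rw [hz]; exact lt_min hy (by linarith)
      have hz1 : z ≤ l + min (δ / 2) 1 := hz ▸ min_le_right _ _
      refine ⟨z, (mS z (by linarith)).2 fun τ h1 h2 j x => ?_, hlz, hz ▸ min_le_left _ _⟩
      rcases le_or_gt τ l with h3 | h3
      · exact hb τ h1 h3 j x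
      · have h4 := min_le_left (δ / 2) 1
        have h5 := min_le_right (δ / 2) 1
        by_cases hx : ‖x‖ ≤ max (R 0) (R 1)
        · refine (ev (y := τ) ?_ x (by simpa using hx) j).le
          rw [Real.dist_eq, abs_of_pos (by linarith)]; linarith
        · rw [hR j τ x (by rw [abs_of_nonneg h1]; linarith) ?_]
          · positivity
          · refine lt_of_le_of_lt ?_ (not_le.1 hx)
            fin_cases j
            · exact le_max_left _ _
            · exact le_max_right _ _
  have fin := cons lam hlam ((mS lam hlam).1 (all ⟨hlam, le_rfl⟩))
  exact ⟨fin.1, fun t x1 x2 s ht hs hst hBs hsl j => (fin.2 t x1 x2 s ht hs hst hBs hsl j).trans hA1⟩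

/-! ### The limiting ordinary differential equations -/

/-- A continuous function whose square converges is convergent: if the limit is nonzero, its sign is
eventually constant by connectedness. -/
lemma tendsto_of_sq {f : ℝ → ℝ} {t₀ l : ℝ} (hf : ContinuousOn f (Set.Ici t₀)) (h : Tendsto (fun t => f t ^ 2) atTop (𝓝 l)) :
    ∃ v, Tendsto f atTop (𝓝 v) ∧ v ^ 2 = l := by
  have hab : Tendsto (fun t => |f t|) atTop (𝓝 √l) := by
    simpa only [Real.sqrt_sq_eq_abs] using h.sqrt
  have hl : 0 ≤ l := ge_of_tendsto' h fun t => sq_nonneg _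
  rcases hl.eq_or_lt with h0 | h0
  · refine ⟨0, ?_, by rw [← h0]; norm_num⟩
    rw [← h0, Real.sqrt_zero] at hab
    exact (tendsto_zero_iff_abs_tendsto_zero _).2 hab
  · obtain ⟨T, hT⟩ := eventually_atTop.1 (h.eventually (lt_mem_nhds h0))
    have hne : ∀ t ∈ Set.Ici (max t₀ T), |f t| ≠ 0 := fun t ht => by
      have := hT t ((le_max_right _ _).trans ht)
      intro h1
      rw [← sq_abs, h1] at this
      norm_num at this
    have hc : ContinuousOn f (Set.Ici (max t₀ T)) := hf.mono (Set.Ici_subset_Ici.2 (le_max_left _ _))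
    rcases isPreconnected_Ici.eq_or_eq_neg_of_sq_eq hc hc.abs (fun t _ => by simp) (fun {_} hx => hne _ hx) with h1 | h1
    · refine ⟨√l, hab.congr' ?_, Real.sq_sqrt hl⟩
      filter_upwards [eventually_ge_atTop (max t₀ T)] with t ht using (h1 ht).symm
    · refine ⟨-√l, hab.neg.congr' ?_, by rw [neg_sq, Real.sq_sqrt hl]⟩
      filter_upwards [eventually_ge_atTop (max t₀ T)] with t ht using (h1 ht).symm

lemma quart_rpow {t : ℝ} (ht : 0 ≤ t) : √√t ^ 5 = t ^ ((5:ℝ) / 4) := by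
  rw [Real.sqrt_eq_rpow, Real.sqrt_eq_rpow, ← Real.rpow_mul ht, ← Real.rpow_natCast, ← Real.rpow_mul ht]
  norm_num

/-- A continuous function that is `O(t^{-5/4})` is integrable at infinity. -/
lemma integrable_of_quart {f : ℝ → ℝ} {t₀ T C : ℝ} (hf : ContinuousOn f (Set.Ici t₀))
    (hb : ∀ t, T ≤ t → |f t| ≤ C / √√t ^ 5) : IntegrableOn f (Set.Ioi t₀) := by
  obtain ⟨S, hS⟩ : ∃ S, S = max (max t₀ T) 1 := ⟨_, rfl⟩
  have s1 : t₀ ≤ S := by rw [hS]; exact (le_max_left _ _).trans (le_max_left _ _)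
  have s2 : T ≤ S := by rw [hS]; exact (le_max_right _ _).trans (le_max_left _ _)
  have s3 : 1 ≤ S := by rw [hS]; exact le_max_right _ _
  rw [← Set.Ioc_union_Ioi_eq_Ioi s1]
  refine IntegrableOn.union ?_ ?_
  · exact ((hf.mono Set.Icc_subset_Ici_self).integrableOn_Icc).mono_set Set.Ioc_subset_Icc_self
  · have h1 : IntegrableOn (fun t : ℝ => C * t ^ (-(5:ℝ) / 4)) (Set.Ioi S) :=
      (integrableOn_Ioi_rpow_of_lt (by norm_num) (by linarith)).const_mul C
    refine Integrable.mono' h1 ((hf.mono ?_).aestronglyMeasurable measurableSet_Ioi) ?_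
    · intro t ht; exact s1.trans (le_of_lt ht)
    · refine (ae_restrict_iff' measurableSet_Ioi).2 (Eventually.of_forall fun t ht => ?_)
      have ht : S < t := ht
      have ht0 : 0 ≤ t := by linarith
      rw [Real.norm_eq_abs]
      refine (hb t (by linarith)).trans_eq ?_
      rw [quart_rpow ht0, neg_div, Real.rpow_neg ht0, div_eq_mul_inv]

/-- The product of the two profiles tends to zero: its square satisfies a differential inequality with a
damping term `-(2/t)|P|³`, which is not integrable unless `P → 0`. -/
lemma prod_tendsto {P : ℝ → ℝ} {P' : ℝ → ℝ} {T C : ℝ} (hT : 1 ≤ T) (hC : 0 ≤ C) (hd : ∀ t, T ≤ t → HasDerivAt P (P' t) t)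
    (hi : ∀ t, T ≤ t → 2 * P t * P' t ≤ -(2 / t) * |P t| ^ 3 + C / √√t ^ 5) : Tendsto P atTop (𝓝 0) := by
  -- the correction absorbs the integrable source, so that `Q` is nonincreasing
  obtain ⟨Q, hQ⟩ : ∃ Q : ℝ → ℝ, Q = fun t => P t ^ 2 + 4 * C * (1 / √√t) := ⟨_, rfl⟩
  have dQ : ∀ t, T ≤ t → HasDerivAt Q (2 * P t * P' t - C / √√t ^ 5) t := fun t ht => by
    have h1 := ((hd t ht).pow 2).add ((hasDerivAt_quart (by linarith : 0 < t)).const_mul (4 * C))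
    rw [hQ]
    refine h1.congr_deriv ?_
    have : 0 < √√t := Real.sqrt_pos.2 (Real.sqrt_pos.2 (by linarith))
    field_simp; ring
  have hq0 : Tendsto (fun t : ℝ => 4 * C * (1 / √√t)) atTop (𝓝 0) := by
    have h1 : Tendsto (fun t : ℝ => √√t) atTop atTop := tendsto_sqrt_atTop.comp tendsto_sqrt_atTop
    simpa using (h1.inv_tendsto_atTop).const_mul (4 * C)
  have hQ0 : ∀ t, 0 ≤ Q t := fun t => by rw [hQ]; positivity
  have anti : AntitoneOn Q (Set.Ici T) := by
    refine antitoneOn_of_deriv_nonpos (convex_Ici T) (fun t ht => (dQ t ht).continuousAt.continuousWithinAt)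
      (fun t ht => (dQ t (interior_subset ht)).differentiableAt.differentiableWithinAt) fun t ht => ?_
    have ht := interior_subset ht
    rw [(dQ t ht).deriv]
    have := hi t ht
    have h2 : 0 ≤ 2 / t * |P t| ^ 3 := by
      have : 0 < t := by have : T ≤ t := ht
                         linarith
      positivity
    linarith
  -- a lower bound for the damping would force `Q` to decrease logarithmically
  have small : ∀ δ, 0 < δ → ∃ t, T ≤ t ∧ Q t < 2 * δ := by
    intro δ hδ
    by_contra! hcon
    obtain ⟨S, hS⟩ := eventually_atTop.1 (hq0.eventually (gt_mem_nhds hδ))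
    obtain ⟨M, hM⟩ : ∃ M, M = max S T := ⟨_, rfl⟩
    have m1 : S ≤ M := hM ▸ le_max_left _ _
    have m2 : T ≤ M := hM ▸ le_max_right _ _
    obtain ⟨η, hη⟩ : ∃ η, η = √δ ^ 3 := ⟨_, rfl⟩
    have hη0 : 0 < η := by rw [hη]; have := Real.sqrt_pos.2 hδ; positivity
    have lb : ∀ t, M ≤ t → η ≤ |P t| ^ 3 := fun t ht => by
      have h1 := hcon t (m2.trans ht)
      have h2 := hS t (m1.trans ht)
      rw [hQ] at h1
      simp only at h1 h2
      rw [hη]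
      refine pow_le_pow_left₀ (Real.sqrt_nonneg _) ?_ 3
      rw [← Real.sqrt_sq_eq_abs]
      exact Real.sqrt_le_sqrt (by linarith)
    have dR : ∀ t, M ≤ t → HasDerivAt (fun t => Q t + 2 * η * Real.log t) (2 * P t * P' t - C / √√t ^ 5 + 2 * η * t⁻¹) t :=
      fun t ht => (dQ t (m2.trans ht)).add ((Real.hasDerivAt_log (by linarith)).const_mul _)
    have antiR : AntitoneOn (fun t => Q t + 2 * η * Real.log t) (Set.Ici M) := by
      refine antitoneOn_of_deriv_nonpos (convex_Ici M) (fun t ht => (dR t ht).continuousAt.continuousWithinAt)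
        (fun t ht => (dR t (interior_subset ht)).differentiableAt.differentiableWithinAt) fun t ht => ?_
      have ht : M ≤ t := interior_subset ht
      rw [(dR t ht).deriv]
      have h1 := hi t (m2.trans ht)
      have h2 := lb t ht
      have h3 : 0 < t := by linarith
      have h4 := mul_le_mul_of_nonneg_left h2 (by positivity : 0 ≤ 2 / t)
      have h5 : 2 * η * t⁻¹ = 2 / t * η := by field_simp
      linarith
    have hlog : Tendsto (fun t => 2 * η * Real.log t) atTop atTop :=
      Real.tendsto_log_atTop.const_mul_atTop (by positivity)
    obtain ⟨t, h1, h2⟩ := ((hlog.eventually_gt_atTop (Q M + 2 * η * Real.log M)).and (eventually_ge_atTop M)).exists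
    have h3 := antiR (Set.self_mem_Ici) h2 h2
    simp only at h3
    have := hQ0 t
    linarith
  have hsq : Tendsto (fun t => P t ^ 2) atTop (𝓝 0) := by
    rw [Metric.tendsto_atTop]
    intro e he
    obtain ⟨t, h1, h2⟩ := small (e / 2) (by positivity)
    refine ⟨t, fun s hs => ?_⟩
    rw [Real.dist_eq, sub_zero, abs_of_nonneg (sq_nonneg _)]
    have h3 := anti h1 (h1.trans hs : T ≤ s) hs
    have h4 : P s ^ 2 ≤ Q s := by
      rw [hQ]; simp only
      have : 0 ≤ 4 * C * (1 / √√s) := by positivity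
      linarith
    linarith
  have : Tendsto (fun t => |P t|) atTop (𝓝 0) := by
    simpa only [Real.sqrt_sq_eq_abs, Real.sqrt_zero] using hsq.sqrt
  exact (tendsto_zero_iff_abs_tendsto_zero _).2 this

/-- Asymptotics of the profile system: the difference of squares converges by integration, the product tends
to zero, and together they determine the limits of the squares. -/
lemma ode_trichotomy {V1 V2 K1 K2 : ℝ → ℝ} {t₀ T C : ℝ} (h0 : 0 < t₀) (hC : 0 ≤ C)
    (d1 : ∀ t, t₀ ≤ t → HasDerivAt V1 (-(1 / (2 * t)) * V2 t ^ 2 * V1 t + K1 t) t)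
    (d2 : ∀ t, t₀ ≤ t → HasDerivAt V2 (-(1 / (2 * t)) * V1 t ^ 2 * V2 t + K2 t) t)
    (k1 : ContinuousOn K1 (Set.Ici t₀)) (k2 : ContinuousOn K2 (Set.Ici t₀))
    (b1 : ∀ t, T ≤ t → |V1 t| ≤ C) (b2 : ∀ t, T ≤ t → |V2 t| ≤ C)
    (c1 : ∀ t, T ≤ t → |K1 t| ≤ C / √√t ^ 5) (c2 : ∀ t, T ≤ t → |K2 t| ≤ C / √√t ^ 5) :
    IntegrableOn (fun t => V1 t * K1 t - V2 t * K2 t) (Set.Ioi t₀) ∧ ∃ v1 v2, Tendsto V1 atTop (𝓝 v1) ∧ Tendsto V2 atTop (𝓝 v2) ∧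
      v1 ^ 2 - v2 ^ 2 = V1 t₀ ^ 2 - V2 t₀ ^ 2 + 2 * ∫ t in Set.Ioi t₀, (V1 t * K1 t - V2 t * K2 t) ∧ v1 * v2 = 0 := by
  have e1 : ContinuousOn V1 (Set.Ici t₀) := fun t ht => (d1 t ht).continuousAt.continuousWithinAt
  have e2 : ContinuousOn V2 (Set.Ici t₀) := fun t ht => (d2 t ht).continuousAt.continuousWithinAt
  have hint : IntegrableOn (fun t => V1 t * K1 t - V2 t * K2 t) (Set.Ioi t₀) := by
    refine integrable_of_quart (T := T) (C := 2 * C ^ 2) ((e1.mul k1).sub (e2.mul k2)) fun t ht => ?_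
    refine (abs_sub _ _).trans ?_
    rw [abs_mul, abs_mul]
    refine (add_le_add (mul_le_mul (b1 t ht) (c1 t ht) (abs_nonneg _) hC) (mul_le_mul (b2 t ht) (c2 t ht) (abs_nonneg _) hC)).trans_eq ?_
    ring
  have dD : ∀ t, t₀ ≤ t → HasDerivAt (fun t => V1 t ^ 2 - V2 t ^ 2) (2 * (V1 t * K1 t - V2 t * K2 t)) t := fun t ht => by
    refine (((d1 t ht).pow 2).sub ((d2 t ht).pow 2)).congr_deriv ?_
    norm_num; ring
  have tD : Tendsto (fun t => V1 t ^ 2 - V2 t ^ 2) atTop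
      (𝓝 (V1 t₀ ^ 2 - V2 t₀ ^ 2 + 2 * ∫ t in Set.Ioi t₀, (V1 t * K1 t - V2 t * K2 t))) := by
    have h1 := tendsto_limUnder_of_hasDerivAt_of_integrableOn_Ioi (fun t ht => dD t (le_of_lt ht)) (hint.const_mul 2)
    have h2 := integral_Ioi_of_hasDerivAt_of_tendsto' (fun t ht => dD t ht) (hint.const_mul 2) h1
    rw [integral_const_mul] at h2
    rw [h2]
    convert h1 using 2
    ring
  have tP : Tendsto (fun t => V1 t * V2 t) atTop (𝓝 0) := by
    refine prod_tendsto (T := max (max T t₀) 1) (C := 4 * C ^ 4) (le_max_right _ _) (by positivity)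
      (fun t ht => (d1 t ?_).mul (d2 t ?_)) fun t ht => ?_
    · exact ((le_max_right _ _).trans (le_max_left _ _)).trans ht
    · exact ((le_max_right _ _).trans (le_max_left _ _)).trans ht
    · have h1 : T ≤ t := ((le_max_left _ _).trans (le_max_left _ _)).trans ht
      have h2 : 1 ≤ t := (le_max_right _ _).trans ht
      have q0 : 0 < √√t := Real.sqrt_pos.2 (Real.sqrt_pos.2 (by linarith))
      have hb1 := b1 t h1
      have hb2 := b2 t h1
      have hc1 := c1 t h1
      have hc2 := c2 t h1
      generalize V1 t = x at *
      generalize V2 t = y at *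
      generalize K1 t = k at *
      generalize K2 t = l at *
      obtain ⟨r, hr⟩ : ∃ r, r = C / √√t ^ 5 := ⟨_, rfl⟩
      have r0 : 0 ≤ r := by rw [hr]; positivity
      rw [← hr] at hc1 hc2
      rw [show 4 * C ^ 4 / √√t ^ 5 = 4 * C ^ 3 * r by rw [hr]; ring]
      have a1 : 2 * (x * y) * ((-(1 / (2 * t)) * y ^ 2 * x + k) * y + x * (-(1 / (2 * t)) * x ^ 2 * y + l)) =
          -(1 / t) * ((x * y) ^ 2 * (x ^ 2 + y ^ 2)) + 2 * (x * y) * (k * y + x * l) := by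
        field_simp; ring
      rw [a1]
      have a2 : |x * y| ^ 3 * 2 ≤ (x * y) ^ 2 * (x ^ 2 + y ^ 2) := by
        rw [← sq_abs (x * y), ← sq_abs x, ← sq_abs y, abs_mul]
        nlinarith [mul_nonneg (sq_nonneg (|x| * |y|)) (sq_nonneg (|x| - |y|))]
      have a3 : 2 * (x * y) * (k * y + x * l) ≤ 4 * C ^ 3 * r := by
        refine (le_abs_self _).trans ?_
        rw [abs_mul, abs_mul, abs_mul, abs_two]
        have z1 : |x| * |y| ≤ C * C := mul_le_mul hb1 hb2 (abs_nonneg _) hC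
        have z2 : |k * y + x * l| ≤ 2 * C * r := by
          refine (abs_add_le _ _).trans ?_
          rw [abs_mul, abs_mul]
          refine (add_le_add (mul_le_mul hc1 hb2 (abs_nonneg _) r0) (mul_le_mul hb1 hc2 (abs_nonneg _) hC)).trans_eq ?_
          ring
        refine (mul_le_mul (mul_le_mul_of_nonneg_left z1 two_pos.le) z2 (abs_nonneg _) (by positivity)).trans_eq ?_
        ring
      have a4 := mul_le_mul_of_nonneg_left a2 (by positivity : 0 ≤ 1 / t)
      have a5 : 2 / t * |x * y| ^ 3 = 1 / t * (|x * y| ^ 3 * 2) := by ring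
      linarith only [a3, a4, a5]
  generalize V1 t₀ ^ 2 - V2 t₀ ^ 2 + 2 * ∫ t in Set.Ioi t₀, (V1 t * K1 t - V2 t * K2 t) = m at tD ⊢
  have tS : Tendsto (fun t => V1 t ^ 2 + V2 t ^ 2) atTop (𝓝 |m|) := by
    have h1 := ((tD.pow 2).add ((tP.pow 2).const_mul 4)).sqrt
    rw [show m ^ 2 + 4 * 0 ^ 2 = m ^ 2 by ring, Real.sqrt_sq_eq_abs] at h1
    refine h1.congr fun t => ?_
    rw [show (V1 t ^ 2 - V2 t ^ 2) ^ 2 + 4 * (V1 t * V2 t) ^ 2 = (V1 t ^ 2 + V2 t ^ 2) ^ 2 by ring, Real.sqrt_sq (by positivity)]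
  obtain ⟨v1, hv1, w1⟩ := tendsto_of_sq e1 (l := (|m| + m) / 2) (((tS.add tD).div_const 2).congr fun t => by ring)
  obtain ⟨v2, hv2, w2⟩ := tendsto_of_sq e2 (l := (|m| - m) / 2) (((tS.sub tD).div_const 2).congr fun t => by ring)
  exact ⟨hint, v1, v2, hv1, hv2, by rw [w1, w2]; ring, tendsto_nhds_unique (hv1.mul hv2) tP⟩

/-! ### Passage from curried functions to the algebra -/

/-- The curried function `(t, x₁, x₂) ↦ w (t + B, x₁, x₂)`. -/
def cur (B : ℝ) (w : SF) : ℝ → ℝ → ℝ → ℝ := fun t x1 x2 => w.1 (t + B, x1, x2)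

lemma pt_cur (B w) : pt (cur B w) = cur B (pd 0 w) := by
  funext t x1 x2
  exact ((slice_hasDerivAt0 w (t + B) (x1, x2)).comp_add_const t B).deriv
lemma p1_cur (B w) : p1 (cur B w) = cur B (pd 1 w) := by
  funext t x1 x2
  exact (slice_hasDerivAt1 w (t + B) x1 x2).deriv
lemma p2_cur (B w) : p2 (cur B w) = cur B (pd 2 w) := by
  funext t x1 x2
  exact (slice_hasDerivAt2 w (t + B) x1 x2).deriv
lemma rot_cur (B w) : rot (cur B w) = cur B (Om w) := by
  funext t x1 x2
  unfold rot
  rw [p1_cur, p2_cur]; rfl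
lemma dAlembert_cur (B w t x1 x2) : dAlembert (cur B w) t x1 x2 = (box w).1 (t + B, x1, x2) := by
  unfold dAlembert
  simp only [pt_cur, p1_cur, p2_cur]; rfl

lemma radius_ray {r a b : ℝ} (hr : 0 < r) (hab : a ^ 2 + b ^ 2 = 1) : (r * a) ^ 2 + (r * b) ^ 2 = r ^ 2 := by
  linear_combination r ^ 2 * hab

/-- The time shift by `B` turns the ray `r = t + σ` into `r = t - q` with `q = B - σ`. -/
lemma Vop_cur {B t σ a b : ℝ} (w : SF) (hr : 0 < t + σ) (hab : a ^ 2 + b ^ 2 = 1) :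
    Vop (cur B w) t σ a b = rV w (B - σ) a b (t + B) := by
  unfold Vop Uop rV
  rw [show t + B - (B - σ) = t + σ by ring]
  obtain ⟨r, hr'⟩ : ∃ r, r = t + σ := ⟨_, rfl⟩
  rw [← hr'] at hr ⊢
  have er := radius_ray hr hab
  have hk : 0 < √r := Real.sqrt_pos.2 hr
  have e0 : radius (r * a) (r * b) = r := by unfold radius; rw [er, Real.sqrt_sq hr.le]
  have erad : ∀ y1 y2, radius y1 y2 ^ ((1 : ℝ) / 2) = √√(y1 ^ 2 + y2 ^ 2) := fun y1 y2 => by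
    unfold radius; rw [← Real.sqrt_eq_rpow]
  have s0 : √√((r * a) ^ 2 + (r * b) ^ 2) = √r := by rw [er, Real.sqrt_sq hr.le]
  have s1 : √((r * a) ^ 2 + (r * b) ^ 2) = r := by rw [er, Real.sqrt_sq hr.le]
  have n0 : (r * a) ^ 2 + (r * b) ^ 2 ≠ 0 := by rw [er]; positivity
  have d1 : p1 (fun s y1 y2 => radius y1 y2 ^ ((1 : ℝ) / 2) * cur B w s y1 y2) t (r * a) (r * b) =
      a / (2 * √r) * w.1 (t + B, r * a, r * b) + √r * (pd 1 w).1 (t + B, r * a, r * b) := by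
    unfold p1
    simp only [erad]
    have h1 : HasDerivAt (fun y : ℝ => √√(y ^ 2 + (r * b) ^ 2)) (a / (2 * √r)) (r * a) := by
      have h2 := ((((hasDerivAt_id (r * a)).pow 2).add_const ((r * b) ^ 2)).sqrt (by simpa using n0)).sqrt (by
        simp only [id, Pi.pow_apply]; rw [s1]; exact hr.ne')
      refine HasDerivAt.congr_deriv (f := fun y : ℝ => √√(y ^ 2 + (r * b) ^ 2)) h2 ?_
      simp only [id, Pi.pow_apply]
      rw [s0, s1]
      field_simp
      norm_num; ring
    refine (h1.mul (slice_hasDerivAt1 w (t + B) (r * a) (r * b))).deriv.trans ?_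
    rw [s0]
  have d2 : p2 (fun s y1 y2 => radius y1 y2 ^ ((1 : ℝ) / 2) * cur B w s y1 y2) t (r * a) (r * b) =
      b / (2 * √r) * w.1 (t + B, r * a, r * b) + √r * (pd 2 w).1 (t + B, r * a, r * b) := by
    unfold p2
    simp only [erad]
    have h1 : HasDerivAt (fun y : ℝ => √√((r * a) ^ 2 + y ^ 2)) (b / (2 * √r)) (r * b) := by
      have h2 := ((((hasDerivAt_id (r * b)).pow 2).const_add ((r * a) ^ 2)).sqrt (by simpa using n0)).sqrt (by
        simp only [id, Pi.pow_apply]; rw [s1]; exact hr.ne')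
      refine HasDerivAt.congr_deriv (f := fun y : ℝ => √√((r * a) ^ 2 + y ^ 2)) h2 ?_
      simp only [id, Pi.pow_apply]
      rw [s0, s1]
      field_simp
      norm_num; ring
    refine (h1.mul (slice_hasDerivAt2 w (t + B) (r * a) (r * b))).deriv.trans ?_
    rw [s0]
  have d0 : pt (fun s y1 y2 => radius y1 y2 ^ ((1 : ℝ) / 2) * cur B w s y1 y2) t (r * a) (r * b) =
      √r * (pd 0 w).1 (t + B, r * a, r * b) := by
    unfold pt
    simp only [erad]
    refine (((slice_hasDerivAt0 w (t + B) (r * a, r * b)).comp_add_const t B).const_mul _).deriv.trans ?_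
    rw [s0]
  rw [d0, d1, d2, e0]
  field_simp
  linear_combination 4 * w.1 (t + B, r * a, r * b) * hab

/-- `K` in terms of the ray quantities; the angular term becomes `rG`. -/
lemma Kfun_cur {B t σ a b : ℝ} (v w : SF) (hr : 0 < t + σ) (hab : a ^ 2 + b ^ 2 = 1) :
    Kfun (cur B v) (cur B w) t σ a b =
      1 / 2 * (√(t + σ) * (pd 0 w).1 (t + B, (t + σ) * a, (t + σ) * b) ^ 2 * (pd 0 v).1 (t + B, (t + σ) * a, (t + σ) * b)
        + 1 / t * rV w (B - σ) a b (t + B) ^ 2 * rV v (B - σ) a b (t + B)) + rG v (B - σ) a b (t + B) := by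
  have hv := Vop_cur (B := B) v hr hab
  have hw := Vop_cur (B := B) w hr hab
  have e0 : radius ((t + σ) * a) ((t + σ) * b) = t + σ := by
    unfold radius; rw [radius_ray hr hab, Real.sqrt_sq hr.le]
  have e3 : (t + σ) ^ ((3 : ℝ) / 2) = √(t + σ) ^ 3 := by
    rw [Real.sqrt_eq_rpow, ← Real.rpow_natCast, ← Real.rpow_mul hr.le]; norm_num
  unfold Kfun Hfun
  unfold Vop at hv hw
  rw [hv, hw, e0, e3, ← Real.sqrt_eq_rpow, rot_cur, rot_cur, pt_cur, pt_cur]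
  unfold rG
  rw [show t + B - (B - σ) = t + σ by ring]
  unfold cur
  ring

/-- A smooth curried function, with time shifted by `B`, as an element of the algebra. -/
def mkW (B : ℝ) {u : ℝ → ℝ → ℝ → ℝ} (hu : Smooth3 u) : SF := ⟨fun p => u (p.1 - B) p.2.1 p.2.2, by
  have h1 : ContDiff ℝ ∞ (fun p : ℝ × ℝ × ℝ => (p.1 - B, p.2.1, p.2.2)) :=
    (contDiff_fst.sub contDiff_const).prodMk ((contDiff_fst.comp contDiff_snd).prodMk (contDiff_snd.comp contDiff_snd))
  exact ContDiff.comp (g := fun p : ℝ × ℝ × ℝ => u p.1 p.2.1 p.2.2) hu h1⟩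

lemma cur_mkW (B : ℝ) {u : ℝ → ℝ → ℝ → ℝ} (hu : Smooth3 u) : cur B (mkW B hu) = u := by
  funext t x1 x2
  show u (t + B - B) x1 x2 = _
  rw [add_sub_cancel_right]

/-- A function of the space variable only, as an element of the algebra. -/
def mkF {f : ℝ → ℝ → ℝ} (hf : SmoothCompact2 f) : SF := ⟨fun p => f p.2.1 p.2.2,
  ContDiff.comp (g := fun p : ℝ × ℝ => f p.1 p.2) hf.1 contDiff_snd⟩

lemma mkF_supp {f : ℝ → ℝ → ℝ} (hf : SmoothCompact2 f) : ∃ R, ∀ x1 x2, R < ‖((x1, x2) : ℝ × ℝ)‖ → f x1 x2 = 0 := by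
  obtain ⟨R, hR⟩ := hf.2.isCompact.isBounded.exists_norm_le
  refine ⟨R, fun x1 x2 h => ?_⟩
  by_contra hne
  have := hR (x1, x2) (subset_tsupport _ hne)
  linarith

lemma mkF_XS {f : ℝ → ℝ → ℝ} (hf : SmoothCompact2 f) : XS (mkF hf) := fun M => by
  obtain ⟨R, hR⟩ := mkF_supp hf
  exact ⟨R, fun τ x _ h => hR x.1 x.2 h⟩

lemma norm_gt_of_sq {R B x1 x2 : ℝ} (hR : 0 ≤ R) (hB : 2 * R ≤ B - 1) (h : (B - 1) ^ 2 < x1 ^ 2 + x2 ^ 2) :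
    R < ‖((x1, x2) : ℝ × ℝ)‖ := by
  by_contra! hc
  have h1 : |x1| ≤ R := (norm_fst_le (x1, x2)).trans hc
  have h2 : |x2| ≤ R := (norm_snd_le (x1, x2)).trans hc
  have h3 := sq_le_sq' (by linarith [abs_nonneg x1]) h1
  have h4 := sq_le_sq' (by linarith [abs_nonneg x2]) h2
  rw [sq_abs] at h3 h4
  nlinarith

/-- Global solutions of the Cauchy problem give data on the slice `t = B`. -/
lemma dat_of_solution {B R ε : ℝ} {f1 f2 g1 g2 : ℝ → ℝ → ℝ}
    (hf1 : SmoothCompact2 f1) (hf2 : SmoothCompact2 f2) (hg1 : SmoothCompact2 g1) (hg2 : SmoothCompact2 g2)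
    (hR : 0 ≤ R) (hB2 : 2 ≤ B) (hB : 2 * R ≤ B - 1) (hε : 0 < ε) (hε1 : ε ≤ 1)
    (sf1 : ∀ x1 x2, R < ‖((x1, x2) : ℝ × ℝ)‖ → f1 x1 x2 = 0) (sf2 : ∀ x1 x2, R < ‖((x1, x2) : ℝ × ℝ)‖ → f2 x1 x2 = 0)
    (sg1 : ∀ x1 x2, R < ‖((x1, x2) : ℝ × ℝ)‖ → g1 x1 x2 = 0) (sg2 : ∀ x1 x2, R < ‖((x1, x2) : ℝ × ℝ)‖ → g2 x1 x2 = 0)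
    {u1 u2 : ℝ → ℝ → ℝ → ℝ} (h : IsSolution ε f1 f2 g1 g2 u1 u2) :
    Dat B ![mkF hf1, mkF hf2] ![mkF hg1, mkF hg2] ε ![mkW B h.smooth1, mkW B h.smooth2] := by
  have c1 := cur_mkW B h.smooth1
  have c2 := cur_mkW B h.smooth2
  obtain ⟨w1, hw1⟩ : ∃ w, w = mkW B h.smooth1 := ⟨_, rfl⟩
  obtain ⟨w2, hw2⟩ : ∃ w, w = mkW B h.smooth2 := ⟨_, rfl⟩
  rw [← hw1] at c1 ⊢
  rw [← hw2] at c2 ⊢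
  have z1 : ∀ x : ℝ × ℝ, w1.1 (B, x) = ε * f1 x.1 x.2 := fun x => by
    have := h.init1 x.1 x.2
    rw [← c1] at this; simpa [cur] using this
  have z2 : ∀ x : ℝ × ℝ, w2.1 (B, x) = ε * f2 x.1 x.2 := fun x => by
    have := h.init2 x.1 x.2
    rw [← c2] at this; simpa [cur] using this
  have y1 : ∀ x : ℝ × ℝ, (pd 0 w1).1 (B, x) = ε * g1 x.1 x.2 := fun x => by
    have := h.initd1 x.1 x.2
    rw [← c1, pt_cur] at this; simpa [cur] using this
  have y2 : ∀ x : ℝ × ℝ, (pd 0 w2).1 (B, x) = ε * g2 x.1 x.2 := fun x => by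
    have := h.initd2 x.1 x.2
    rw [← c2, pt_cur] at this; simpa [cur] using this
  have gen : ∀ v w : SF, (∀ t x1 x2 : ℝ, 0 < t → dAlembert (cur B v) t x1 x2 =
      -(pt (cur B w) t x1 x2) ^ 2 * pt (cur B v) t x1 x2) → ∀ p : ℝ × ℝ × ℝ, B ≤ p.1 →
      (box v).1 p = -((pd 0 w).1 p) ^ 2 * (pd 0 v).1 p := by
    intro v w hp p hpB
    have key : ∀ p ∈ {p : ℝ × ℝ × ℝ | B < p.1}, (box v + (pd 0 w) ^ 2 * pd 0 v).1 p = 0 := fun p hpB => by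
      have hpB : B < p.1 := hpB
      have := hp (p.1 - B) p.2.1 p.2.2 (by linarith)
      rw [dAlembert_cur, pt_cur, pt_cur] at this
      unfold cur at this
      rw [sub_add_cancel] at this
      simp only [SF.add_ev, SF.mul_ev, SF.pow_ev]
      linear_combination this
    have cl : p ∈ closure {p : ℝ × ℝ × ℝ | B < p.1} := by
      have e : {p : ℝ × ℝ × ℝ | B < p.1} = Set.Ioi B ×ˢ Set.univ := by ext; simp
      rw [e, closure_prod_eq, closure_Ioi, closure_univ]
      exact ⟨hpB, trivial⟩
    have := zero_on_closure key p cl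
    simp only [SF.add_ev, SF.mul_ev, SF.pow_ev] at this
    linear_combination this
  refine ⟨⟨hB2, ?_, ?_, ?_⟩, hε, hε1, ?_, ?_⟩
  · intro j
    fin_cases j
    · exact gen w1 w2 (by rw [c1, c2]; exact h.pde1)
    · exact gen w2 w1 (by rw [c1, c2]; exact h.pde2)
  · intro j x1 x2 hx
    have hn := norm_gt_of_sq hR hB hx
    fin_cases j
    · exact (z1 (x1, x2)).trans (by rw [sf1 _ _ hn, mul_zero])
    · exact (z2 (x1, x2)).trans (by rw [sf2 _ _ hn, mul_zero])
  · intro j x1 x2 hx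
    have hn := norm_gt_of_sq hR hB hx
    fin_cases j
    · exact (y1 (x1, x2)).trans (by rw [sg1 _ _ hn, mul_zero])
    · exact (y2 (x1, x2)).trans (by rw [sg2 _ _ hn, mul_zero])
  · intro j x
    fin_cases j
    · exact z1 x
    · exact z2 x
  · intro j x
    fin_cases j
    · exact y1 x
    · exact y2 x

/-! ### Source terms and limits along rays -/

/-- On a ray outside the light cone the profile and its sources vanish. -/
lemma rV_zero {B : ℝ} {w : SF} (h : OV B w) {q a b t : ℝ} (hab : a ^ 2 + b ^ 2 = 1) (hq : q < 1) (ht : B ≤ t) (hr : 0 < t - q) :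
    rV w q a b t = 0 ∧ rG w q a b t = 0 ∧ (pd 0 w).1 (t, (t - q) * a, (t - q) * b) = 0 := by
  have hx : t - 1 < √(((t - q) * a) ^ 2 + ((t - q) * b) ^ 2) := by
    rw [radius_ray hr hab, Real.sqrt_sq hr.le]; linarith
  have hO : ∀ {w : SF}, OV B w → OV B (Om w) := fun h => ((h.pd 2).mul_left _).sub ((h.pd 1).mul_left _)
  have e0 := h.at_B ht hx
  have e1 := (h.pd 0).at_B ht hx
  have e2 := (h.pd 1).at_B ht hx
  have e3 := (h.pd 2).at_B ht hx
  have e4 := (hO (hO h)).at_B ht hx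
  unfold rV rG
  rw [e0, e1, e2, e3, e4]
  simp

/-- The source term in the profile equation is integrable in time: the velocities differ from the profiles by the
rapidly decaying companions. -/
lemma source_bound {c D x r y V1 V2 d1 d2 p1 p2 s g M : ℝ} (hx : 1 ≤ x) (hM : 0 ≤ M) (hc : 1 ≤ c) (hD : D ≤ c)
    (hr : x ^ 4 ≤ 2 * r) (hs : s ^ 2 = r) (hs0 : 0 < s) (hy : x ^ 4 ≤ 2 * y)
    (hM1 : |r - y| ≤ M)
    (h1 : d1 - V1 = s * p1) (h2 : d2 - V2 = s * p2) (hd1 : |d1| ≤ D / x) (hd2 : |d2| ≤ D / x)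
    (hV1 : |V1| ≤ c) (hV2 : |V2| ≤ c) (hg : |g| ≤ D / x ^ 5) :
    |1 / 2 * (s * p2 ^ 2 * p1 + 1 / y * V2 ^ 2 * V1) + g| ≤ (8 * c ^ 3 + 2 * M * c ^ 3) / x ^ 5 := by
  have hr0 : 0 < r := by rw [← hs]; positivity
  have x0 : 0 < x := by linarith
  have y0 : 0 < y := by have : 0 < x ^ 4 := by positivity
                        linarith
  have e : 1 / 2 * (s * p2 ^ 2 * p1 + 1 / y * V2 ^ 2 * V1) + g =
      1 / (2 * r) * (d2 ^ 2 * d1 - d2 ^ 2 * V1 - 2 * d2 * V2 * d1 + 2 * d2 * V2 * V1 + V2 ^ 2 * d1) +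
        ((r - y) / (2 * r * y) * (V2 ^ 2 * V1)) + g := by
    have e1 : s * p2 ^ 2 * p1 = 1 / r * ((d2 - V2) ^ 2 * (d1 - V1)) := by
      rw [h1, h2, ← hs]; field_simp
    rw [e1]; field_simp; ring
  rw [e]
  have c0 : 0 ≤ c := by linarith
  have hDx0 : 0 ≤ D / x := (abs_nonneg _).trans hd1
  have hdc : D / x ≤ c := (div_le_iff₀ x0).2 (by nlinarith)
  have c1 : |d2| ≤ c := hd2.trans hdc
  have b1 : |d2 ^ 2 * d1 - d2 ^ 2 * V1 - 2 * d2 * V2 * d1 + 2 * d2 * V2 * V1 + V2 ^ 2 * d1| ≤ 7 * c ^ 2 * (D / x) := by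
    have t1 : |d2 ^ 2 * d1| ≤ c ^ 2 * (D / x) := by
      rw [abs_mul, abs_pow]
      exact mul_le_mul (pow_le_pow_left₀ (abs_nonneg _) c1 2) hd1 (abs_nonneg _) (by positivity)
    have t2 : |d2 ^ 2 * V1| ≤ c ^ 2 * (D / x) := by
      rw [show d2 ^ 2 * V1 = d2 * V1 * d2 by ring, abs_mul, abs_mul, sq]
      exact mul_le_mul (mul_le_mul c1 hV1 (abs_nonneg _) c0) hd2 (abs_nonneg _) (by positivity)
    have t3 : |d2 * V2 * d1| ≤ c ^ 2 * (D / x) := by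
      rw [abs_mul, abs_mul, sq]
      exact mul_le_mul (mul_le_mul c1 hV2 (abs_nonneg _) c0) hd1 (abs_nonneg _) (by positivity)
    have t4 : |d2 * V2 * V1| ≤ c ^ 2 * (D / x) := by
      rw [show d2 * V2 * V1 = V2 * V1 * d2 by ring, abs_mul, abs_mul, sq]
      exact mul_le_mul (mul_le_mul hV2 hV1 (abs_nonneg _) c0) hd2 (abs_nonneg _) (by positivity)
    have t5 : |V2 ^ 2 * d1| ≤ c ^ 2 * (D / x) := by
      rw [abs_mul, abs_pow]
      exact mul_le_mul (pow_le_pow_left₀ (abs_nonneg _) hV2 2) hd1 (abs_nonneg _) (by positivity)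
    rw [abs_le] at *
    constructor <;> linarith only [t1.1, t2.1, t3.1, t4.1, t5.1, t1.2, t2.2, t3.2, t4.2, t5.2]
  have i1 : 1 / (2 * r) ≤ 1 / x ^ 4 := one_div_le_one_div_of_le (by positivity) hr
  have b2 : |1 / (2 * r) * (d2 ^ 2 * d1 - d2 ^ 2 * V1 - 2 * d2 * V2 * d1 + 2 * d2 * V2 * V1 + V2 ^ 2 * d1)| ≤ 7 * c ^ 3 / x ^ 5 := by
    rw [abs_mul, abs_of_pos (by positivity : 0 < 1 / (2 * r))]
    refine (mul_le_mul i1 b1 (abs_nonneg _) (by positivity)).trans ?_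
    rw [show 1 / x ^ 4 * (7 * c ^ 2 * (D / x)) = 7 * c ^ 2 * D / x ^ 5 by field_simp]
    refine div_le_div_of_nonneg_right ?_ (by positivity)
    have := mul_le_mul_of_nonneg_left hD (by positivity : 0 ≤ 7 * c ^ 2)
    linarith only [this]
  have b3 : |(r - y) / (2 * r * y) * (V2 ^ 2 * V1)| ≤ 2 * M * c ^ 3 / x ^ 5 := by
    rw [abs_mul, abs_div, abs_of_pos (by positivity : 0 < 2 * r * y), abs_mul, abs_pow]
    have z1 : |V2| ^ 2 * |V1| ≤ c ^ 2 * c := mul_le_mul (pow_le_pow_left₀ (abs_nonneg _) hV2 2) hV1 (abs_nonneg _) (by positivity)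
    have z2 : |r - y| / (2 * r * y) ≤ 2 * M / x ^ 5 := by
      have z3 := mul_le_mul hr hy (by positivity) (by positivity)
      have z4 : x ^ 5 ≤ x ^ 8 := pow_le_pow_right₀ hx (by norm_num)
      have z5 : x ^ 4 * x ^ 4 = x ^ 8 := by ring
      rw [div_le_div_iff₀ (by positivity) (by positivity)]
      have z6 := mul_le_mul hM1 z4 (by positivity) hM
      have z7 := mul_le_mul_of_nonneg_left z3 hM
      rw [z5] at z7
      linarith only [z6, z7]
    refine (mul_le_mul z2 z1 (by positivity) (by positivity)).trans_eq ?_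
    ring
  have b4 : |g| ≤ c ^ 3 / x ^ 5 := by
    refine hg.trans (div_le_div_of_nonneg_right (hD.trans ?_) (by positivity))
    nlinarith [mul_nonneg c0 (by linarith : 0 ≤ c - 1), mul_nonneg c0 (mul_nonneg c0 (by linarith : 0 ≤ c - 1))]
  refine (abs_add_le _ _).trans ((add_le_add ((abs_add_le _ _).trans (add_le_add b2 b3)) b4).trans_eq ?_)
  ring

/-- Along a ray meeting the interior of the light cone the profiles stay bounded and the source terms are `O(t^{-5/4})`. -/
lemma ray_final {B k ε : ℝ} {W : Fin 2 → SF} (hB : 2 ≤ B) (hk : 0 ≤ k) (hε : 0 < ε)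
    (hreg : ∀ lam, 0 ≤ lam → Reg B lam (fun t x1 x2 s => Ctl W (k ^ 2 * ε ^ 2 * √s) (t, x1, x2)) ∧
      Reg B lam (fun t x1 x2 _ => ∀ j, t * (pd 0 (W j)).1 (t, x1, x2) ^ 2 ≤ 1))
    {q a b : ℝ} (hab : a ^ 2 + b ^ 2 = 1) (hq : 1 ≤ q) :
    ∃ C T, 0 ≤ C ∧ ∀ t, T ≤ t → ∀ j, |rV (W j) q a b (t + B)| ≤ C ∧
      |1 / 2 * (√(t + B - q) * (pd 0 (W (j + 1))).1 (t + B, (t + B - q) * a, (t + B - q) * b) ^ 2 *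
          (pd 0 (W j)).1 (t + B, (t + B - q) * a, (t + B - q) * b)
        + 1 / t * rV (W (j + 1)) q a b (t + B) ^ 2 * rV (W j) q a b (t + B)) + rG (W j) q a b (t + B)| ≤ C / √√t ^ 5 := by
  obtain ⟨c, hc⟩ : ∃ c, c = 9 * k * ε + 1 := ⟨_, rfl⟩
  have hkε : 0 ≤ k * ε := by positivity
  have hc1 : 1 ≤ c := by rw [hc]; linarith
  obtain ⟨C, hC⟩ : ∃ C, C = 8 * c ^ 3 + 2 * |B - q| * c ^ 3 := ⟨_, rfl⟩
  have hC0 : 0 ≤ C := by rw [hC]; positivity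
  have hcC : c ≤ C := by
    have e1 : c ≤ c ^ 3 := le_self_pow₀ hc1 (by norm_num)
    have e2 : 0 ≤ 2 * |B - q| * c ^ 3 := by positivity
    have e3 : 0 ≤ c ^ 3 := by positivity
    rw [hC]; linarith only [e1, e2, e3]
  refine ⟨C, 2 * q + B ^ 2 + B, hC0, fun t' ht' j => ?_⟩
  obtain ⟨t, ht⟩ : ∃ t, t = t' + B := ⟨_, rfl⟩
  have et' : t' = t - B := by linarith
  have hB2 : 2 * B ≤ B ^ 2 := by nlinarith
  have hqt : 2 * q ≤ t := by linarith
  have hBt : 2 * B ≤ t := by linarith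
  have ht1 : 1 ≤ t := by linarith
  have ht0 : 0 < t := by linarith
  have ht'0 : 0 < t' := by linarith
  rw [← ht]
  -- the hyperboloid through the point
  obtain ⟨m, hm⟩ : ∃ m, m = q * (2 * t - q) := ⟨_, rfl⟩
  have hm1 : B ^ 2 ≤ m := by
    rw [hm]
    have : 2 * t - q ≤ q * (2 * t - q) := le_mul_of_one_le_left (by linarith) hq
    linarith
  have hm0 : 0 < m := lt_of_lt_of_le (by positivity) hm1
  have hmt : m ≤ t ^ 2 := by rw [hm]; linarith only [sq_nonneg (t - q), show t ^ 2 - q * (2 * t - q) = (t - q) ^ 2 by ring]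
  have hs0 : 0 < √m := Real.sqrt_pos.2 hm0
  have hst : √m ≤ t := Real.sqrt_le_iff.2 ⟨ht0.le, hmt⟩
  have hsB : B ≤ √m := Real.le_sqrt_of_sq_le hm1
  have hsm : √m ^ 2 = t ^ 2 - ((t - q) * a) ^ 2 - ((t - q) * b) ^ 2 := by
    rw [Real.sq_sqrt hm0.le, hm]; linear_combination (t - q) ^ 2 * hab
  obtain ⟨r1, r2⟩ := hreg √m hs0.le
  have c1 := r1 t _ _ √m ht0 hs0 hsm hsB (by linarith [sq_nonneg B])
  have c2 := r2 t _ _ √m ht0 hs0 hsm hsB (by linarith [sq_nonneg B])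
  have c1' : Ctl W (k ^ 2 * ε ^ 2 * √t) (t, (t - q) * a, (t - q) * b) :=
    Ctl.mono c1 (mul_le_mul_of_nonneg_left (Real.sqrt_le_sqrt hst) (by positivity))
  have sm := ray_small (A := 1) hab hq hqt hk hε (by norm_num) c1' (fun j => by simpa using c2 j)
  -- the profiles are bounded
  obtain ⟨x, hx⟩ : ∃ x, x = √√t := ⟨_, rfl⟩
  have hx1 : 1 ≤ x := by
    rw [hx]; exact Real.one_le_sqrt.2 (Real.one_le_sqrt.2 ht1)
  have x0 : 0 < x := by linarith
  have hx4 : x ^ 4 = t := by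
    rw [hx, show √√t ^ 4 = (√√t ^ 2) ^ 2 by ring, Real.sq_sqrt (Real.sqrt_nonneg _), Real.sq_sqrt ht0.le]
  have hr0 : 0 < t - q := by linarith
  rw [← hx] at sm
  have bd : ∀ i, |rD (W i) q a b t| ≤ 9 * k * ε / x := fun i =>
    (sm i).1.trans (div_le_div_of_nonneg_right (by linarith) x0.le)
  have hV : ∀ i, |rV (W i) q a b t| ≤ c := fun i => by
    have e1 := rD_sub_rV (W i) q a b t
    have e2 := c2 i
    have e3 : |√(t - q) * (pd 0 (W i)).1 (t, (t - q) * a, (t - q) * b)| ≤ 1 := by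
      rw [← Real.sqrt_sq_eq_abs]
      refine Real.sqrt_le_iff.2 ⟨zero_le_one, ?_⟩
      rw [one_pow, mul_pow, Real.sq_sqrt hr0.le]
      refine le_trans (mul_le_mul_of_nonneg_right ?_ (sq_nonneg _)) e2
      linarith
    have e4 := (bd i).trans (div_le_self (by positivity) hx1)
    have e5 : rV (W i) q a b t = rD (W i) q a b t - √(t - q) * (pd 0 (W i)).1 (t, (t - q) * a, (t - q) * b) := by
      linarith only [e1]
    rw [e5, hc]
    exact (abs_sub _ _).trans (add_le_add e4 e3)
  refine ⟨(hV j).trans hcC, ?_⟩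
  have fin := source_bound (M := |B - q|) (y := t') hx1 (abs_nonneg _) hc1 (by rw [hc]; linarith) (by rw [hx4]; linarith)
    (Real.sq_sqrt hr0.le) (Real.sqrt_pos.2 hr0) (by rw [hx4]; linarith) (by rw [et']; exact le_of_eq (by congr 1; ring))
    (rD_sub_rV (W j) q a b t) (rD_sub_rV (W (j + 1)) q a b t) (bd j) (bd (j + 1)) (hV j) (hV (j + 1)) (sm j).2.1
  refine fin.trans ?_
  rw [← hC, hx]
  refine div_le_div_of_nonneg_left hC0 (by have : 0 < √√t' := Real.sqrt_pos.2 (Real.sqrt_pos.2 ht'0); positivity) ?_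
  exact pow_le_pow_left₀ (Real.sqrt_nonneg _) (Real.sqrt_le_sqrt (Real.sqrt_le_sqrt (by linarith))) 5

lemma trichotomy_arith {v w m : ℝ} (h : v ^ 2 - w ^ 2 = m) (h0 : v * w = 0) :
    (0 < m → v ≠ 0 ∧ w = 0) ∧ (m < 0 → v = 0 ∧ w ≠ 0) ∧ (m = 0 → v = 0 ∧ w = 0) := by
  rcases mul_eq_zero.1 h0 with h1 | h1
  · subst h1
    refine ⟨fun hm => ?_, fun hm => ⟨rfl, fun h2 => ?_⟩, fun hm => ⟨rfl, ?_⟩⟩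
    · nlinarith [sq_nonneg w]
    · subst h2; norm_num at h; linarith
    · exact pow_eq_zero_iff two_ne_zero |>.1 (by linarith : w ^ 2 = 0)
  · subst h1
    refine ⟨fun hm => ⟨fun h2 => ?_, rfl⟩, fun hm => ?_, fun hm => ⟨?_, rfl⟩⟩
    · subst h2; norm_num at h; linarith
    · nlinarith [sq_nonneg v]
    · exact pow_eq_zero_iff two_ne_zero |>.1 (by linarith : v ^ 2 = 0)

/-- the function `m(σ,ω)` detects which of `V₁⁺, V₂⁺` vanishes. -/
theorem m_trichotomy (f1 f2 g1 g2 : ℝ → ℝ → ℝ)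
    (hf1 : SmoothCompact2 f1) (hf2 : SmoothCompact2 f2)
    (hg1 : SmoothCompact2 g1) (hg2 : SmoothCompact2 g2) :
    ∃ ε₀ : ℝ, 0 < ε₀ ∧ ∀ ε : ℝ, 0 < ε → ε < ε₀ →
      ∀ u1 u2 : ℝ → ℝ → ℝ → ℝ, IsSolution ε f1 f2 g1 g2 u1 u2 →
        ∀ σ ω1 ω2 : ℝ, ω1 ^ 2 + ω2 ^ 2 = 1 →
          IntegrableOn (fun τ => rhoFun u1 u2 τ σ ω1 ω2)
            (Set.Ioi (max 2 (-2 * σ))) volume ∧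
          ∃ V1p V2p : ℝ,
            Tendsto (fun t => Vop u1 t σ ω1 ω2) atTop (nhds V1p) ∧
            Tendsto (fun t => Vop u2 t σ ω1 ω2) atTop (nhds V2p) ∧
            (0 < (Vop u1 (max 2 (-2 * σ)) σ ω1 ω2) ^ 2
                - (Vop u2 (max 2 (-2 * σ)) σ ω1 ω2) ^ 2
                + 2 * ∫ τ in Set.Ioi (max 2 (-2 * σ)), rhoFun u1 u2 τ σ ω1 ω2 →
              V1p ≠ 0 ∧ V2p = 0) ∧
            ((Vop u1 (max 2 (-2 * σ)) σ ω1 ω2) ^ 2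
                - (Vop u2 (max 2 (-2 * σ)) σ ω1 ω2) ^ 2
                + 2 * (∫ τ in Set.Ioi (max 2 (-2 * σ)), rhoFun u1 u2 τ σ ω1 ω2) < 0 →
              V1p = 0 ∧ V2p ≠ 0) ∧
            ((Vop u1 (max 2 (-2 * σ)) σ ω1 ω2) ^ 2
                - (Vop u2 (max 2 (-2 * σ)) σ ω1 ω2) ^ 2
                + 2 * (∫ τ in Set.Ioi (max 2 (-2 * σ)), rhoFun u1 u2 τ σ ω1 ω2) = 0 →
              V1p = 0 ∧ V2p = 0) := by
  obtain ⟨R1, hR1⟩ := mkF_supp hf1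
  obtain ⟨R2, hR2⟩ := mkF_supp hf2
  obtain ⟨R3, hR3⟩ := mkF_supp hg1
  obtain ⟨R4, hR4⟩ := mkF_supp hg2
  obtain ⟨R, hR⟩ : ∃ R, R = |R1| + |R2| + |R3| + |R4| := ⟨_, rfl⟩
  have n1 := abs_nonneg R1
  have n2 := abs_nonneg R2
  have n3 := abs_nonneg R3
  have n4 := abs_nonneg R4
  have hR0 : 0 ≤ R := by rw [hR]; positivity
  obtain ⟨B, hB⟩ : ∃ B, B = 2 * R + 2 := ⟨_, rfl⟩
  have hB2 : 2 ≤ B := by linarith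
  obtain ⟨k, ε₁, hk, hε₁, glob⟩ := global_decay hB2 (f := ![mkF hf1, mkF hf2]) (g := ![mkF hg1, mkF hg2])
    (by intro j; fin_cases j
        · exact mkF_XS hf1
        · exact mkF_XS hf2)
    (by intro j; fin_cases j
        · exact mkF_XS hg1
        · exact mkF_XS hg2)
  refine ⟨min ε₁ 1, by positivity, fun ε hε hεε u1 u2 hu σ ω1 ω2 hω => ?_⟩
  have D := dat_of_solution (B := B) hf1 hf2 hg1 hg2 hR0 hB2 (by linarith) hε (hεε.le.trans (min_le_right _ _))
    (fun x1 x2 h => hR1 x1 x2 (by linarith [le_abs_self R1])) (fun x1 x2 h => hR2 x1 x2 (by linarith [le_abs_self R2]))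
    (fun x1 x2 h => hR3 x1 x2 (by linarith [le_abs_self R3])) (fun x1 x2 h => hR4 x1 x2 (by linarith [le_abs_self R4])) hu
  have hreg := glob ε _ D (hεε.le.trans (min_le_left _ _))
  have S := D.sol
  have cu1 := cur_mkW B hu.smooth1
  have cu2 := cur_mkW B hu.smooth2
  obtain ⟨W, hW⟩ : ∃ W : Fin 2 → SF, W = ![mkW B hu.smooth1, mkW B hu.smooth2] := ⟨_, rfl⟩
  have cW1 : cur B (W 0) = u1 := by rw [hW]; exact cu1
  have cW2 : cur B (W 1) = u2 := by rw [hW]; exact cu2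
  rw [← hW] at S hreg
  clear glob cu1 cu2
  obtain ⟨t₀, ht₀⟩ : ∃ t, t = max 2 (-2 * σ) := ⟨_, rfl⟩
  rw [← ht₀]
  have t2 : 2 ≤ t₀ := ht₀ ▸ le_max_left _ _
  have tσ : -2 * σ ≤ t₀ := ht₀ ▸ le_max_right _ _
  have hr : ∀ t, t₀ ≤ t → 0 < t + σ := fun t ht => by linarith
  -- the profiles and sources, in the shifted time
  have V1 : ∀ t, t₀ ≤ t → Vop u1 t σ ω1 ω2 = rV (W 0) (B - σ) ω1 ω2 (t + B) := fun t ht => by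
    rw [← cW1]; exact Vop_cur (W 0) (hr t ht) hω
  have V2 : ∀ t, t₀ ≤ t → Vop u2 t σ ω1 ω2 = rV (W 1) (B - σ) ω1 ω2 (t + B) := fun t ht => by
    rw [← cW2]; exact Vop_cur (W 1) (hr t ht) hω
  obtain ⟨K, hK⟩ : ∃ K : Fin 2 → ℝ → ℝ, K = fun j t =>
      1 / 2 * (√(t + B - (B - σ)) * (pd 0 (W (j + 1))).1 (t + B, (t + B - (B - σ)) * ω1, (t + B - (B - σ)) * ω2) ^ 2 *
          (pd 0 (W j)).1 (t + B, (t + B - (B - σ)) * ω1, (t + B - (B - σ)) * ω2)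
        + 1 / t * rV (W (j + 1)) (B - σ) ω1 ω2 (t + B) ^ 2 * rV (W j) (B - σ) ω1 ω2 (t + B)) +
        rG (W j) (B - σ) ω1 ω2 (t + B) := ⟨_, rfl⟩
  have K1 : ∀ t, t₀ ≤ t → Kfun u1 u2 t σ ω1 ω2 = K 0 t := fun t ht => by
    rw [← cW1, ← cW2, Kfun_cur _ _ (hr t ht) hω, hK]
    simp only [show t + B - (B - σ) = t + σ by ring]
    rfl
  have K2 : ∀ t, t₀ ≤ t → Kfun u2 u1 t σ ω1 ω2 = K 1 t := fun t ht => by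
    rw [← cW1, ← cW2, Kfun_cur _ _ (hr t ht) hω, hK]
    simp only [show t + B - (B - σ) = t + σ by ring]
    rfl
  have dV : ∀ j t, t₀ ≤ t → HasDerivAt (fun t => rV (W j) (B - σ) ω1 ω2 (t + B))
      (-(1 / (2 * t)) * rV (W (j + 1)) (B - σ) ω1 ω2 (t + B) ^ 2 * rV (W j) (B - σ) ω1 ω2 (t + B) + K j t) t := fun j t ht => by
    have h1 := (rV_deriv S j (q := B - σ) (t := t + B) hω (by linarith) (by linarith [hr t ht])).comp_add_const t B
    refine h1.congr_deriv ?_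
    rw [hK]
    have : 0 < t := by linarith
    field_simp
    ring
  have cK : ∀ j, ContinuousOn (K j) (Set.Ici t₀) := fun j => by
    have cv : ∀ i, ContinuousOn (fun t => rV (W i) (B - σ) ω1 ω2 (t + B)) (Set.Ici t₀) :=
      fun i t ht => (dV i t ht).continuousAt.continuousWithinAt
    have cray : ∀ f : SF, Continuous (fun t : ℝ => f.1 (t + B, (t + B - (B - σ)) * ω1, (t + B - (B - σ)) * ω2)) :=
      fun f => f.cont.comp (by fun_prop)
    have cs : Continuous (fun t : ℝ => √(t + B - (B - σ))) := by fun_prop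
    have ci : ContinuousOn (fun t : ℝ => 1 / t) (Set.Ici t₀) :=
      continuousOn_const.div continuousOn_id fun t ht => by
        have : t₀ ≤ t := ht
        exact (by linarith : (0 : ℝ) < t).ne'
    have cG : ContinuousOn (fun t => rG (W j) (B - σ) ω1 ω2 (t + B)) (Set.Ici t₀) := by
      unfold rG
      refine ContinuousOn.div (((cray _).const_mul 4).add (cray _)).neg.continuousOn ((cs.pow 3).const_mul 8).continuousOn
        fun t ht => ?_
      have : 0 < √(t + B - (B - σ)) := Real.sqrt_pos.2 (by have := hr t ht; linarith)
      positivity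
    rw [hK]
    exact ((((((cs.mul ((cray _).pow 2)).mul (cray _))).continuousOn.add ((ci.mul ((cv _).pow 2)).mul (cv _)))).const_mul _).add cG
  obtain ⟨C, T, hC, bd⟩ : ∃ C T, 0 ≤ C ∧ ∀ t, T ≤ t → ∀ j, |rV (W j) (B - σ) ω1 ω2 (t + B)| ≤ C ∧ |K j t| ≤ C / √√t ^ 5 := by
    rcases lt_or_ge (B - σ) 1 with hq | hq
    · -- outside the light cone everything vanishes
      refine ⟨0, t₀, le_rfl, fun t ht j => ?_⟩
      have z := fun i => rV_zero (S.ov i) (q := B - σ) (t := t + B) hω hq (by linarith) (by linarith [hr t ht])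
      rw [hK]
      simp only [(z _).1, (z _).2.1, (z _).2.2]
      norm_num
    · rw [hK]
      exact ray_final hB2 hk hε hreg hω hq
  obtain ⟨i1, v1, v2, l1, l2, e1, e2⟩ := ode_trichotomy (V1 := fun t => rV (W 0) (B - σ) ω1 ω2 (t + B))
    (V2 := fun t => rV (W 1) (B - σ) ω1 ω2 (t + B)) (by linarith) hC (dV 0) (dV 1) (cK 0) (cK 1)
    (fun t ht => (bd t ht 0).1) (fun t ht => (bd t ht 1).1) (fun t ht => (bd t ht 0).2) (fun t ht => (bd t ht 1).2)
  have eρ : Set.EqOn (fun t => rV (W 0) (B - σ) ω1 ω2 (t + B) * K 0 t - rV (W 1) (B - σ) ω1 ω2 (t + B) * K 1 t)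
      (fun t => rhoFun u1 u2 t σ ω1 ω2) (Set.Ioi t₀) := fun t ht => by
    have ht : t₀ ≤ t := le_of_lt ht
    simp only [rhoFun]
    rw [V1 t ht, V2 t ht, K1 t ht, K2 t ht]
  rw [setIntegral_congr_fun measurableSet_Ioi eρ] at e1
  refine ⟨i1.congr_fun eρ measurableSet_Ioi, v1, v2, l1.congr' ?_, l2.congr' ?_, ?_⟩
  · filter_upwards [eventually_ge_atTop t₀] with t ht using (V1 t ht).symm
  · filter_upwards [eventually_ge_atTop t₀] with t ht using (V2 t ht).symm
  · rw [V1 t₀ le_rfl, V2 t₀ le_rfl]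
    exact trichotomy_arith e1 e2

end
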